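/- arXiv:math/0403181 — 3 statements merged into one kernel-verified Lean document; each statement's English description precedes it below -/
import Mathlib

section
/- On C = ℤ/27ℤ × ℤ/9ℤ × ℤ/3ℤ define the operations a∇₁b = (26a₀+3a₁+2b₀+24b₁+18a₀a₂b₁+9a₀b₁b₂+9a₁a₂b₀+18a₁b₀b₂, 8a₁+3a₂+2b₁+6b₂, 2a₂+2b₂) and a∇₂b = (26a₀+3a₁+2b₀+24b₁+9a₀a₂b₁+18a₀b₁b₂+18a₁a₂b₀+9a₁b₀b₂, 8a₁+3a₂+2b₁+6b₂, 2a₂+2b₂). Then C(∇₁) and C(∇₂) are (up to isomorphism) the only non-medial hamiltonian distributive quasigroups of order 729: every non-medial hamiltonian distributive quasigroup with exactly 729 elements is isomorphic to C(∇₁) or to C(∇₂); moreover C(∇₁) and C(∇₂) are not isomorphic, but they are anti-isomorphic (there is a bijection φ : C → C with φ(a∇₁b) = φ(b)∇₂φ(a) for all a, b). -/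
/-- A (binary operation on a nonempty set is a) quasigroup: all left and right
translations are bijections. -/
def IsQuasigroup {Q : Type*} (mul : Q → Q → Q) : Prop :=
  Nonempty Q ∧ ∀ a : Q,
    Function.Bijective (fun x => mul a x) ∧ Function.Bijective (fun x => mul x a)

/-- A subquasigroup: a nonempty subset closed under multiplication and under both
divisions (the unique solutions of `a·x = b` and `y·a = b` for `a, b ∈ P` lie in `P`). -/
def IsSubquasigroup {Q : Type*} (mul : Q → Q → Q) (P : Set Q) : Prop :=
  P.Nonempty ∧ ∀ a ∈ P, ∀ b ∈ P,
    mul a b ∈ P ∧ (∀ x, mul a x = b → x ∈ P) ∧ (∀ y, mul y a = b → y ∈ P)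

/-- A normal congruence: an equivalence relation satisfying (C1), (C2), (C3). -/
def IsNormalCongruence {Q : Type*} (mul : Q → Q → Q) (r : Q → Q → Prop) : Prop :=
  Equivalence r ∧
  (∀ a b c d, r a b → r c d → r (mul a c) (mul b d)) ∧
  (∀ a b c d, r a b → r (mul a c) (mul b d) → r c d) ∧
  (∀ a b c d, r c d → r (mul a c) (mul b d) → r a b)

/-- A subquasigroup is normal if it is an equivalence class of some normal congruence. -/
def IsNormalSubquasigroup {Q : Type*} (mul : Q → Q → Q) (P : Set Q) : Prop :=
  IsSubquasigroup mul P ∧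
  ∃ r : Q → Q → Prop, IsNormalCongruence mul r ∧ ∃ a : Q, P = {x | r a x}

/-- A quasigroup is hamiltonian if every subquasigroup is normal. -/
def IsHamiltonian {Q : Type*} (mul : Q → Q → Q) : Prop :=
  ∀ P : Set Q, IsSubquasigroup mul P → IsNormalSubquasigroup mul P

/-- The underlying set `C = ℤ/27ℤ × ℤ/9ℤ × ℤ/3ℤ`. -/
abbrev C' : Type := ZMod 27 × ZMod 9 × ZMod 3

/-- The operation `∇₁` on `C`, mixed terms computed by lifting to integers (via `ZMod.val`)
and reducing in the appropriate component. -/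
def nabla₁ (a b : C') : C' :=
  (26 * a.1 + 3 * (a.2.1.val : ZMod 27) + 2 * b.1 + 24 * (b.2.1.val : ZMod 27)
      + 18 * a.1 * (a.2.2.val : ZMod 27) * (b.2.1.val : ZMod 27)
      + 9 * a.1 * (b.2.1.val : ZMod 27) * (b.2.2.val : ZMod 27)
      + 9 * (a.2.1.val : ZMod 27) * (a.2.2.val : ZMod 27) * b.1
      + 18 * (a.2.1.val : ZMod 27) * b.1 * (b.2.2.val : ZMod 27),
   8 * a.2.1 + 3 * (a.2.2.val : ZMod 9) + 2 * b.2.1 + 6 * (b.2.2.val : ZMod 9),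
   2 * a.2.2 + 2 * b.2.2)

/-- The operation `∇₂` on `C`. -/
def nabla₂ (a b : C') : C' :=
  (26 * a.1 + 3 * (a.2.1.val : ZMod 27) + 2 * b.1 + 24 * (b.2.1.val : ZMod 27)
      + 9 * a.1 * (a.2.2.val : ZMod 27) * (b.2.1.val : ZMod 27)
      + 18 * a.1 * (b.2.1.val : ZMod 27) * (b.2.2.val : ZMod 27)
      + 18 * (a.2.1.val : ZMod 27) * (a.2.2.val : ZMod 27) * b.1
      + 9 * (a.2.1.val : ZMod 27) * b.1 * (b.2.2.val : ZMod 27),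
   8 * a.2.1 + 3 * (a.2.2.val : ZMod 9) + 2 * b.2.1 + 6 * (b.2.2.val : ZMod 9),
   2 * a.2.2 + 2 * b.2.2)

universe u

namespace HQ

structure DQ {Q : Type*} (mul : Q → Q → Q) : Prop where
  bl : ∀ a : Q, Function.Bijective (fun x => mul a x)
  br : ∀ a : Q, Function.Bijective (fun x => mul x a)
  ld : ∀ x a b : Q, mul x (mul a b) = mul (mul x a) (mul x b)
  rd : ∀ x a b : Q, mul (mul a b) x = mul (mul a x) (mul b x)

section
variable {Q : Type*} {mul : Q → Q → Q}

noncomputable def Lp (h : DQ mul) (a : Q) : Equiv.Perm Q := Equiv.ofBijective _ (h.bl a)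
noncomputable def Rp (h : DQ mul) (a : Q) : Equiv.Perm Q := Equiv.ofBijective _ (h.br a)

theorem Lp_app (h : DQ mul) (a x : Q) : Lp h a x = mul a x := rfl
theorem Rp_app (h : DQ mul) (a x : Q) : Rp h a x = mul x a := rfl

theorem idem (h : DQ mul) (x : Q) : mul x x = x := by
  have := h.ld x x x
  exact ((h.br (mul x x)).1 this).symm

/-- automorphism group -/
def AutG (mul : Q → Q → Q) : Subgroup (Equiv.Perm Q) where
  carrier := {s | ∀ x y, s (mul x y) = mul (s x) (s y)}
  mul_mem' := by
    intro a b ha hb x y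
    simp only [Equiv.Perm.mul_apply]
    rw [hb, ha]
  one_mem' := by intro x y; rfl
  inv_mem' := by
    intro a ha x y
    apply a.injective
    rw [ha]
    simp

theorem Lp_aut (h : DQ mul) (a : Q) : Lp h a ∈ AutG mul := fun x y => h.ld a x y
theorem Rp_aut (h : DQ mul) (a : Q) : Rp h a ∈ AutG mul := fun x y => h.rd a x y

variable (h : DQ mul) (e : Q)

noncomputable def ad (x y : Q) : Q := mul ((Rp h e)⁻¹ x) ((Lp h e)⁻¹ y)
noncomputable def lam (x : Q) : Equiv.Perm Q := Lp h ((Rp h e)⁻¹ x) * (Lp h e)⁻¹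
noncomputable def rho (x : Q) : Equiv.Perm Q := Rp h ((Lp h e)⁻¹ x) * (Rp h e)⁻¹

theorem lam_app (x y : Q) : lam h e x y = ad h e x y := rfl
theorem rho_app (x y : Q) : rho h e x y = ad h e y x := rfl

theorem f_e : Rp h e e = e := idem h e
theorem g_e : Lp h e e = e := idem h e
theorem fi_e : (Rp h e)⁻¹ e = e := by rw [Equiv.Perm.inv_eq_iff_eq]; exact (f_e h e).symm
theorem gi_e : (Lp h e)⁻¹ e = e := by rw [Equiv.Perm.inv_eq_iff_eq]; exact (g_e h e).symm

theorem ad_zero (x : Q) : ad h e x e = x := by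
  unfold ad
  rw [gi_e]
  exact (Rp h e).apply_symm_apply x
theorem zero_ad (x : Q) : ad h e e x = x := by
  unfold ad
  rw [fi_e]
  exact (Lp h e).apply_symm_apply x
theorem lam_e : lam h e e = 1 := by ext x; exact zero_ad h e x
theorem rho_e : rho h e e = 1 := by ext x; exact ad_zero h e x
theorem lam_app_e (x : Q) : lam h e x e = x := ad_zero h e x
theorem lam_inj {x y : Q} (H : lam h e x = lam h e y) : x = y := by
  rw [← lam_app_e h e x, H, lam_app_e]

theorem mul_eq (x y : Q) : mul x y = ad h e (Rp h e x) (Lp h e y) := by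
  simp [ad]

theorem ad_idem (x : Q) : ad h e (Rp h e x) (Lp h e x) = x := by
  rw [← mul_eq, idem h]

theorem aut_ad {s : Equiv.Perm Q} (hs : s ∈ AutG mul) (h0 : s e = e) (x y : Q) :
    s (ad h e x y) = ad h e (s x) (s y) := by
  have hf : ∀ x, s (Rp h e x) = Rp h e (s x) := by
    intro x; simp only [Rp_app]; rw [hs, h0]
  have hg : ∀ x, s (Lp h e x) = Lp h e (s x) := by
    intro x; simp only [Lp_app]; rw [hs, h0]
  obtain ⟨x, rfl⟩ := (Rp h e).surjective x
  obtain ⟨y, rfl⟩ := (Lp h e).surjective y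
  rw [← mul_eq, hf, hg, ← mul_eq, hs]

theorem aut_lam {s : Equiv.Perm Q} (hs : s ∈ AutG mul) (h0 : s e = e) (x : Q) :
    lam h e (s x) = s * lam h e x * s⁻¹ := by
  ext y
  obtain ⟨y, rfl⟩ := s.surjective y
  simp [lam_app, aut_ad h e hs h0]

theorem aut_rho {s : Equiv.Perm Q} (hs : s ∈ AutG mul) (h0 : s e = e) (x : Q) :
    rho h e (s x) = s * rho h e x * s⁻¹ := by
  ext y
  obtain ⟨y, rfl⟩ := s.surjective y
  simp [rho_app, aut_ad h e hs h0]

theorem fg_comm (x : Q) : Rp h e (Lp h e x) = Lp h e (Rp h e x) := by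
  simp only [Rp_app, Lp_app]; rw [h.ld, idem h e]

theorem f_ad (x y : Q) : Rp h e (ad h e x y) = ad h e (Rp h e x) (Rp h e y) :=
  aut_ad h e (Rp_aut h e) (f_e h e) x y
theorem g_ad (x y : Q) : Lp h e (ad h e x y) = ad h e (Lp h e x) (Lp h e y) :=
  aut_ad h e (Lp_aut h e) (g_e h e) x y

theorem LD (x a b : Q) : ad h e x (ad h e a b) =
    ad h e (ad h e (Rp h e x) a) (ad h e (Lp h e x) b) := by
  obtain ⟨x, rfl⟩ := (Rp h e).surjective x
  obtain ⟨a, rfl⟩ := (Lp h e).surjective a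
  obtain ⟨a, rfl⟩ := (Rp h e).surjective a
  obtain ⟨b, rfl⟩ := (Lp h e).surjective b
  obtain ⟨b, rfl⟩ := (Lp h e).surjective b
  rw [← g_ad h e (Rp h e a), ← mul_eq, ← mul_eq, ← fg_comm h e a, ← f_ad,
    ← g_ad, ← mul_eq, ← mul_eq, ← mul_eq, ← h.ld]

theorem RD (x a b : Q) : ad h e (ad h e a b) x =
    ad h e (ad h e a (Rp h e x)) (ad h e b (Lp h e x)) := by
  obtain ⟨x, rfl⟩ := (Lp h e).surjective x
  obtain ⟨a, rfl⟩ := (Rp h e).surjective a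
  obtain ⟨a, rfl⟩ := (Rp h e).surjective a
  obtain ⟨b, rfl⟩ := (Rp h e).surjective b
  obtain ⟨b, rfl⟩ := (Lp h e).surjective b
  rw [← f_ad h e (Rp h e a) (Lp h e b), ← mul_eq, ← mul_eq, fg_comm h e b, 
    ← f_ad, ← g_ad, ← mul_eq, ← mul_eq, ← mul_eq, ← h.rd]

theorem r1 (x a : Q) : lam h e (ad h e (Rp h e x) a) * lam h e (Lp h e x) = lam h e x * lam h e a := by
  ext b; simp only [Equiv.Perm.mul_apply, lam_app]; rw [← LD]
theorem r2 (x b : Q) : rho h e (ad h e (Lp h e x) b) * lam h e (Rp h e x) = lam h e x * rho h e b := by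
  ext a; simp only [Equiv.Perm.mul_apply, lam_app, rho_app]; rw [← LD]
theorem r3 (x b : Q) : rho h e (ad h e b (Lp h e x)) * rho h e (Rp h e x) = rho h e x * rho h e b := by
  ext a; simp only [Equiv.Perm.mul_apply, rho_app]; rw [← RD]
theorem r4 (x a : Q) : lam h e (ad h e a (Rp h e x)) * rho h e (Lp h e x) = rho h e x * lam h e a := by
  ext b; simp only [Equiv.Perm.mul_apply, lam_app, rho_app]; rw [← RD]

theorem grp {G : Type*} [Group G] {A B A' B' : G} (h1 : A * B = B' * A) (h2 : B' * A' = A * B')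
    (h3 : A * B * A * B⁻¹ = A * B' * A * B'⁻¹) (h4 : A * B * B' * A⁻¹ = A * B' * B' * A'⁻¹) :
    A⁻¹ * A' = B⁻¹ * B' ∧ Commute A (B⁻¹ * B') ∧ Commute B (B⁻¹ * B') := by
  have hB' : B' = A * B * A⁻¹ := by rw [h1]; group
  have hA' : A' = B'⁻¹ * A * B' := by rw [mul_assoc, ← h2]; group
  subst hA' hB'
  have k1 : Commute A (B * A * B⁻¹) := by
    have h5 : B * A * B⁻¹ = A * (B * A * B⁻¹) * A⁻¹ := by
      apply mul_left_cancel (a := A)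
      calc A * (B * A * B⁻¹) = A * B * A * B⁻¹ := by group
        _ = _ := h3
        _ = _ := by group
    exact (eq_mul_inv_iff_mul_eq.1 h5).symm
  have k1' : Commute A (B⁻¹ * A * B) := by
    have := (Commute.conj_iff B⁻¹).2 k1
    have e1 : B⁻¹ * (B * A * B⁻¹) * B⁻¹⁻¹ = A := by group
    rw [e1] at this
    simpa using this.symm
  have k2 : Commute B (A⁻¹ * B * A) := by
    have h5 : A * B * (A * B * A⁻¹) * A⁻¹ * A = A * (A * B * A⁻¹ * B) := by
      rw [h4]; group
    have h6 : B * (A * B * A⁻¹) = A * B * A⁻¹ * B := by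
      apply mul_left_cancel (a := A)
      rw [← h5]; group
    have h7 : Commute B (A * B * A⁻¹) := h6
    have := (Commute.conj_iff A⁻¹).2 h7
    have e1 : A⁻¹ * (A * B * A⁻¹) * A⁻¹⁻¹ = B := by group
    rw [e1] at this
    simpa using this.symm
  have k2' : Commute B (A * B * A⁻¹) := by
    have := (Commute.conj_iff A).2 k2
    have e1 : A * (A⁻¹ * B * A) * A⁻¹ = B := by group
    rw [e1] at this
    exact this.symm
  refine ⟨by group, ?_, ?_⟩
  · have e1 : B⁻¹ * (A * B * A⁻¹) = (B⁻¹ * A * B) * A⁻¹ := by group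
    rw [e1]
    exact k1'.mul_right (Commute.refl A).inv_right
  · exact (Commute.refl B).inv_right.mul_right k2'

/-- the commutator-like map -/
noncomputable def cc (x : Q) : Equiv.Perm Q := (lam h e x)⁻¹ * rho h e x

theorem s1 (x : Q) : lam h e (Rp h e x) * lam h e (Lp h e x) = lam h e x := by
  have := r1 h e x e; rwa [ad_zero, lam_e, mul_one] at this
theorem s2 (x : Q) : rho h e (Lp h e x) * lam h e (Rp h e x) = lam h e x := by
  have := r2 h e x e; rwa [ad_zero, rho_e, mul_one] at this
theorem s3 (x : Q) : rho h e (Lp h e x) * rho h e (Rp h e x) = rho h e x := by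
  have := r3 h e x e; rwa [zero_ad, rho_e, mul_one] at this
theorem s4 (x : Q) : lam h e (Rp h e x) * rho h e (Lp h e x) = rho h e x := by
  have := r4 h e x e; rwa [zero_ad, lam_e, mul_one] at this

theorem cc_all (x : Q) : cc h e (Rp h e x) = cc h e x ∧ cc h e (Lp h e x) = cc h e x ∧
    Commute (lam h e (Rp h e x)) (cc h e x) ∧ Commute (lam h e (Lp h e x)) (cc h e x) := by
  have key := grp (A := lam h e (Rp h e x)) (B := lam h e (Lp h e x))
    (A' := rho h e (Rp h e x)) (B' := rho h e (Lp h e x))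
    (by rw [s1, s2]) (by rw [s3, s4])
    (by
      rw [s1, s4]
      have a1 := r1 h e x (Rp h e x)
      have a2 := r4 h e x (Rp h e x)
      rw [← a1, ← a2]; simp)
    (by
      rw [s1, s4]
      have a1 := r2 h e x (Lp h e x)
      have a2 := r3 h e x (Lp h e x)
      rw [← a1, ← a2]; simp)
  have hx : cc h e x = cc h e (Lp h e x) := by
    unfold cc
    rw [← s1 h e x, ← s4 h e x]; group
  rw [hx]
  exact ⟨key.1, rfl, key.2.1, key.2.2⟩

theorem cc_comm (x : Q) : Commute (lam h e x) (cc h e x) := by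
  have := (cc_all h e x).2.2
  rw [← s1 h e x]
  exact this.1.mul_left this.2

noncomputable def ng (x : Q) : Q := (lam h e x)⁻¹ e

theorem ad_ng (x : Q) : ad h e x (ng h e x) = e := by
  rw [← lam_app]; simp [ng]

theorem lam_ng (x : Q) : lam h e (ng h e x) = (lam h e x * cc h e x)⁻¹ := by
  obtain ⟨x, rfl⟩ := (Rp h e).surjective x
  have := r1 h e x (ng h e (Rp h e x))
  rw [ad_ng, lam_e, one_mul] at this
  rw [← s1 h e x] at this
  have k := cc_all h e x
  rw [k.1]
  have t1 : lam h e (ng h e (Rp h e x)) = (lam h e (Lp h e x))⁻¹ * (lam h e (Rp h e x))⁻¹ * 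
      (lam h e (Rp h e x) * lam h e (Lp h e x) * lam h e (ng h e (Rp h e x))) := by
    group
  rw [← this] at t1
  rw [t1, ← k.2.1]
  have s : cc h e (Lp h e x) = (lam h e (Lp h e x))⁻¹ * (lam h e (Rp h e x) * lam h e (Lp h e x) * (lam h e (Rp h e x))⁻¹) := by
    unfold cc
    rw [s1 h e x, ← s2 h e x]; group
  have k1 : Commute (lam h e (Rp h e x)) (cc h e (Lp h e x)) := by rw [k.2.1]; exact k.2.2.1
  rw [k1.eq, s]; group

theorem rho_ng (x : Q) : rho h e (ng h e x) = (lam h e x)⁻¹ := by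
  obtain ⟨x, rfl⟩ := (Lp h e).surjective x
  have := r2 h e x (ng h e (Lp h e x))
  rw [ad_ng, rho_e, one_mul, ← s1 h e x] at this
  have k : lam h e (Lp h e x) * rho h e (ng h e (Lp h e x)) = 1 := by
    apply mul_left_cancel (a := lam h e (Rp h e x))
    rw [← mul_assoc, ← this, mul_one]
  exact eq_inv_of_mul_eq_one_right k

theorem cc_ng (x : Q) : cc h e (ng h e x) = cc h e x := by
  have : cc h e (ng h e x) = (lam h e (ng h e x))⁻¹ * rho h e (ng h e x) := rfl
  rw [this, lam_ng, rho_ng, inv_inv, (cc_comm h e x).eq]; group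

theorem cc_e (x : Q) : cc h e x e = e := by
  simp only [cc, Equiv.Perm.mul_apply]
  rw [Equiv.Perm.inv_eq_iff_eq, rho_app, lam_app, ad_zero, zero_ad]

theorem cc_aut (x : Q) : cc h e x ∈ AutG mul := by
  have : cc h e x = Lp h e * ((Lp h ((Rp h e)⁻¹ x))⁻¹ * Rp h ((Lp h e)⁻¹ x)) * (Rp h e)⁻¹ := by
    unfold cc lam rho; group
  rw [this]
  exact mul_mem (mul_mem (Lp_aut h e) (mul_mem (inv_mem (Lp_aut h _)) (Rp_aut h _)))
    (inv_mem (Rp_aut h e))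

theorem cc_swap (p z : Q) : ad h e z p = ad h e p (cc h e p z) := by
  simp only [cc, Equiv.Perm.mul_apply]
  rw [← lam_app h e p]; simp [rho_app]

theorem cc_self (p : Q) : cc h e p p = p := by
  simp only [cc, Equiv.Perm.mul_apply]
  rw [Equiv.Perm.inv_eq_iff_eq, rho_app, lam_app]

theorem cc_swap' (p z : Q) : cc h e p (ad h e p z) = ad h e z p := by
  rw [aut_ad h e (cc_aut h e p) (cc_e h e p), cc_self, ← cc_swap]

theorem cc_fix (p t : Q) : cc h e t (cc h e p (ad h e p t)) = ad h e p t := by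
  rw [cc_swap', cc_swap']

theorem cc_one (p : Q) : cc h e p = 1 := by
  ext x
  have hx := RD h e x p (ng h e p)
  rw [ad_ng, zero_ad] at hx
  have a1 := cc_fix h e p (Rp h e x)
  have a2 := cc_fix h e (ng h e p) (Lp h e x)
  rw [(cc_all h e x).1] at a1
  rw [(cc_all h e x).2.1, cc_ng] at a2
  have a3 : cc h e x (cc h e p x) = x := by
    have m := fun q => aut_ad h e (cc_aut h e q) (cc_e h e q)
    calc cc h e x (cc h e p x) = cc h e x (cc h e p (ad h e (ad h e p (Rp h e x)) (ad h e (ng h e p) (Lp h e x)))) := by rw [← hx]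
      _ = x := by rw [m, m, a1, a2, ← hx]
  exact (cc h e x).injective (a3.trans (cc_self h e x).symm)

theorem ad_comm (x y : Q) : ad h e x y = ad h e y x := by
  have := cc_swap h e x y
  rw [cc_one] at this
  exact this.symm

end
end HQ

namespace HQ
section
variable {Q : Type*} {mul : Q → Q → Q} (h : DQ mul) (e : Q)

theorem rho_lam (x : Q) : rho h e x = lam h e x := by
  have := cc_one h e x
  unfold cc at this
  exact (inv_mul_eq_one.1 this).symm

theorem lam_neg (x : Q) : lam h e (ng h e x) = (lam h e x)⁻¹ := by
  rw [lam_ng, cc_one, mul_one]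

theorem u1 (x : Q) : lam h e (Lp h e x) * lam h e (Rp h e x) = lam h e x := by
  have := s2 h e x; rwa [rho_lam] at this

theorem pq_comm (x : Q) : Commute (lam h e (Rp h e x)) (lam h e (Lp h e x)) := by
  unfold Commute SemiconjBy
  rw [s1, u1]

theorem u2 (x b : Q) : lam h e (ad h e (Lp h e x) b) * lam h e (Rp h e x) = lam h e x * lam h e b := by
  have := r2 h e x b; rwa [rho_lam, rho_lam] at this

theorem neg_ad (x y : Q) : ad h e (ng h e x) (ad h e x y) = y := by
  rw [← lam_app, ← lam_app, lam_neg]; simp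

theorem ng_ad (x y : Q) : ng h e (ad h e x y) = ad h e (ng h e x) (ng h e y) := by
  set w := ad h e x y with hw
  have a1 : ad h e (ng h e x) w = y := neg_ad h e x y
  have a2 : ad h e (ng h e w) y = ng h e x := by
    rw [← a1, ad_comm h e _ w, neg_ad]
  have a3 : ad h e (ng h e y) (ng h e x) = ng h e w := by
    rw [← a2, ad_comm h e _ y, neg_ad]
  rw [← a3, ad_comm]

theorem f_ng (x : Q) : Rp h e (ng h e x) = ng h e (Rp h e x) := by
  apply (lam h e (Rp h e x)).injective
  rw [lam_app, lam_app, ← f_ad, ad_ng, ad_ng, f_e]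
theorem g_ng (x : Q) : Lp h e (ng h e x) = ng h e (Lp h e x) := by
  apply (lam h e (Lp h e x)).injective
  rw [lam_app, lam_app, ← g_ad, ad_ng, ad_ng, g_e]

/-- the centre, as a group of translations -/
def Zg : Subgroup (Equiv.Perm Q) := Subgroup.centralizer (Set.range (lam h e))

theorem mem_Zg {s : Equiv.Perm Q} : s ∈ Zg h e ↔ ∀ x, lam h e x * s = s * lam h e x := by
  unfold Zg
  rw [Subgroup.mem_centralizer_iff]
  simp

theorem grp2 {G : Type*} [Group G] {X a w q : G} (h1 : w * q = X * a)
    (h2 : w⁻¹ * q⁻¹ = X⁻¹ * a⁻¹) (h3 : Commute q X) : a * (X * q) = (X * q) * a := by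
  have hw : w = X * a * q⁻¹ := by rw [← h1]; group
  subst hw
  have h4 : q * X * a * q⁻¹ = a * X := by
    have := congrArg (fun z => z⁻¹) h2
    simp only [mul_inv_rev, inv_inv] at this
    rw [← this]; group
  have h5 : q * X * a = a * X * q := by rw [← h4]; group
  rw [← h3.eq, h5, ← mul_assoc, mul_assoc a q X, h3.eq, mul_assoc]

theorem xq_mem (x : Q) : lam h e x * lam h e (Lp h e x) ∈ Zg h e := by
  rw [mem_Zg]
  intro a
  have k1 := r1 h e x a
  have k2 := r1 h e (ng h e x) (ng h e a)
  rw [f_ng, g_ng, ← ng_ad, lam_neg, lam_neg, lam_neg, lam_neg] at k2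
  refine grp2 k1 k2 ?_
  rw [← s1 h e x]
  exact (pq_comm h e x).symm.mul_right (Commute.refl _)

theorem xp_mem (x : Q) : lam h e x * lam h e (Rp h e x) ∈ Zg h e := by
  rw [mem_Zg]
  intro a
  have k1 := u2 h e x a
  have k2 := u2 h e (ng h e x) (ng h e a)
  rw [f_ng, g_ng, ← ng_ad, lam_neg, lam_neg, lam_neg, lam_neg] at k2
  refine grp2 k1 k2 ?_
  rw [← s1 h e x]
  exact (Commute.refl _).mul_right (pq_comm h e x)

theorem cube_mem (x : Q) : lam h e x ^ 3 ∈ Zg h e := by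
  obtain ⟨x, rfl⟩ := (Rp h e).surjective x
  have c := pq_comm h e x
  have k1 := xp_mem h e x
  have k2 := xq_mem h e x
  rw [← s1 h e x] at k1 k2
  have := mul_mem (mul_mem k1 (inv_mem k2)) k1
  convert this using 1
  generalize lam h e (Rp h e x) = p at *
  generalize lam h e (Lp h e x) = q at *
  rw [mul_inv_rev, mul_inv_rev]
  have e1 : p * q * p = p * p * q := by rw [mul_assoc, ← c.eq, mul_assoc]
  rw [e1]
  have e2 : p * p * q * (q⁻¹ * (q⁻¹ * p⁻¹)) = p * q⁻¹ := by
    have : q⁻¹ * p⁻¹ = p⁻¹ * q⁻¹ := c.symm.inv_inv.eq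
    rw [this]
    group
  rw [e2, pow_three]
  have : q⁻¹ * p = p * q⁻¹ := c.symm.inv_left.eq
  calc p * (p * p) = p * (p * p) * (q⁻¹ * q) := by group
    _ = p * p * (p * q⁻¹) * q := by group
    _ = p * p * (q⁻¹ * p) * q := by rw [this]
    _ = p * (p * q⁻¹) * p * q := by group
    _ = p * (q⁻¹ * p) * p * q := by rw [this]
    _ = _ := by group

theorem lam_dbl (x : Q) : lam h e (ad h e x x) = lam h e x * lam h e x := by
  obtain ⟨x, rfl⟩ := (Rp h e).surjective x
  have := r1 h e x (Rp h e x)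
  rw [← s1 h e x, mul_assoc, ← (pq_comm h e x).eq, ← mul_assoc] at this
  exact mul_right_cancel this

theorem Zg_eq {s : Equiv.Perm Q} (hs : s ∈ Zg h e) : s = lam h e (s e) := by
  ext y
  have := congrArg (fun z => z e) ((mem_Zg h e).1 hs y)
  simp only [Equiv.Perm.mul_apply, lam_app_e] at this
  rw [← this, lam_app, lam_app, ad_comm]

theorem Zg_comm {s t : Equiv.Perm Q} (hs : s ∈ Zg h e) (ht : t ∈ Zg h e) : s * t = t * s := by
  rw [Zg_eq h e hs, Zg_eq h e ht, ← Zg_eq h e ht]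
  exact (mem_Zg h e).1 ht _

instance : CommGroup (Zg h e) :=
  { (inferInstance : Group (Zg h e)) with
    mul_comm := fun s t => Subtype.ext (Zg_comm h e s.2 t.2) }

abbrev ZZ := Additive (Zg h e)

def sh (z : ZZ h e) : Q → Q := (z.toMul : Equiv.Perm Q)

theorem sh_def (z : ZZ h e) (x : Q) : sh h e z x = (z.toMul : Equiv.Perm Q) x := rfl

theorem sh_zero (x : Q) : sh h e 0 x = x := rfl
theorem sh_add (z w : ZZ h e) (x : Q) : sh h e (z + w) x = sh h e z (sh h e w x) := rfl

theorem sh_ad (z : ZZ h e) (x y : Q) : ad h e (sh h e z x) y = sh h e z (ad h e x y) := by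
  have := congrArg (fun s => s x) ((mem_Zg h e).1 z.toMul.2 y)
  simp only [Equiv.Perm.mul_apply, lam_app] at this
  rw [ad_comm, ad_comm h e x y]
  exact this

theorem ad_sh (z : ZZ h e) (x y : Q) : ad h e x (sh h e z y) = sh h e z (ad h e x y) := by
  rw [ad_comm, sh_ad, ad_comm]

theorem sh_free (z w : ZZ h e) (x : Q) (H : sh h e z x = sh h e w x) : z = w := by
  have k : sh h e z e = sh h e w e := by
    have : ∀ z, sh h e z x = ad h e (sh h e z e) x := fun z => by rw [sh_ad, zero_ad]
    rw [this z, this w, ad_comm, ad_comm h e _ x] at H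
    exact (lam h e x).injective H
  have a1 := Zg_eq h e z.toMul.2
  have a2 := Zg_eq h e w.toMul.2
  apply Additive.toMul.injective
  apply Subtype.ext
  rw [a1, a2]
  exact congrArg _ k

theorem lam_sh (z : ZZ h e) (x : Q) : lam h e (sh h e z x) = (z.toMul : Equiv.Perm Q) * lam h e x := by
  ext y
  exact sh_ad h e z x y

noncomputable def tt (x : Q) : ZZ h e := Additive.ofMul ⟨lam h e x ^ 3, cube_mem h e x⟩
noncomputable def et (x : Q) : ZZ h e := Additive.ofMul ⟨lam h e x * lam h e (Rp h e x), xp_mem h e x⟩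

theorem ng_ng (x : Q) : ng h e (ng h e x) = x := by
  have := neg_ad h e (ng h e x) x
  rw [ad_comm h e _ x, ad_ng, ad_zero] at this
  exact this

theorem f_eq (x : Q) : Rp h e x = sh h e (et h e x) (ng h e x) := by
  apply lam_inj h e
  rw [lam_sh, lam_neg]
  have := (mem_Zg h e).1 (xp_mem h e x) x
  change _ = (lam h e x * lam h e (Rp h e x)) * _
  rw [eq_mul_inv_iff_mul_eq]
  have c : lam h e x * (lam h e x * lam h e (Rp h e x)) = lam h e x * (lam h e (Rp h e x) * lam h e x) := by
    rw [this, mul_assoc]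
  exact (mul_left_cancel c).symm

theorem dbl_eq (x : Q) : ad h e x x = sh h e (tt h e x) (ng h e x) := by
  apply lam_inj h e
  rw [lam_sh, lam_neg, lam_dbl]
  change _ = (lam h e x ^3) * _
  rw [pow_succ, pow_two]; group

theorem sh_ng (z : ZZ h e) (x : Q) : ng h e (sh h e z x) = sh h e (-z) (ng h e x) := by
  apply (lam h e (sh h e z x)).injective
  rw [lam_app, lam_app, ad_ng, sh_ad, ad_sh, ad_ng, ← sh_add]
  simp [sh_zero]

theorem sh_sub_eq (z : ZZ h e) (x y : Q) (H : x = sh h e z y) : y = sh h e (-z) x := by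
  rw [H, ← sh_add]; simp [sh_zero]

theorem g_eq (x : Q) : Lp h e x = sh h e (tt h e x - et h e x) (ng h e x) := by
  have h1 := ad_idem h e x
  rw [f_eq, sh_ad] at h1
  have h2 := sh_sub_eq h e _ _ _ h1.symm
  have h3 : ad h e x (ad h e (ng h e x) (Lp h e x)) = Lp h e x := by
    have := neg_ad h e (ng h e x) (Lp h e x)
    rwa [ng_ng] at this
  rw [h2, ad_sh, dbl_eq, ← sh_add] at h3
  rw [← h3]; congr 1; abel

theorem et_ad (x y : Q) : et h e (ad h e x y) = et h e x + et h e y := by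
  have := f_ad h e x y
  rw [f_eq, f_eq h e x, f_eq h e y, sh_ad, ad_sh, ng_ad, ← sh_add] at this
  exact sh_free h e _ _ _ this

theorem tt_ad (x y : Q) : tt h e (ad h e x y) = tt h e x + tt h e y := by
  have := g_ad h e x y
  rw [g_eq, g_eq h e x, g_eq h e y, sh_ad, ad_sh, ng_ad, ← sh_add] at this
  have := sh_free h e _ _ _ this
  rw [et_ad] at this
  have : tt h e (ad h e x y) = (tt h e x - et h e x + (tt h e y - et h e y)) + (et h e x + et h e y) := by
    rw [← this]; abel
  rw [this]; abel

theorem mul_form (x y : Q) : mul x y =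
    sh h e (et h e x + (tt h e y - et h e y)) (ng h e (ad h e x y)) := by
  rw [mul_eq h e, f_eq, g_eq, sh_ad, ad_sh, ← sh_add, ng_ad]

theorem tt_sh (z : ZZ h e) (x : Q) : tt h e (sh h e z x) = 3 • z + tt h e x := by
  have : sh h e z x = ad h e (sh h e z e) x := by rw [sh_ad, zero_ad]
  rw [this, tt_ad]
  congr 1
  apply sh_free h e _ _ e
  have : ((z.toMul : Equiv.Perm Q)) = lam h e (sh h e z e) := Zg_eq h e z.toMul.2
  change (lam h e (sh h e z e) ^ 3) e = (z.toMul ^ 3 : Equiv.Perm Q) e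
  rw [this]

theorem tt_e : tt h e e = 0 := by
  have := tt_ad h e e e
  rw [ad_zero] at this
  simpa using this
theorem et_e : et h e e = 0 := by
  have := et_ad h e e e
  rw [ad_zero] at this
  simpa using this

noncomputable def eZ : ZZ h e →+ ZZ h e where
  toFun z := et h e (sh h e z e)
  map_zero' := by rw [sh_zero, et_e]
  map_add' z w := by
    rw [← et_ad, sh_ad, zero_ad, ← sh_add]

theorem et_sh (z : ZZ h e) (x : Q) : et h e (sh h e z x) = eZ h e z + et h e x := by
  have : sh h e z x = ad h e (sh h e z e) x := by rw [sh_ad, zero_ad]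
  rw [this, et_ad]; rfl

theorem lam_aut (x : Q) : lam h e x ∈ AutG mul :=
  mul_mem (Lp_aut h _) (inv_mem (Lp_aut h e))

end
end HQ

namespace HQ

theorem closed_sub {Q : Type*} [Finite Q] {mul : Q → Q → Q} (h : DQ mul) (P : Set Q)
    (hne : P.Nonempty) (hP : ∀ a ∈ P, ∀ b ∈ P, mul a b ∈ P) : IsSubquasigroup mul P := by
  refine ⟨hne, fun a ha b hb => ⟨hP a ha b hb, ?_, ?_⟩⟩
  · intro x hx
    let F : P → P := fun y => ⟨mul a y, hP a ha y y.2⟩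
    have hF : Function.Injective F := by
      intro y z hyz
      exact Subtype.ext ((h.bl a).1 (congrArg Subtype.val hyz))
    obtain ⟨y, hy⟩ := Finite.injective_iff_surjective.1 hF ⟨b, hb⟩
    have : x = y := (h.bl a).1 (hx.trans (congrArg Subtype.val hy).symm)
    rw [this]; exact y.2
  · intro x hx
    let F : P → P := fun y => ⟨mul y a, hP y y.2 a ha⟩
    have hF : Function.Injective F := by
      intro y z hyz
      exact Subtype.ext ((h.br a).1 (congrArg Subtype.val hyz))
    obtain ⟨y, hy⟩ := Finite.injective_iff_surjective.1 hF ⟨b, hb⟩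
    have : x = y := (h.br a).1 (hx.trans (congrArg Subtype.val hy).symm)
    rw [this]; exact y.2

section
variable {Q : Type*} {mul : Q → Q → Q} (h : DQ mul) (e : Q)

theorem tt_ng (x : Q) : tt h e (ng h e x) = - tt h e x := by
  have := tt_ad h e x (ng h e x)
  rw [ad_ng, tt_e] at this
  exact (neg_eq_of_add_eq_zero_right this.symm).symm
theorem et_ng (x : Q) : et h e (ng h e x) = - et h e x := by
  have := et_ad h e x (ng h e x)
  rw [ad_ng, et_e] at this
  exact (neg_eq_of_add_eq_zero_right this.symm).symm

def PB (B : AddSubgroup (ZZ h e)) (x : Q) : Set Q :=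
  {w | ∃ b ∈ B, w = sh h e b e ∨ w = sh h e b x ∨ w = sh h e b (ng h e x)}

theorem ng_e : ng h e e = e := by
  have := ad_ng h e e
  rwa [zero_ad] at this

theorem PB_sh {B : AddSubgroup (ZZ h e)} {x w : Q} {b} (hb : b ∈ B) (hw : w ∈ PB h e B x) :
    sh h e b w ∈ PB h e B x := by
  obtain ⟨c, hc, h1⟩ := hw
  refine ⟨b + c, add_mem hb hc, ?_⟩
  rcases h1 with rfl | rfl | rfl <;> simp [sh_add]

theorem PB_ng {B : AddSubgroup (ZZ h e)} {x w : Q} (hw : w ∈ PB h e B x) :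
    ng h e w ∈ PB h e B x := by
  obtain ⟨c, hc, h1⟩ := hw
  refine ⟨-c, neg_mem hc, ?_⟩
  rcases h1 with rfl | rfl | rfl <;> simp [sh_ng, ng_ng, ng_e]

theorem PB_base {B : AddSubgroup (ZZ h e)} (x : Q) : e ∈ PB h e B x ∧ x ∈ PB h e B x ∧ ng h e x ∈ PB h e B x :=
  ⟨⟨0, zero_mem _, Or.inl rfl⟩, ⟨0, zero_mem _, Or.inr (Or.inl rfl)⟩, ⟨0, zero_mem _, Or.inr (Or.inr rfl)⟩⟩

theorem PB_ad {B : AddSubgroup (ZZ h e)} {x w v : Q} (ht : tt h e x ∈ B) 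
    (hw : w ∈ PB h e B x) (hv : v ∈ PB h e B x) : ad h e w v ∈ PB h e B x := by
  obtain ⟨k1, k2, k3⟩ := PB_base h e (B := B) x
  obtain ⟨c, hc, h1⟩ := hw
  obtain ⟨d, hd, h2⟩ := hv
  rcases h1 with rfl | rfl | rfl <;> rcases h2 with rfl | rfl | rfl <;> rw [sh_ad, ad_sh] <;>
    apply PB_sh h e hc <;> apply PB_sh h e hd
  · rwa [ad_zero]
  · rwa [zero_ad]
  · rwa [zero_ad]
  · rwa [ad_zero]
  · rw [dbl_eq]; exact PB_sh h e ht k3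
  · rwa [ad_ng]
  · rwa [ad_zero]
  · rwa [ad_comm, ad_ng]
  · rw [← ng_ad, dbl_eq]; exact PB_ng h e (PB_sh h e ht k3)

theorem PB_sub [Finite Q] {B : AddSubgroup (ZZ h e)} {x : Q} (hB : ∀ z ∈ B, eZ h e z ∈ B)
    (ht : tt h e x ∈ B) (he : et h e x ∈ B) : IsSubquasigroup mul (PB h e B x) := by
  apply closed_sub h _ ⟨e, (PB_base h e x).1⟩
  have hT : ∀ w ∈ PB h e B x, tt h e w ∈ B := by
    rintro w ⟨c, hc, h1⟩
    have := B.nsmul_mem hc 3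
    rcases h1 with rfl | rfl | rfl <;> rw [tt_sh]
    · rw [tt_e]; simpa using this
    · exact add_mem this ht
    · rw [tt_ng]; exact add_mem this (neg_mem ht)
  have hE : ∀ w ∈ PB h e B x, et h e w ∈ B := by
    rintro w ⟨c, hc, h1⟩
    have := hB c hc
    rcases h1 with rfl | rfl | rfl <;> rw [et_sh]
    · rw [et_e]; simpa using this
    · exact add_mem this he
    · rw [et_ng]; exact add_mem this (neg_mem he)
  intro a ha b hb
  rw [mul_form h e]
  exact PB_sh h e (add_mem (hE a ha) (sub_mem (hT b hb) (hE b hb))) (PB_ng h e (PB_ad h e ht ha hb))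

noncomputable def dd (x y z : Q) : Q :=
  ad h e (ad h e (ad h e x y) z) (ng h e (ad h e x (ad h e y z)))

theorem dd_mem [Finite Q] (ham : IsHamiltonian mul) {B : AddSubgroup (ZZ h e)} {x : Q}
    (hB : ∀ z ∈ B, eZ h e z ∈ B)
    (ht : tt h e x ∈ B) (he : et h e x ∈ B) (y z : Q) : dd h e x y z ∈ PB h e B x := by
  obtain ⟨-, r, ⟨hr, c1, c2, c3⟩, a, ha⟩ := ham _ (PB_sub h e hB ht he)
  have hre : r a e := by
    have : e ∈ PB h e B x := (PB_base h e x).1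
    rwa [ha] at this
  have hrx : r x e := by
    have : x ∈ PB h e B x := (PB_base h e x).2.1
    rw [ha] at this
    exact hr.trans (hr.symm this) hre
  have hf : ∀ u v, r (Rp h e u) (Rp h e v) → r u v := fun u v H => c3 _ _ _ _ (hr.refl e) H
  have hg : ∀ u v, r (Lp h e u) (Lp h e v) → r u v := fun u v H => c2 _ _ _ _ (hr.refl e) H
  have hadd : ∀ u v w t, r u v → r w t → r (ad h e u w) (ad h e v t) := by
    intro u v w t H1 H2
    apply c1
    · apply hf; simpa using H1
    · apply hg; simpa using H2
  have k1 : r (ad h e (ad h e x y) z) (ad h e y z) := by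
    have := hadd _ _ _ _ (hadd _ _ _ _ hrx (hr.refl y)) (hr.refl z)
    rwa [zero_ad] at this
  have k2 : r (ad h e x (ad h e y z)) (ad h e y z) := by
    have := hadd _ _ _ _ hrx (hr.refl (ad h e y z))
    rwa [zero_ad] at this
  have k3 := hadd _ _ _ _ (hr.trans k1 (hr.symm k2)) (hr.refl (ng h e (ad h e x (ad h e y z))))
  rw [ad_ng] at k3
  rw [ha]
  exact hr.trans hre (hr.symm k3)

theorem dd_swap (x y z : Q) : dd h e z y x = ng h e (dd h e x y z) := by
  have h1 : ad h e (ad h e z y) x = ad h e x (ad h e y z) := by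
    rw [ad_comm, ad_comm h e z y]
  have h2 : ad h e z (ad h e y x) = ad h e (ad h e x y) z := by
    rw [ad_comm, ad_comm h e x y]
  unfold dd
  rw [h1, h2, ng_ad h e (ad h e (ad h e x y) z), ng_ng, ad_comm]

theorem ad_cancel {u w : Q} (H : ad h e u (ng h e w) = e) : u = w := by
  have := neg_ad h e (ng h e w) u
  rw [ad_comm h e _ u, H, ad_zero, ng_ng] at this
  exact this.symm

theorem dd_of {x y z : Q} (H : ad h e (ad h e x y) z = ad h e x (ad h e y z)) : dd h e x y z = e := by
  unfold dd
  rw [H, ad_ng]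

theorem dd_z {x z : Q} (y : Q) {m} (H : x = sh h e m z) : dd h e x y z = e := by
  subst H
  apply dd_of
  rw [sh_ad, sh_ad, sh_ad, ad_comm h e (ad h e z y) z, ad_comm h e z y]

theorem dd_nz {x z : Q} (y : Q) {m} (H : x = sh h e m (ng h e z)) : dd h e x y z = e := by
  subst H
  apply dd_of
  rw [sh_ad, sh_ad, sh_ad, ad_comm h e y z, neg_ad, ad_comm h e (ad h e _ y) z]
  have := neg_ad h e (ng h e z) y
  rw [ng_ng] at this
  rw [this]

theorem dd_central [Finite Q] (ham : IsHamiltonian mul) (x y z : Q) :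
    ∃ a : ZZ h e, dd h e x y z = sh h e a e := by
  have mt : ∀ u : ZZ h e, u ∈ (⊤ : AddSubgroup (ZZ h e)) := fun u => trivial
  obtain ⟨b, -, h1⟩ := dd_mem h e ham (B := ⊤) (x := x) (fun _ _ => mt _) (mt _) (mt _) y z
  obtain ⟨c, -, h2⟩ := dd_mem h e ham (B := ⊤) (x := z) (fun _ _ => mt _) (mt _) (mt _) y x
  rw [dd_swap] at h2
  have h3 : dd h e x y z = sh h e (-c) e ∨ dd h e x y z = sh h e (-c) z ∨ 
      dd h e x y z = sh h e (-c) (ng h e z) := by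
    rcases h2 with h2 | h2 | h2 <;> have h2 := congrArg (ng h e) h2 <;> rw [ng_ng, sh_ng] at h2
    · rw [ng_e] at h2; simp [h2]
    · simp [h2]
    · rw [ng_ng] at h2; simp [h2]
  have fin : dd h e x y z = e → ∃ a : ZZ h e, dd h e x y z = sh h e a e := 
    fun H => ⟨0, by rw [H, sh_zero]⟩
  rcases h1 with h1 | h1 | h1
  · exact ⟨b, h1⟩
  · rcases h3 with h3 | h3 | h3
    · exact ⟨_, h3⟩
    · apply fin
      have := sh_sub_eq h e _ _ _ (h3.symm.trans h1).symm
      rw [← sh_add] at this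
      exact dd_z h e y (sh_sub_eq h e _ _ _ this)
    · apply fin
      have := sh_sub_eq h e _ _ _ (h3.symm.trans h1).symm
      rw [← sh_add] at this
      exact dd_nz h e y (sh_sub_eq h e _ _ _ this)
  · have h1' := congrArg (ng h e) h1
    rw [sh_ng, ng_ng] at h1'
    have h4 : x = sh h e b (ng h e (dd h e x y z)) := by
      have := sh_sub_eq h e _ _ _ h1'
      simpa using this
    rcases h3 with h3 | h3 | h3
    · exact ⟨_, h3⟩
    · apply fin
      rw [h3, sh_ng, ← sh_add] at h4
      exact dd_nz h e y h4
    · apply fin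
      rw [h3, sh_ng, ← sh_add, ng_ng] at h4
      exact dd_z h e y h4

end
end HQ

namespace HQ

/-- abstract form of a class-two commutative loop with its centre -/
structure CL {Q : Type*} (mul : Q → Q → Q) (Z : Type*) [AddCommGroup Z] where
  e : Q
  add : Q → Q → Q
  ng : Q → Q
  sh : Z → Q → Q
  t : Q → Z
  n : Q → Z
  nZ : Z →+ Z
  A : Q → Q → Q → Z
  add_comm : ∀ x y, add x y = add y x
  add_zero : ∀ x, add x e = x
  neg_add : ∀ x y, add (ng x) (add x y) = y
  ng_ad : ∀ x y, ng (add x y) = add (ng x) (ng y)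
  sh_zero : ∀ x, sh 0 x = x
  sh_add : ∀ z w x, sh (z + w) x = sh z (sh w x)
  sh_ad : ∀ z x y, add (sh z x) y = sh z (add x y)
  sh_free : ∀ z w x, sh z x = sh w x → z = w
  t_ad : ∀ x y, t (add x y) = t x + t y
  n_ad : ∀ x y, n (add x y) = n x + n y
  t_sh : ∀ z x, t (sh z x) = 3 • z + t x
  n_sh : ∀ z x, n (sh z x) = nZ z + n x
  dbl : ∀ x, add x x = sh (t x) (ng x)
  mul_form : ∀ x y, mul x y = sh (n x + (t y - n y)) (ng (add x y))
  assoc : ∀ x y z, add (add x y) z = sh (A x y z) (add x (add y z))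
  A_add3 : ∀ x y z w, A x y (add z w) = A x y z + A x y w
  A_xxz : ∀ x z, A x x z = 0
  central : ∀ x, (∀ y z, A x y z = 0) → ∃ z, x = sh z e
  ham : ∀ B : AddSubgroup Z, (∀ z ∈ B, nZ z ∈ B) → ∀ x, t x ∈ B → n x ∈ B → ∀ y z, A x y z ∈ B

section
variable {Q : Type*} {mul : Q → Q → Q} (h : DQ mul) (e : Q)

theorem assoc_of_dd {x y z : Q} {a : ZZ h e} (H : dd h e x y z = sh h e a e) :
    ad h e (ad h e x y) z = sh h e a (ad h e x (ad h e y z)) := by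
  unfold dd at H
  have := neg_ad h e (ng h e (ad h e x (ad h e y z))) (ad h e (ad h e x y) z)
  rw [ad_comm h e (ng h e (ad h e x (ad h e y z))), H, ad_sh, ad_zero, ng_ng] at this
  exact this.symm

noncomputable def AA (x y z : Q) : ZZ h e := by
  classical
  exact if H : ∃ a : ZZ h e, dd h e x y z = sh h e a e then H.choose else 0

theorem AA_spec [Finite Q] (ham : IsHamiltonian mul) (x y z : Q) :
    dd h e x y z = sh h e (AA h e x y z) e := by
  unfold AA
  rw [dif_pos (dd_central h e ham x y z)]
  exact (dd_central h e ham x y z).choose_spec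

theorem AA_assoc [Finite Q] (ham : IsHamiltonian mul) (x y z : Q) :
    ad h e (ad h e x y) z = sh h e (AA h e x y z) (ad h e x (ad h e y z)) :=
  assoc_of_dd h e (AA_spec h e ham x y z)

noncomputable def psi (x y : Q) : Equiv.Perm Q := (lam h e (ad h e x y))⁻¹ * (lam h e x * lam h e y)

theorem psi_aut (x y : Q) : psi h e x y ∈ AutG mul :=
  mul_mem (inv_mem (lam_aut h e _)) (mul_mem (lam_aut h e _) (lam_aut h e _))

theorem psi_spec [Finite Q] (ham : IsHamiltonian mul) (x y z : Q) :
    psi h e x y z = sh h e (- AA h e x y z) z := by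
  unfold psi
  rw [Equiv.Perm.mul_apply, Equiv.Perm.inv_eq_iff_eq, lam_app, ad_sh, AA_assoc h e ham, ← sh_add]
  simp [sh_zero, lam_app]

theorem psi_e (x y : Q) : psi h e x y e = e := by
  unfold psi
  rw [Equiv.Perm.mul_apply, Equiv.Perm.inv_eq_iff_eq, Equiv.Perm.mul_apply, lam_app_e, lam_app_e, lam_app]

noncomputable def mkCL [Finite Q] (ham : IsHamiltonian mul) : CL mul (ZZ h e) where
  e := e
  add := ad h e
  ng := ng h e
  sh := sh h e
  t := tt h e
  n := et h e
  nZ := eZ h e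
  A := AA h e
  add_comm := ad_comm h e
  add_zero := ad_zero h e
  neg_add := neg_ad h e
  ng_ad := ng_ad h e
  sh_zero := sh_zero h e
  sh_add := sh_add h e
  sh_ad := sh_ad h e
  sh_free := sh_free h e
  t_ad := tt_ad h e
  n_ad := et_ad h e
  t_sh := tt_sh h e
  n_sh := et_sh h e
  dbl := dbl_eq h e
  mul_form := mul_form h e
  assoc := AA_assoc h e ham
  A_add3 := by
    intro x y z w
    have := aut_ad h e (psi_aut h e x y) (psi_e h e x y) z w
    rw [psi_spec h e ham, psi_spec h e ham, psi_spec h e ham, sh_ad, ad_sh, ← sh_add] at this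
    have := sh_free h e _ _ _ this
    rw [← neg_inj, this]; abel
  A_xxz := by
    intro x z
    apply sh_free h e _ _ (ad h e x (ad h e x z))
    rw [← AA_assoc h e ham, sh_zero, ← lam_app, lam_dbl]; rfl
  central := by
    intro x H
    have h1 : ∀ y z, ad h e (ad h e x y) z = ad h e x (ad h e y z) := by
      intro y z
      rw [AA_assoc h e ham, H, sh_zero]
    have : lam h e x ∈ Zg h e := by
      rw [mem_Zg]
      intro y
      ext z
      change ad h e y (ad h e x z) = ad h e x (ad h e y z)
      rw [ad_comm, h1, ad_comm h e z]
    refine ⟨Additive.ofMul ⟨lam h e x, this⟩, ?_⟩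
    exact (lam_app_e h e x).symm
  ham := by
    intro B hB x ht hn y z
    obtain ⟨b, hb, h1⟩ := dd_mem h e ham hB ht hn y z
    rw [AA_spec h e ham] at h1
    have fin : ∀ m, x = sh h e m e → AA h e x y z = 0 := by
      intro m hm
      apply sh_free h e _ _ (ad h e x (ad h e y z))
      rw [← AA_assoc h e ham, hm, sh_ad, sh_ad, sh_zero, sh_ad, zero_ad, zero_ad]
    rcases h1 with h1 | h1 | h1
    · rw [sh_free h e _ _ _ h1]; exact hb
    · have := sh_sub_eq h e _ _ _ h1
      rw [← sh_add] at this
      rw [fin _ this]; exact zero_mem _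
    · have := congrArg (ng h e) (sh_sub_eq h e _ _ _ h1)
      rw [← sh_add, ng_ng, sh_ng, ng_e] at this
      rw [fin _ this]; exact zero_mem _
end

namespace CL
variable {Q Z : Type*} {mul : Q → Q → Q} [AddCommGroup Z] (S : CL mul Z)

theorem zero_add (x : Q) : S.add S.e x = x := by rw [S.add_comm, S.add_zero]
theorem ad_sh (z : Z) (x y : Q) : S.add x (S.sh z y) = S.sh z (S.add x y) := by
  rw [S.add_comm, S.sh_ad, S.add_comm]
theorem ad_ng (x : Q) : S.add (S.ng x) x = S.e := by
  have := S.neg_add x S.e; rwa [S.add_zero] at this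
theorem add_cancel {x y z : Q} (H : S.add x y = S.add x z) : y = z := by
  rw [← S.neg_add x y, H, S.neg_add]
theorem t_e : S.t S.e = 0 := by
  have := S.t_ad S.e S.e
  rw [S.add_zero] at this
  simpa using this
theorem n_e : S.n S.e = 0 := by
  have := S.n_ad S.e S.e
  rw [S.add_zero] at this
  simpa using this
theorem t_ng (x : Q) : S.t (S.ng x) = - S.t x := by
  have := S.t_ad (S.ng x) x
  rw [S.ad_ng, S.t_e] at this
  exact eq_neg_of_add_eq_zero_left this.symm
theorem n_ng (x : Q) : S.n (S.ng x) = - S.n x := by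
  have := S.n_ad (S.ng x) x
  rw [S.ad_ng, S.n_e] at this
  exact eq_neg_of_add_eq_zero_left this.symm
theorem nt (x : Q) : S.nZ (S.t x) = 3 • S.n x := by
  have := congrArg S.n (S.dbl x)
  rw [S.n_ad, S.n_sh, S.n_ng] at this
  have h2 : S.nZ (S.t x) = (S.nZ (S.t x) + - S.n x) + S.n x := by abel
  rw [h2, ← this]; abel
theorem ng_ng (x : Q) : S.ng (S.ng x) = x := by
  apply S.add_cancel (x := S.ng x)
  rw [S.add_comm, S.ad_ng, S.ad_ng]
theorem sh_ng (z : Z) (x : Q) : S.ng (S.sh z x) = S.sh (-z) (S.ng x) := by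
  apply S.add_cancel (x := S.sh z x)
  rw [S.add_comm, S.ad_ng, S.sh_ad, S.ad_sh, ← S.sh_add, S.add_comm, S.ad_ng]
  simp [S.sh_zero]
theorem sh_move {z : Z} {x y : Q} (H : x = S.sh z y) : y = S.sh (-z) x := by
  rw [H, ← S.sh_add]; simp [S.sh_zero]
theorem nA (x y z : Q) : S.nZ (S.A x y z) = 0 := by
  have := congrArg S.n (S.assoc x y z)
  rw [S.n_sh] at this
  simp only [S.n_ad] at this
  rw [_root_.add_assoc] at this
  simpa using this
theorem A3 (x y z : Q) : 3 • S.A x y z = 0 := by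
  have := congrArg S.t (S.assoc x y z)
  rw [S.t_sh] at this
  simp only [S.t_ad] at this
  rw [_root_.add_assoc] at this
  simpa using this
theorem A_swap (x y z : Q) : S.A z y x = - S.A x y z := by
  have h1 := S.assoc x y z
  have h2 := S.assoc z y x
  rw [S.add_comm, S.add_comm z y, S.add_comm z, S.add_comm y x, h1, ← S.sh_add] at h2
  have := S.sh_free 0 _ _ ((S.sh_zero _).trans h2)
  exact eq_neg_of_add_eq_zero_left this.symm
theorem A_cyc (x y z : Q) : S.A x y z + S.A y z x + S.A z x y = 0 := by
  have h1 := S.assoc x y z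
  rw [S.add_comm x (S.add y z), S.assoc y z x, S.add_comm y (S.add z x), S.assoc z x y, S.add_comm z,
    ← S.sh_add, ← S.sh_add] at h1
  have := S.sh_free 0 _ _ ((S.sh_zero _).trans h1)
  rw [this, _root_.add_assoc]
theorem A_add1 (x w y z : Q) : S.A (S.add x w) y z = S.A x y z + S.A w y z := by
  rw [S.A_swap, S.A_add3, S.A_swap x y z, S.A_swap w y z]; abel
theorem A_add2 (x y w z : Q) : S.A x (S.add y w) z = S.A x y z + S.A x w z := by
  have h1 := fun y => eq_neg_of_add_eq_zero_left ((_root_.add_assoc _ _ _).symm.trans (S.A_cyc x y z))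
  rw [h1, h1 y, h1 w, S.A_add1, S.A_add3]; abel
theorem A_12 (x y z : Q) : S.A y x z = - S.A x y z := by
  have := S.A_xxz (S.add x y) z
  rw [S.A_add1, S.A_add2, S.A_add2, S.A_xxz, S.A_xxz] at this
  simp only [_root_.zero_add, _root_.add_zero] at this
  exact eq_neg_of_add_eq_zero_right this
theorem A_xyx (x y : Q) : S.A x y x = 0 := by
  have := S.A_swap x y x
  have h3 := S.A3 x y x
  have : S.A x y x = 3 • S.A x y x - (S.A x y x + S.A x y x) := by
    rw [succ_nsmul, two_nsmul]; abel
  rw [this, h3]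
  nth_rewrite 1 [S.A_swap x y x]
  abel
theorem A_23 (x y z : Q) : S.A x z y = - S.A x y z := by
  rw [S.A_12 z x y, S.A_swap y x z, S.A_12 x y z, neg_neg]
theorem A_xyy (x y : Q) : S.A x y y = 0 := by
  rw [S.A_swap, S.A_xxz, neg_zero]
theorem A_sh1 (m : Z) (x y z : Q) : S.A (S.sh m x) y z = S.A x y z := by
  have h1 := S.assoc (S.sh m x) y z
  rw [S.sh_ad, S.sh_ad, S.sh_ad, S.assoc x y z, ← S.sh_add, ← S.sh_add] at h1
  have := S.sh_free _ _ _ h1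
  rw [_root_.add_comm] at this
  exact (add_right_cancel this).symm
theorem A_e (y z : Q) : S.A S.e y z = 0 := by
  have := S.A_add1 S.e S.e y z
  rw [S.add_zero] at this
  simpa using this
theorem A_c (m : Z) (y z : Q) : S.A (S.sh m S.e) y z = 0 := by rw [S.A_sh1, S.A_e]
theorem A_ng (x y z : Q) : S.A (S.ng x) y z = - S.A x y z := by
  have := S.A_add1 (S.ng x) x y z
  rw [S.ad_ng, S.A_e] at this
  exact eq_neg_of_add_eq_zero_left this.symm

theorem med (w x y z : Q) : S.add (S.add w x) (S.add y z) =
    S.sh (- S.A w x y + S.A w x z - S.A w y z + S.A x y z) (S.add (S.add w y) (S.add x z)) := by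
  have k1 := S.sh_move (S.assoc x y z)
  have k2 := S.assoc y x z
  rw [S.add_comm y x] at k2
  have k3 := S.sh_move (S.assoc w y (S.add x z))
  rw [S.assoc, k1, k2, S.ad_sh, S.ad_sh, k3, ← S.sh_add, ← S.sh_add, ← S.sh_add]
  congr 1
  rw [S.A_add3, S.A_add3, S.A_12 x y z, S.A_23 w x y]
  have h1 := S.A3 x y z
  have h2 := S.A3 w x y
  linear_combination (norm := module) h2 - h1

theorem medial_of (H : ∀ x y z, S.A x y z = 0) (x y u v : Q) :
    mul (mul x y) (mul u v) = mul (mul x u) (mul y v) := by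
  simp only [S.mul_form, S.n_sh, S.t_sh, S.sh_ad, S.ad_sh, S.sh_ng, S.ng_ad, S.ng_ng, S.n_ng, S.t_ng,
    S.n_ad, S.t_ad, ← S.sh_add]
  rw [S.med x y u v]
  simp only [H, ← S.sh_add]
  congr 1
  simp only [map_add, map_sub, S.nt]
  module
end CL
end HQ

namespace HQ

theorem mod3 {Z : Type*} [AddCommGroup Z] {a : Z} (h3 : 3 • a = 0) (h0 : a ≠ 0) (k : ℤ) :
    k • a = 0 ↔ 3 ∣ k := by
  have : addOrderOf a = 3 := addOrderOf_eq_prime h3 h0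
  rw [← addOrderOf_dvd_iff_zsmul_eq_zero, this]; rfl

theorem mult3 {Z : Type*} [AddCommGroup Z] {a : Z} (h3 : 3 • a = 0) (k : ℤ) :
    k • a = 0 ∨ k • a = a ∨ k • a = -a := by
  have h3' : (3 : ℤ) • a = 0 := by exact_mod_cast h3
  obtain ⟨m, hm⟩ : ∃ m, k = 3 * m ∨ k = 3 * m + 1 ∨ k = 3 * m - 1 := by
    have : k % 3 = 0 ∨ k % 3 = 1 ∨ k % 3 = 2 := by omega
    rcases this with h | h | h
    · exact ⟨k / 3, by omega⟩
    · exact ⟨k / 3, by omega⟩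
    · exact ⟨k / 3 + 1, by omega⟩
  have e1 : (3 * m) • a = 0 := by rw [mul_comm, mul_smul, h3', smul_zero]
  rcases hm with rfl | rfl | rfl
  · left; exact e1
  · right; left; rw [add_smul, e1]; simp
  · right; right; rw [sub_smul, e1]; simp

theorem card_hom {G H : Type*} [AddCommGroup G] [AddCommGroup H] (f : G →+ H) :
    Nat.card G = Nat.card f.range * Nat.card f.ker := by
  rw [← AddSubgroup.card_mul_index f.ker, AddSubgroup.index_ker, mul_comm]

namespace CL
variable {Q Z : Type*} {mul : Q → Q → Q} [AddCommGroup Z] (S : CL mul Z)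

structure Hm {H : Type*} [AddCommGroup H] (F : Q → H) : Prop where
  ad : ∀ x y, F (S.add x y) = F x + F y

variable {S} in
theorem Hm.e {H : Type*} [AddCommGroup H] {F : Q → H} (hF : S.Hm F) : F S.e = 0 := by
  have := hF.ad S.e S.e
  rw [S.add_zero] at this
  simpa using this
variable {S} in
theorem Hm.ng {H : Type*} [AddCommGroup H] {F : Q → H} (hF : S.Hm F) (x) : F (S.ng x) = - F x := by
  have := hF.ad (S.ng x) x
  rw [S.ad_ng, hF.e] at this
  exact eq_neg_of_add_eq_zero_left this.symm

def rng {H : Type*} [AddCommGroup H] {F : Q → H} (hF : S.Hm F) : AddSubgroup H where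
  carrier := Set.range F
  add_mem' := by rintro _ _ ⟨x, rfl⟩ ⟨y, rfl⟩; exact ⟨_, hF.ad x y⟩
  zero_mem' := ⟨_, hF.e⟩
  neg_mem' := by rintro _ ⟨x, rfl⟩; exact ⟨_, hF.ng x⟩

theorem card_loop {H : Type*} [AddCommGroup H] {F : Q → H} (hF : S.Hm F) :
    Nat.card Q = Nat.card (S.rng hF) * Nat.card {x // F x = 0} := by
  rw [← Nat.card_prod]
  choose s hs using fun r : S.rng hF => r.2
  refine (Nat.card_congr (Equiv.ofBijective (fun p : S.rng hF × {x // F x = 0} => S.add (s p.1) p.2) ⟨?_, ?_⟩)).symm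
  · rintro ⟨r, k, hk⟩ ⟨r', k', hk'⟩ H
    dsimp only at H
    have h1 := congrArg F H
    rw [hF.ad, hF.ad, hs, hs, hk, hk', _root_.add_zero, _root_.add_zero] at h1
    have h1 := Subtype.ext h1
    subst h1
    have := S.add_cancel H
    subst this
    rfl
  · intro x
    refine ⟨⟨⟨F x, x, rfl⟩, S.add (S.ng (s ⟨F x, x, rfl⟩)) x, ?_⟩, ?_⟩
    · rw [hF.ad, hF.ng, hs]; simp
    · have := S.neg_add (S.ng (s ⟨F x, x, rfl⟩)) x
      rwa [S.ng_ng] at this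

/-- central kernels -/
theorem card_ker (p : Q → Prop) (hp : ∀ x, p x → ∃ z, x = S.sh z S.e) :
    Nat.card {x // p x} = Nat.card {z // p (S.sh z S.e)} := by
  refine (Nat.card_congr (Equiv.ofBijective (fun z : {z // p (S.sh z S.e)} => (⟨S.sh z S.e, z.2⟩ : {x // p x})) ⟨?_, ?_⟩)).symm
  · intro z w H
    exact Subtype.ext (S.sh_free _ _ _ (congrArg Subtype.val H))
  · rintro ⟨x, hx⟩
    obtain ⟨z, rfl⟩ := hp x hx
    exact ⟨⟨z, hx⟩, rfl⟩

theorem HmA : S.Hm S.A := ⟨fun x y => by funext u v; exact S.A_add1 x y u v⟩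
theorem HmP : S.Hm (fun x => (S.t x, S.n x)) := ⟨fun x y => by simp [S.t_ad, S.n_ad]⟩

theorem card_V : Nat.card Q = Nat.card (S.rng S.HmA) * Nat.card Z := by
  rw [S.card_loop S.HmA, S.card_ker (fun x => S.A x = 0)]
  · congr 1
    refine Nat.card_congr (Equiv.subtypeUnivEquiv ?_)
    intro z
    funext y w
    exact S.A_c z y w
  · intro x hx
    exact S.central x fun y z => by rw [hx]; rfl

def trip (x y z : Q) : Fin 3 × Fin 3 × Fin 3 → S.rng S.HmA := fun p =>
  (p.1 : ℕ) • ⟨S.A x, x, rfl⟩ + (p.2.1 : ℕ) • ⟨S.A y, y, rfl⟩ + (p.2.2 : ℕ) • ⟨S.A z, z, rfl⟩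

theorem trip_app (x y z : Q) (p) (u v : Q) : (S.trip x y z p : Q → Q → Z) u v = 
    (p.1 : ℕ) • S.A x u v + (p.2.1 : ℕ) • S.A y u v + (p.2.2 : ℕ) • S.A z u v := by
  simp [trip]

theorem fin3 {a : Z} (h3 : 3 • a = 0) (h0 : a ≠ 0) (i j : Fin 3) (H : (i : ℕ) • a = (j : ℕ) • a) : i = j := by
  have := (mod3 h3 h0 ((i : ℕ) - (j : ℕ) : ℤ)).1 (by rw [sub_smul]; simpa [sub_eq_zero] using H)
  omega

theorem trip_inj (x y z : Q) (h0 : S.A x y z ≠ 0) : Function.Injective (S.trip x y z) := by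
  have h3 := S.A3 x y z
  have e1 := S.A_12 x y z
  have e2 : S.A z x y = S.A x y z := by rw [S.A_12 x z y, S.A_23, neg_neg]
  have e3 : S.A y z x = S.A x y z := by rw [S.A_23 y x z, S.A_12, neg_neg]
  rintro ⟨i, j, k⟩ ⟨i', j', k'⟩ H
  have H' := fun u v => (S.trip_app x y z _ u v).symm.trans ((congrArg (fun q => (q : S.rng S.HmA).1 u v) H).trans (S.trip_app x y z _ u v))
  have h1 := H' y z
  have h2 := H' z x
  have h4 := H' x y
  simp only [S.A_xyx, S.A_xxz, S.A_xyy, smul_zero, _root_.add_zero, _root_.zero_add, e2, e3] at h1 h2 h4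
  rw [fin3 h3 h0 _ _ h1, fin3 h3 h0 _ _ h2, fin3 h3 h0 _ _ h4]

end CL
end HQ

namespace HQ
namespace CL
variable {Q Z : Type*} {mul : Q → Q → Q} [AddCommGroup Z] (S : CL mul Z)

theorem bot_central (x : Q) (ht : S.t x = 0) (hn : S.n x = 0) (y z : Q) : S.A x y z = 0 := by
  have := S.ham ⊥ (by simp) x (by simpa using ht) (by simpa using hn) y z
  simpa using this

theorem card_P : Nat.card Q = Nat.card (S.rng S.HmP) * Nat.card {z : Z // 3 • z = 0 ∧ S.nZ z = 0} := by
  rw [S.card_loop S.HmP, S.card_ker]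
  · congr 1
    refine Nat.card_congr (Equiv.subtypeEquivRight ?_)
    intro z
    simp [S.t_sh, S.n_sh, S.t_e, S.n_e]
  · intro x hx
    simp only [Prod.mk_eq_zero] at hx
    exact S.central x (S.bot_central x hx.1 hx.2)

theorem case9 (h3 : ∀ z : Z, 3 • z = 0) (hn : ∀ z : Z, S.nZ z = 0)
    (hs : ∀ u v : Z, ∃ x, S.t x = u ∧ S.n x = v) (x y z : Q) : S.A x y z = 0 := by
  have congr1 : ∀ p q, S.t p = S.t q → S.n p = S.n q → ∀ u v, S.A p u v = S.A q u v := by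
    intro p q h1 h2 u v
    have := S.bot_central (S.add (S.ng p) q) (by rw [S.t_ad, S.t_ng, h1]; simp)
      (by rw [S.n_ad, S.n_ng, h2]; simp) u v
    rw [S.A_add1, S.A_ng] at this
    exact (neg_add_eq_zero.1 this)
  have gen : ∀ z a : Z, a ∈ AddSubgroup.zmultiples z → a ≠ 0 → z = a ∨ z = -a := by
    intro z a ha h0
    obtain ⟨k, rfl⟩ := AddSubgroup.mem_zmultiples_iff.1 ha
    rcases mult3 (h3 z) k with h | h | h
    · exact absurd h h0
    · left; exact h.symm
    · right; rw [h, neg_neg]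
  have inv : ∀ B : AddSubgroup Z, ∀ z ∈ B, S.nZ z ∈ B := by
    intro B z hz; rw [hn]; exact zero_mem _
  have pair0 : ∀ p q, S.n p = 0 → S.n q = 0 → ∀ r, S.A p q r = 0 := by
    intro p q hp hq r
    by_contra hA
    have m1 := S.ham (AddSubgroup.zmultiples (S.t p)) (inv _) p (AddSubgroup.mem_zmultiples _)
      (by rw [hp]; exact zero_mem _) q r
    have m2 := S.ham (AddSubgroup.zmultiples (S.t q)) (inv _) q (AddSubgroup.mem_zmultiples _)
      (by rw [hq]; exact zero_mem _) p r
    rw [S.A_12, neg_mem_iff] at m2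
    have g1 := gen _ _ m1 hA
    have g2 := gen _ _ m2 hA
    have : S.t p = S.t q ∨ S.t p = S.t (S.ng q) := by
      rw [S.t_ng]
      rcases g1 with g1 | g1 <;> rcases g2 with g2 | g2 <;> simp [g1, g2]
    rcases this with h | h
    · exact hA ((congr1 p q h (by rw [hp, hq]) q r).trans (S.A_xxz q r))
    · refine hA ((congr1 p _ h (by rw [hp, S.n_ng, hq, neg_zero]) q r).trans ?_)
      rw [S.A_ng, S.A_xxz, neg_zero]
  have pair1 : ∀ p q, S.t p = 0 → S.t q = 0 → ∀ r, S.A p q r = 0 := by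
    intro p q hp hq r
    by_contra hA
    have m1 := S.ham (AddSubgroup.zmultiples (S.n p)) (inv _) p 
      (by rw [hp]; exact zero_mem _) (AddSubgroup.mem_zmultiples _) q r
    have m2 := S.ham (AddSubgroup.zmultiples (S.n q)) (inv _) q
      (by rw [hq]; exact zero_mem _)  (AddSubgroup.mem_zmultiples _) p r
    rw [S.A_12, neg_mem_iff] at m2
    have g1 := gen _ _ m1 hA
    have g2 := gen _ _ m2 hA
    have : S.n p = S.n q ∨ S.n p = S.n (S.ng q) := by
      rw [S.n_ng]
      rcases g1 with g1 | g1 <;> rcases g2 with g2 | g2 <;> simp [g1, g2]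
    rcases this with h | h
    · exact hA ((congr1 p q (by rw [hp, hq]) h q r).trans (S.A_xxz q r))
    · refine hA ((congr1 p _ (by rw [hp, S.t_ng, hq, neg_zero]) h q r).trans ?_)
      rw [S.A_ng, S.A_xxz, neg_zero]
  have dec : ∀ x, ∃ x0 x1, S.n x0 = 0 ∧ S.t x1 = 0 ∧ ∀ u v, S.A x u v = S.A x0 u v + S.A x1 u v := by
    intro x
    obtain ⟨x0, h1, h2⟩ := hs (S.t x) 0
    obtain ⟨x1, h4, h5⟩ := hs 0 (S.n x)
    refine ⟨x0, x1, h2, h4, fun u v => ?_⟩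
    rw [← S.A_add1]
    apply congr1
    · rw [S.t_ad, h1, h4, _root_.add_zero]
    · rw [S.n_ad, h2, h5, _root_.zero_add]
  obtain ⟨x0, x1, a1, a2, a3⟩ := dec x
  obtain ⟨y0, y1, b1, b2, b3⟩ := dec y
  obtain ⟨z0, z1, c1, c2, c3⟩ := dec z
  have b3' : ∀ u v, S.A u y v = S.A u y0 v + S.A u y1 v := by
    intro u v
    rw [S.A_12, b3, S.A_12 u y0, S.A_12 u y1]; abel
  have c3' : ∀ u v, S.A u v z = S.A u v z0 + S.A u v z1 := by
    intro u v
    rw [S.A_swap, c3, S.A_swap u v z0, S.A_swap u v z1]; abel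
  have p13 : ∀ p q, S.n p = 0 → S.n q = 0 → ∀ r, S.A p r q = 0 := by
    intro p q hp hq r
    rw [S.A_23, pair0 p q hp hq, neg_zero]
  have p13' : ∀ p q, S.t p = 0 → S.t q = 0 → ∀ r, S.A p r q = 0 := by
    intro p q hp hq r
    rw [S.A_23, pair1 p q hp hq, neg_zero]
  have p23 : ∀ p q, S.n p = 0 → S.n q = 0 → ∀ r, S.A r p q = 0 := by
    intro p q hp hq r
    rw [S.A_12, p13 p q hp hq, neg_zero]
  have p23' : ∀ p q, S.t p = 0 → S.t q = 0 → ∀ r, S.A r p q = 0 := by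
    intro p q hp hq r
    rw [S.A_12, p13' p q hp hq, neg_zero]
  rw [a3, b3', b3', c3', c3', c3', c3', pair0 x0 y0 a1 b1, pair0 x0 y0 a1 b1, pair1 x1 y1 a2 b2,
    pair1 x1 y1 a2 b2, p13 x0 z0 a1 c1, p13' x1 z1 a2 c2, p23 y0 z0 b1 c1, p23' y1 z1 b2 c2]
  simp

theorem card27 (hQ : Nat.card Q = 729) (hA : ∃ x y z, S.A x y z ≠ 0) :
    Nat.card Z = 27 ∧ Nat.card (S.rng S.HmA) = 27 := by
  obtain ⟨x, y, z, h0⟩ := hA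
  have hV := S.card_V
  rw [hQ] at hV
  have fZ : Finite Z := Nat.finite_of_card_ne_zero (by rintro h; rw [h] at hV; simp at hV)
  have fV : Finite (S.rng S.HmA) := Nat.finite_of_card_ne_zero (by rintro h; rw [h] at hV; simp at hV)
  have hV27 : 27 ≤ Nat.card (S.rng S.HmA) := by
    have := Nat.card_le_card_of_injective _ (S.trip_inj x y z h0)
    simpa [Nat.card_prod] using this
  have hP := S.card_P
  rw [hQ] at hP
  have hR : Nat.card (S.rng S.HmP) ≤ Nat.card Z * Nat.card Z := by
    rw [← Nat.card_prod]
    exact Nat.card_le_card_of_injective _ Subtype.val_injective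
  have hK : Nat.card {z : Z // 3 • z = 0 ∧ S.nZ z = 0} ≤ Nat.card Z :=
    Nat.card_le_card_of_injective _ Subtype.val_injective
  obtain ⟨k, hk, hk'⟩ := (Nat.dvd_prime_pow Nat.prime_three).1 (show Nat.card Z ∣ 3 ^ 6 from ⟨Nat.card (S.rng S.HmA), by rw [mul_comm, ← hV]; rfl⟩)
  rw [hk'] at hV hR hK ⊢
  have hk4 : k = 0 ∨ k = 1 ∨ k = 2 ∨ k = 3 ∨ k = 4 ∨ k = 5 ∨ k = 6 := by omega
  rcases hk4 with rfl | rfl | rfl | rfl | rfl | rfl | rfl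
  · exfalso
    rw [pow_zero, Nat.card_eq_one_iff_unique] at hk'
    have := hk'.1
    exact h0 (Subsingleton.elim _ _)
  · exfalso
    have := Nat.mul_le_mul hR hK
    omega
  · exfalso
    have hR' : Nat.card (S.rng S.HmP) ≤ 81 := by simpa using hR
    have hK' : Nat.card {z : Z // 3 • z = 0 ∧ S.nZ z = 0} ≤ 9 := by simpa using hK
    have e1 : Nat.card (S.rng S.HmP) = 81 := by nlinarith
    have e2 : Nat.card {z : Z // 3 • z = 0 ∧ S.nZ z = 0} = 9 := by nlinarith
    have t1 : S.rng S.HmP = ⊤ := by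
      apply AddSubgroup.eq_top_of_card_eq
      rw [e1, Nat.card_prod, hk']; norm_num
    have t2 : ∀ z : Z, 3 • z = 0 ∧ S.nZ z = 0 := by
      intro z
      have : Function.Bijective (Subtype.val : {z : Z // 3 • z = 0 ∧ S.nZ z = 0} → Z) :=
        (Nat.bijective_iff_injective_and_card _).2 ⟨Subtype.val_injective, by rw [e2, hk']; norm_num⟩
      obtain ⟨w, rfl⟩ := this.2 z
      exact w.2
    refine h0 (S.case9 (fun z => (t2 z).1) (fun z => (t2 z).2) ?_ x y z)
    intro u v
    have : (u, v) ∈ S.rng S.HmP := by rw [t1]; trivial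
    obtain ⟨x, hx⟩ := this
    exact ⟨x, congrArg Prod.fst hx, congrArg Prod.snd hx⟩
  · refine ⟨by norm_num, by omega⟩
  all_goals exfalso; omega

end CL
end HQ

namespace HQ
namespace CL
variable {Q Z : Type*} {mul : Q → Q → Q} [AddCommGroup Z] (S : CL mul Z)

theorem vals (hV : Nat.card (S.rng S.HmA) = 27) {x y z : Q} (h0 : S.A x y z ≠ 0) (w w' w'' : Q) :
    S.A w w' w'' ∈ AddSubgroup.zmultiples (S.A x y z) := by
  set M := AddSubgroup.zmultiples (S.A x y z) with hM
  have fV : Finite (S.rng S.HmA) := Nat.finite_of_card_ne_zero (by rw [hV]; norm_num)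
  have bij : Function.Bijective (S.trip x y z) :=
    (Nat.bijective_iff_injective_and_card _).2 ⟨S.trip_inj x y z h0, by rw [hV]; simp [Nat.card_prod]⟩
  have red : ∀ u v, S.A x u v ∈ M → S.A y u v ∈ M → S.A z u v ∈ M → ∀ w, S.A w u v ∈ M := by
    intro u v h1 h2 h3 w
    obtain ⟨p, hp⟩ := bij.2 ⟨S.A w, w, rfl⟩
    have := S.trip_app x y z p u v
    rw [hp] at this
    change S.A w u v = _ at this
    rw [this]
    exact add_mem (add_mem (nsmul_mem h1 _) (nsmul_mem h2 _)) (nsmul_mem h3 _)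
  have rot : ∀ u v w, S.A v w u = S.A u v w := by
    intro u v w
    rw [S.A_23 v u w, S.A_12, neg_neg]
  have base : S.A x y z ∈ M := AddSubgroup.mem_zmultiples _
  have nbase : S.A y x z ∈ M := by rw [S.A_12]; exact neg_mem base
  have c1 : ∀ w, S.A w y z ∈ M := red y z base (by rw [S.A_xxz]; exact zero_mem _) (by rw [S.A_xyx]; exact zero_mem _)
  have c2 : ∀ w, S.A w x z ∈ M := red x z (by rw [S.A_xxz]; exact zero_mem _) nbase (by rw [S.A_xyx]; exact zero_mem _)
  have c3 : ∀ w, S.A w x y ∈ M := red x y (by rw [S.A_xxz]; exact zero_mem _) 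
    (by rw [S.A_xyx]; exact zero_mem _) (by rw [← rot z x y]; exact base)
  have d3 : ∀ w w', S.A w w' z ∈ M := fun w w' => red w' z 
    (by rw [S.A_12]; exact neg_mem (c2 w')) (by rw [S.A_12]; exact neg_mem (c1 w'))
    (by rw [S.A_xyx]; exact zero_mem _) w
  have d2 : ∀ w w', S.A w w' y ∈ M := fun w w' => red w' y 
    (by rw [S.A_12]; exact neg_mem (c3 w')) (by rw [S.A_xyx]; exact zero_mem _) 
    (by rw [S.A_swap]; exact neg_mem (by rw [S.A_12]; exact neg_mem (c1 w'))) w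
  have d1 : ∀ w w', S.A w w' x ∈ M := fun w w' => red w' x 
    (by rw [S.A_xyx]; exact zero_mem _) 
    (by rw [rot x y w', S.A_23]; exact neg_mem (by rw [S.A_12]; exact neg_mem (c3 w')))
    (by rw [rot x z w', S.A_23]; exact neg_mem (by rw [S.A_12]; exact neg_mem (c2 w'))) w
  refine red _ _ ?_ ?_ ?_ w <;> rw [← rot]
  · exact d1 _ _
  · exact d2 _ _
  · exact d3 _ _

/-- kernel modulo an invariant subgroup -/
def Wb (B : AddSubgroup Z) : AddSubgroup Z where
  carrier := {z | 3 • z ∈ B ∧ S.nZ z ∈ B}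
  add_mem' := by
    rintro a b ⟨h1, h2⟩ ⟨h3, h4⟩
    exact ⟨by rw [smul_add]; exact add_mem h1 h3, by rw [map_add]; exact add_mem h2 h4⟩
  zero_mem' := by simp
  neg_mem' := by
    rintro a ⟨h1, h2⟩
    exact ⟨by rw [smul_neg]; exact neg_mem h1, by rw [map_neg]; exact neg_mem h2⟩

theorem HmB (B : AddSubgroup Z) : S.Hm (fun x => ((S.t x : Z ⧸ B), (S.n x : Z ⧸ B))) :=
  ⟨fun x y => by simp [S.t_ad, S.n_ad]⟩

theorem small_int {Z : Type*} [AddCommGroup Z] {a : Z} (h3 : 3 • a = 0) {B : AddSubgroup Z} (ha : a ∉ B)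
    {c : Z} (hc : c ∈ AddSubgroup.zmultiples a) (hB : c ∈ B) : c = 0 := by
  obtain ⟨k, rfl⟩ := AddSubgroup.mem_zmultiples_iff.1 hc
  rcases mult3 h3 k with h | h | h
  · exact h
  · rw [h] at hB; exact absurd hB ha
  · rw [h] at hB; exact absurd (neg_mem_iff.1 hB) ha

theorem card_B {a : Z} (h3 : 3 • a = 0) (hv : ∀ w w' w'', S.A w w' w'' ∈ AddSubgroup.zmultiples a)
    (B : AddSubgroup Z) (hB : ∀ z ∈ B, S.nZ z ∈ B) (ha : a ∉ B) :
    Nat.card Q = Nat.card (S.rng (S.HmB B)) * Nat.card (S.Wb B) := by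
  rw [S.card_loop (S.HmB B), S.card_ker]
  · congr 1
    refine Nat.card_congr (Equiv.subtypeEquivRight ?_)
    intro z
    simp [S.t_sh, S.n_sh, S.t_e, S.n_e, Wb, ← QuotientAddGroup.mk_nsmul]
  · intro x hx
    simp only [Prod.mk_eq_zero, QuotientAddGroup.eq_zero_iff] at hx
    exact S.central x fun y z => small_int h3 ha (hv _ _ _) (S.ham B hB x hx.1 hx.2 y z)

theorem exists_max [Finite Z] {a : Z} (ha : a ≠ 0) : ∃ B : AddSubgroup Z, (∀ z ∈ B, S.nZ z ∈ B) ∧ a ∉ B ∧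
    ∀ B' : AddSubgroup Z, (∀ z ∈ B', S.nZ z ∈ B') → a ∉ B' → B ≤ B' → B' = B := by
  have := Set.Finite.exists_maximal (s := {B : AddSubgroup Z | (∀ z ∈ B, S.nZ z ∈ B) ∧ a ∉ B}) 
    (Set.toFinite _) ⟨⊥, by simp, by simpa using ha⟩
  obtain ⟨B, ⟨h1, h2⟩, h3⟩ := this
  exact ⟨B, h1, h2, fun B' k1 k2 k3 => le_antisymm (h3 ⟨k1, k2⟩ k3) k3⟩

theorem Wb_card [Finite Z] {a : Z} (h3 : 3 • a = 0) (hna : S.nZ a = 0) 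
    (B : AddSubgroup Z) (hB : ∀ z ∈ B, S.nZ z ∈ B) (ha : a ∉ B)
    (hmax : ∀ B' : AddSubgroup Z, (∀ z ∈ B', S.nZ z ∈ B') → a ∉ B' → B ≤ B' → B' = B) :
    Nat.card (S.Wb B) = 3 * Nat.card B := by
  have ha0 : a ≠ 0 := by rintro rfl; exact ha (zero_mem _)
  have h3' : (3 : ℤ) • a = 0 := by exact_mod_cast h3
  have aW : a ∈ S.Wb B := ⟨by rw [h3]; exact zero_mem _, by rw [hna]; exact zero_mem _⟩
  have BW : B ≤ S.Wb B := fun b hb => ⟨nsmul_mem hb 3, hB b hb⟩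
  have key : ∀ z ∈ S.Wb B, ∃ i : Fin 3, ∃ b ∈ B, z = (i : ℕ) • a + b := by
    intro z hz
    by_cases hzB : z ∈ B
    · exact ⟨0, z, hzB, by simp⟩
    have : a ∈ B ⊔ AddSubgroup.zmultiples z := by
      by_contra hcon
      have := hmax (B ⊔ AddSubgroup.zmultiples z) ?_ hcon le_sup_left
      · apply hzB
        rw [← this]
        exact (le_sup_right : _ ≤ B ⊔ AddSubgroup.zmultiples z) (AddSubgroup.mem_zmultiples z)
      · intro w hw
        obtain ⟨b, hb, c, hc, rfl⟩ := AddSubgroup.mem_sup.1 hw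
        obtain ⟨k, rfl⟩ := AddSubgroup.mem_zmultiples_iff.1 hc
        apply (le_sup_left : B ≤ _)
        rw [map_add, map_zsmul]
        exact add_mem (hB b hb) (zsmul_mem hz.2 k)
    obtain ⟨b, hb, c, hc, hbc⟩ := AddSubgroup.mem_sup.1 this
    obtain ⟨k, rfl⟩ := AddSubgroup.mem_zmultiples_iff.1 hc
    have hz1 : (3 : ℤ) • z ∈ B := by exact_mod_cast hz.1
    have h6 := fun m : ℤ => zsmul_mem hz1 m
    have : k % 3 = 0 ∨ k % 3 = 1 ∨ k % 3 = 2 := by omega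
    rcases this with h | h | h
    · exfalso
      apply ha
      rw [← hbc]
      have : k • z = (k / 3) • ((3 : ℤ) • z) := by rw [smul_smul]; congr 1; omega
      rw [this]
      exact add_mem hb (h6 _)
    · refine ⟨1, -b - (k / 3) • ((3 : ℤ) • z), sub_mem (neg_mem hb) (h6 _), ?_⟩
      have : k = 3 * (k / 3) + 1 := by omega
      generalize k / 3 = m at *
      subst this
      rw [← hbc]
      simp
      module
    · refine ⟨2, -(b + b + (2 * (k / 3) + 1) • ((3 : ℤ) • z)), ?_, ?_⟩
      · exact neg_mem (add_mem (add_mem hb hb) (h6 _))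
      have : k = 3 * (k / 3) + 2 := by omega
      generalize k / 3 = m at *
      subst this
      rw [← hbc]
      simp
      module
  have hc : Nat.card (Fin 3 × B) = 3 * Nat.card B := by rw [Nat.card_prod]; simp
  rw [← hc]
  refine (Nat.card_congr (Equiv.ofBijective (fun p : Fin 3 × B => (⟨(p.1 : ℕ) • a + p.2, 
    add_mem (nsmul_mem aW _) (BW p.2.2)⟩ : S.Wb B)) ⟨?_, ?_⟩)).symm
  · rintro ⟨i, b, hb⟩ ⟨j, c, hc⟩ H
    have H := congrArg Subtype.val H
    dsimp only at H
    have h1 : (((i : ℕ) : ℤ) - (j : ℕ)) • a = c - b := by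
      rw [sub_smul, natCast_zsmul, natCast_zsmul, sub_eq_sub_iff_add_eq_add, H]; abel
    have h2 := small_int h3 ha (AddSubgroup.mem_zmultiples_iff.2 ⟨_, rfl⟩) (h1 ▸ sub_mem hc hb)
    have h4 := (mod3 h3 ha0 _).1 h2
    have : i = j := by omega
    subst this
    have := add_left_cancel H
    subst this
    rfl
  · rintro ⟨z, hz⟩
    obtain ⟨i, b, hb, rfl⟩ := key z hz
    exact ⟨⟨i, b, hb⟩, rfl⟩

end CL
end HQ

namespace HQ
namespace CL
variable {Q Z : Type*} {mul : Q → Q → Q} [AddCommGroup Z] (S : CL mul Z)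

def dif : Z × Z →+ Z where
  toFun p := S.nZ p.1 - 3 • p.2
  map_zero' := by simp
  map_add' p q := by simp only [Prod.fst_add, Prod.snd_add, map_add, smul_add]; abel

def dia : Z →+ Z × Z where
  toFun z := (3 • z, S.nZ z)
  map_zero' := by simp
  map_add' p q := by simp

theorem gens (hQ : Nat.card Q = 729) (hA : ∃ x y z, S.A x y z ≠ 0) :
    ∃ (a u v : Z) (e0 e1 e2 : Q), a ≠ 0 ∧ 3 • a = 0 ∧ 3 • v = a ∧ S.nZ v = 0 ∧ 3 • u = 0 ∧ S.nZ u = a ∧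
      S.t e0 = v ∧ S.n e0 = 0 ∧ S.t e1 = u ∧ S.n e1 = v ∧ S.t e2 = 0 ∧ S.n e2 = u ∧ S.nZ a = 0 ∧
      ∀ w w' w'', S.A w w' w'' ∈ AddSubgroup.zmultiples a := by
  obtain ⟨hZ, hV⟩ := S.card27 hQ hA
  obtain ⟨x, y, z, h0⟩ := hA
  have fZ : Finite Z := Nat.finite_of_card_ne_zero (by rw [hZ]; norm_num)
  have hv := S.vals hV h0
  have h3 := S.A3 x y z
  have hna := S.nA x y z
  generalize S.A x y z = a at h0 hv h3 hna
  obtain ⟨B, hB, ha, hmax⟩ := S.exists_max h0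
  have hW := S.Wb_card h3 hna B hB ha hmax
  have hc := S.card_B h3 hv B hB ha
  have hq : 27 = Nat.card (Z ⧸ B) * Nat.card B := by
    rw [← hZ]; exact AddSubgroup.card_eq_card_quotient_mul_card_addSubgroup B
  have hR : Nat.card (S.rng (S.HmB B)) ≤ Nat.card (Z ⧸ B) * Nat.card (Z ⧸ B) := by
    rw [← Nat.card_prod]
    exact Nat.card_le_card_of_injective _ Subtype.val_injective
  rw [hQ, hW] at hc
  have hB1 : Nat.card B = 1 := by
    obtain ⟨k, hk, hk'⟩ := (Nat.dvd_prime_pow Nat.prime_three).1 (show Nat.card B ∣ 3 ^ 3 from ⟨Nat.card (Z ⧸ B), by rw [mul_comm, ← hq]; rfl⟩)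
    have hk4 : k = 0 ∨ k = 1 ∨ k = 2 ∨ k = 3 := by omega
    rcases hk4 with rfl | rfl | rfl | rfl
    · exact hk'
    · exfalso
      rw [hk'] at hq hc hW
      have e1 : Nat.card (Z ⧸ B) = 9 := by omega
      have e2 : Nat.card (S.rng (S.HmB B)) = 81 := by omega
      have t1 : S.rng (S.HmB B) = ⊤ := by
        apply AddSubgroup.eq_top_of_card_eq
        rw [e2, Nat.card_prod, e1]
      have hs : ∀ u v : Z, ∃ x, u - S.t x ∈ B ∧ v - S.n x ∈ B := by
        intro u v
        have : ((u : Z ⧸ B), (v : Z ⧸ B)) ∈ S.rng (S.HmB B) := by rw [t1]; trivial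
        obtain ⟨x, hx⟩ := this
        refine ⟨x, ?_, ?_⟩
        · have := congrArg Prod.fst hx
          rw [← neg_add_eq_sub]
          exact QuotientAddGroup.eq.1 this
        · have := congrArg Prod.snd hx
          rw [← neg_add_eq_sub]
          exact QuotientAddGroup.eq.1 this
      have : S.Wb B = ⊤ := by
        rw [eq_top_iff]
        intro z _
        constructor
        · obtain ⟨x, h1, h2⟩ := hs 0 z
          have h4 := nsmul_mem h2 3
          rw [smul_sub, ← S.nt] at h4
          have h5 := hB _ h1
          rw [zero_sub, map_neg] at h5
          have := sub_mem h4 h5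
          simpa using this
        · obtain ⟨x, h1, h2⟩ := hs z 0
          have h4 := nsmul_mem h2 3
          rw [zero_sub, smul_neg, ← S.nt] at h4
          have h5 := hB _ h1
          rw [map_sub] at h5
          have := sub_mem h5 h4
          simpa using this
      rw [this, AddSubgroup.card_top, hZ] at hW
      norm_num at hW
    · exfalso
      rw [hk'] at hq hc
      have e1 : Nat.card (Z ⧸ B) = 3 := by omega
      rw [e1] at hR
      omega
    · exfalso
      rw [hk'] at hq hc
      have e1 : Nat.card (Z ⧸ B) = 1 := by omega
      rw [e1] at hR
      omega
  have hbot : B = ⊥ := (AddSubgroup.card_eq_one).1 hB1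
  subst hbot
  rw [hB1, mul_one] at hW
  have hWm : ∀ z, z ∈ S.Wb ⊥ ↔ 3 • z = 0 ∧ S.nZ z = 0 := fun z => Iff.rfl
  have hP := S.card_P
  have hW' : Nat.card {z : Z // 3 • z = 0 ∧ S.nZ z = 0} = 3 := hW
  rw [hQ, hW'] at hP
  have hP1 : Nat.card (S.rng S.HmP) = 243 := by omega
  have hle : S.rng S.HmP ≤ S.dif.ker := by
    rintro _ ⟨x, rfl⟩
    rw [AddMonoidHom.mem_ker]
    change S.nZ (S.t x) - 3 • S.n x = 0
    rw [S.nt, sub_self]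
  have hd := card_hom S.dif
  rw [Nat.card_prod, hZ] at hd
  have hdr : S.dif.range ≠ ⊥ := by
    intro H
    have hz : ∀ p, S.dif p = 0 := by
      intro p
      have : S.dif p ∈ S.dif.range := ⟨p, rfl⟩
      rw [H] at this
      simpa using this
    have : S.Wb ⊥ = ⊤ := by
      rw [eq_top_iff]
      intro z _
      rw [hWm]
      constructor
      · have := hz (0, z)
        simpa [dif] using this
      · have := hz (z, 0)
        simpa [dif] using this
    rw [this, AddSubgroup.card_top, hZ] at hW
    norm_num at hW
  have har : a ∈ S.dif.range := by
    by_contra hcon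
    apply hdr
    refine hmax _ ?_ hcon bot_le
    rintro _ ⟨⟨p, q⟩, rfl⟩
    refine ⟨(S.nZ p, S.nZ q), ?_⟩
    simp [dif]
  have hk243 : 243 ∣ Nat.card S.dif.ker := by
    rw [← hP1]
    exact AddSubgroup.card_dvd_of_le hle
  obtain ⟨m, hm⟩ := hk243
  have hdr3 : Nat.card S.dif.range * m = 3 := by
    rw [hm] at hd
    have : 27 * 27 = 243 * (Nat.card S.dif.range * m) := by rw [hd]; ring
    omega
  have hr1 : Nat.card S.dif.range ≠ 1 := fun H => hdr (AddSubgroup.card_eq_one.1 H)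
  have hr3 : Nat.card S.dif.range = 3 := by
    rcases (Nat.dvd_prime Nat.prime_three).1 ⟨m, hdr3.symm⟩ with h | h
    · exact absurd h hr1
    · exact h
  have hm1 : m = 1 := by rw [hr3] at hdr3; omega
  rw [hm1] at hm
  have hker : S.rng S.HmP = S.dif.ker :=
    AddSubgroup.eq_of_le_of_card_ge hle (by rw [hP1, hm])
  have ord : Nat.card (AddSubgroup.zmultiples a) = 3 := by
    rw [Nat.card_zmultiples]
    exact addOrderOf_eq_prime h3 h0
  have hrz : AddSubgroup.zmultiples a = S.dif.range :=
    AddSubgroup.eq_of_le_of_card_ge (by rw [AddSubgroup.zmultiples_le]; exact har) (by rw [ord, hr3])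
  have hdia := card_hom S.dia
  have hdk : Nat.card S.dia.ker = 3 := by
    rw [← hW]
    refine Nat.card_congr (Equiv.subtypeEquivRight ?_)
    intro z
    rw [hWm, AddMonoidHom.mem_ker]
    simp [dia]
  rw [hZ, hdk] at hdia
  have hdr9 : S.dia.range = (AddSubgroup.zmultiples a).prod (AddSubgroup.zmultiples a) := by
    apply AddSubgroup.eq_of_le_of_card_ge
    · rintro _ ⟨z, rfl⟩
      rw [AddSubgroup.mem_prod, hrz]
      constructor
      · refine ⟨(0, -z), ?_⟩
        simp [dif, dia]
      · refine ⟨(z, 0), ?_⟩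
        simp [dif, dia]
    · rw [Nat.card_congr (AddSubgroup.prodEquiv _ _).toEquiv, Nat.card_prod, ord]; omega
  have hma : a ∈ AddSubgroup.zmultiples a := AddSubgroup.mem_zmultiples a
  obtain ⟨v, hv1⟩ : (a, (0 : Z)) ∈ S.dia.range := by
    rw [hdr9]; exact ⟨hma, zero_mem _⟩
  obtain ⟨u, hu1⟩ : ((0 : Z), a) ∈ S.dia.range := by
    rw [hdr9]; exact ⟨zero_mem _, hma⟩
  have v3 : 3 • v = a := congrArg Prod.fst hv1
  have nv : S.nZ v = 0 := congrArg Prod.snd hv1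
  have u3 : 3 • u = 0 := congrArg Prod.fst hu1
  have nu : S.nZ u = a := congrArg Prod.snd hu1
  have get : ∀ p q : Z, S.nZ p = 3 • q → ∃ x, S.t x = p ∧ S.n x = q := by
    intro p q H
    have : (p, q) ∈ S.rng S.HmP := by
      rw [hker, AddMonoidHom.mem_ker]
      simp [dif, H]
    obtain ⟨x, hx⟩ := this
    exact ⟨x, congrArg Prod.fst hx, congrArg Prod.snd hx⟩
  obtain ⟨e0, p0, q0⟩ := get v 0 (by rw [nv, smul_zero])
  obtain ⟨e1, p1, q1⟩ := get u v (by rw [nu, v3])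
  obtain ⟨e2, p2, q2⟩ := get 0 u (by rw [map_zero, u3])
  exact ⟨a, u, v, e0, e1, e2, h0, h3, v3, nv, u3, nu, p0, q0, p1, q1, p2, q2, hna, hv⟩

end CL
end HQ

namespace HQ
namespace CL
variable {Q Z : Type*} {mul : Q → Q → Q} [AddCommGroup Z] (S : CL mul Z)

/-- natural multiples -/
def nm : ℕ → Q → Q
  | 0, _ => S.e
  | k + 1, x => S.add (nm k x) x

theorem Hm.nm {S : CL mul Z} {H : Type*} [AddCommGroup H] {F : Q → H} (hF : S.Hm F) (k : ℕ) (x : Q) :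
    F (S.nm k x) = k • F x := by
  induction k with
  | zero => rw [CL.nm, hF.e, zero_smul]
  | succ k ih => rw [CL.nm, hF.ad, ih, succ_nsmul]

theorem A_nm1 (k : ℕ) (x y z : Q) : S.A (S.nm k x) y z = k • S.A x y z := by
  have := congrFun (congrFun (S.HmA.nm k x) y) z
  exact this
theorem A_nm2 (k : ℕ) (x y z : Q) : S.A x (S.nm k y) z = k • S.A x y z := by
  rw [S.A_12, S.A_nm1, S.A_12 x y z, smul_neg, neg_neg]
theorem A_nm3 (k : ℕ) (x y z : Q) : S.A x y (S.nm k z) = k • S.A x y z := by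
  rw [S.A_swap, S.A_nm1, S.A_swap x y z, smul_neg, neg_neg]
theorem t_nm (k : ℕ) (x : Q) : S.t (S.nm k x) = k • S.t x := (Hm.mk S.t_ad : S.Hm S.t).nm k x
theorem n_nm (k : ℕ) (x : Q) : S.n (S.nm k x) = k • S.n x := (Hm.mk S.n_ad : S.Hm S.n).nm k x

theorem nm_add (k l : ℕ) (x : Q) : S.add (S.nm k x) (S.nm l x) = S.nm (k + l) x := by
  induction l with
  | zero => exact S.add_zero _
  | succ l ih =>
    have := S.assoc (S.nm k x) (S.nm l x) x
    rw [S.A_nm1, S.A_nm2, S.A_xxz, smul_zero, smul_zero, S.sh_zero, ih] at this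
    exact this.symm

theorem nm_three (x : Q) : S.nm 3 x = S.sh (S.t x) S.e := by
  change S.add (S.add (S.add S.e x) x) x = _
  rw [S.zero_add, S.dbl, S.sh_ad, S.ad_ng]

theorem nm_per (k s : ℕ) (x : Q) : S.nm (k + 3 * s) x = S.sh (s • S.t x) (S.nm k x) := by
  induction s with
  | zero => rw [zero_smul, S.sh_zero]; rfl
  | succ s ih =>
    rw [Nat.mul_succ, ← Nat.add_assoc, ← S.nm_add, ih, S.nm_three, S.ad_sh, S.add_zero, ← S.sh_add,
      succ_nsmul, _root_.add_comm]

variable (e0 e1 e2 : Q)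
def E (i j k : ℕ) : Q := S.add (S.add (S.nm i e0) (S.nm j e1)) (S.nm k e2)

theorem E_add (i j k i' j' k' : ℕ) : S.add (S.E e0 e1 e2 i j k) (S.E e0 e1 e2 i' j' k') =
    S.sh ((((i : ℤ) * j' - j * i') * (k - k')) • S.A e0 e1 e2) (S.E e0 e1 e2 (i + i') (j + j') (k + k')) := by
  unfold E
  rw [S.med]
  have h1 := S.med (S.nm i e0) (S.nm j e1) (S.nm i' e0) (S.nm j' e1)
  simp only [S.A_nm1, S.A_nm2, S.A_nm3, S.A_xyx, S.A_xxz, S.A_xyy, smul_zero, neg_zero, sub_zero, 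
    _root_.add_zero, S.sh_zero, S.nm_add] at h1
  rw [h1, S.nm_add]
  congr 1
  simp only [S.A_add1, S.A_add2, S.A_add3, S.A_nm1, S.A_nm2, S.A_nm3, S.A_xyx, S.A_xxz, S.A_xyy, smul_zero]
  rw [S.A_23 e0 e1 e2, S.A_12 e0 e1 e2]
  have : S.A e1 e2 e0 = S.A e0 e1 e2 := by rw [S.A_23, S.A_12, neg_neg]
  rw [this]
  module

theorem E_t (i j k : ℕ) : S.t (S.E e0 e1 e2 i j k) = i • S.t e0 + j • S.t e1 + k • S.t e2 := by
  simp only [E, S.t_ad, S.t_nm]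
theorem E_n (i j k : ℕ) : S.n (S.E e0 e1 e2 i j k) = i • S.n e0 + j • S.n e1 + k • S.n e2 := by
  simp only [E, S.n_ad, S.n_nm]

theorem E_per (i j k p q r : ℕ) : S.E e0 e1 e2 (i + 3 * p) (j + 3 * q) (k + 3 * r) =
    S.sh (p • S.t e0 + q • S.t e1 + r • S.t e2) (S.E e0 e1 e2 i j k) := by
  unfold E
  simp only [S.nm_per, S.sh_ad, S.ad_sh, ← S.sh_add]

theorem ng_dbl (x : Q) : S.ng x = S.sh (- S.t x) (S.add x x) := S.sh_move (S.dbl x)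

theorem E_mul (i j k i' j' k' : ℕ) : mul (S.E e0 e1 e2 i j k) (S.E e0 e1 e2 i' j' k') =
    S.sh (-((((i : ℤ) * j' - j * i') * (k - k')) • S.A e0 e1 e2) + 
      (i • S.n e0 + j • S.n e1 + k • S.n e2) + (i' • S.t e0 + j' • S.t e1 + k' • S.t e2)
      - (i' • S.n e0 + j' • S.n e1 + k' • S.n e2) -
      ((i + i') • S.t e0 + (j + j') • S.t e1 + (k + k') • S.t e2))
      (S.E e0 e1 e2 (2 * (i + i')) (2 * (j + j')) (2 * (k + k'))) := by
  rw [S.mul_form, S.E_add, S.sh_ng, S.ng_dbl, S.E_add, ← S.sh_add, ← S.sh_add, ← S.sh_add, E_n, E_n, E_t, E_t,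
    ← two_mul, ← two_mul, ← two_mul]
  congr 1
  simp only [sub_self, mul_zero, zero_smul]
  module

theorem E_mul' {a u v : Z} (va : 3 • v = a) (a3 : 3 • a = 0) (u3 : 3 • u = 0) 
    (t0 : S.t e0 = v) (n0 : S.n e0 = 0) (t1 : S.t e1 = u) (n1 : S.n e1 = v) (t2 : S.t e2 = 0) (n2 : S.n e2 = u)
    (ε : ℕ) (hε : S.A e0 e1 e2 = ε • a) (i j k i' j' k' : ℕ) :
    mul (S.E e0 e1 e2 i j k) (S.E e0 e1 e2 i' j' k') = S.E e0 e1 e2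
      (26 * i + 3 * j + 2 * i' + 24 * j' + 9 * ε * (2 * i * k * j' + i * j' * k' + j * k * i' + 2 * j * i' * k'))
      (8 * j + 3 * k + 2 * j' + 6 * k') (2 * k + 2 * k') := by
  have r1 : 26 * i + 3 * j + 2 * i' + 24 * j' + 9 * ε * (2 * i * k * j' + i * j' * k' + j * k * i' + 2 * j * i' * k')
    = 2 * (i + i') + 3 * (8 * i + j + 8 * j' + 3 * ε * (2 * i * k * j' + i * j' * k' + j * k * i' + 2 * j * i' * k')) := by ring
  have r2 : 8 * j + 3 * k + 2 * j' + 6 * k' = 2 * (j + j') + 3 * (2 * j + k + 2 * k') := by ring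
  have r3 : 2 * k + 2 * k' = 2 * (k + k') + 3 * 0 := by ring
  rw [S.E_mul, r1, r2, r3, S.E_per, hε, t0, n0, t1, n1, t2, n2]
  congr 1
  subst va
  have a3' : (9 : ℤ) • v = 0 := by
    have : (9 : ℤ) • v = 3 • 3 • v := by module
    rw [this, a3]
  have u3' : (3 : ℤ) • u = 0 := by exact_mod_cast u3
  have hb : ∀ p q : ℤ, ∀ p' q' : ℤ, (∃ m, p - p' = 9 * m) → (∃ m, q - q' = 3 * m) →
      p • v + q • u = p' • v + q' • u := by
    rintro p q p' q' ⟨m, hm⟩ ⟨m', hm'⟩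
    have : p • v + q • u = p' • v + q' • u + m • ((9 : ℤ) • v) + m' • ((3 : ℤ) • u) := by
      have e1 : p = p' + 9 * m := by linarith
      have e2 : q = q' + 3 * m' := by linarith
      rw [e1, e2]; module
    rw [this, a3', u3']; simp
  have key := hb (-(((i : ℤ) * j' - j * i') * (k - k') * (ε * 3)) + j + i' - j' - (i + i')) 
    (k + j' - k' - (j + j'))
    (8 * i + j + 8 * j' + 3 * ε * (2 * i * k * j' + i * j' * k' + j * k * i' + 2 * j * i' * k'))
    (2 * j + k + 2 * k')
    ⟨-i - j' - ε * (i * j' * k + j * i' * k'), by ring⟩ ⟨-j - k', by ring⟩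
  refine Eq.trans ?_ (key.trans ?_)
  · module
  · module

end CL
end HQ

namespace HQ

theorem uv_indep {Z : Type*} [AddCommGroup Z] (nZ : Z →+ Z) {a u v : Z} (a0 : a ≠ 0) (a3 : 3 • a = 0)
    (va : 3 • v = a) (nv : nZ v = 0) (u3 : 3 • u = 0) (nu : nZ u = a) (p q : ℤ) (H : p • v + q • u = 0) :
    9 ∣ p ∧ 3 ∣ q := by
  have hq : 3 ∣ q := by
    have := congrArg nZ H
    rw [map_add, map_zsmul, map_zsmul, nv, nu, smul_zero, zero_add, map_zero] at this
    exact (mod3 a3 a0 q).1 this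
  obtain ⟨q', rfl⟩ := hq
  have u3' : (3 : ℤ) • u = 0 := by exact_mod_cast u3
  have va' : (3 : ℤ) • v = a := by exact_mod_cast va
  have a3' : (3 : ℤ) • a = 0 := by exact_mod_cast a3
  rw [mul_comm, mul_smul, u3', smul_zero, add_zero] at H
  have h1 : p • a = 0 := by rw [← va', smul_comm, H, smul_zero]
  obtain ⟨p', rfl⟩ := (mod3 a3 a0 p).1 h1
  rw [mul_comm, mul_smul, va'] at H
  obtain ⟨p'', rfl⟩ := (mod3 a3 a0 p').1 H
  exact ⟨⟨p'', by ring⟩, dvd_mul_right _ _⟩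

namespace CL
variable {Q Z : Type*} {mul : Q → Q → Q} [AddCommGroup Z] (S : CL mul Z)

theorem E_mod {a u v : Z} (e0 e1 e2 : Q) (a3 : 3 • a = 0) (va : 3 • v = a) (u3 : 3 • u = 0)
    (t0 : S.t e0 = v) (t1 : S.t e1 = u) (t2 : S.t e2 = 0) (i j k : ℕ) :
    S.E e0 e1 e2 i j k = S.E e0 e1 e2 (i % 27) (j % 9) (k % 3) := by
  have h1 : i = i % 27 + 3 * ((i / 27) * 3 * 3) := by omega
  have h2 : j = j % 9 + 3 * ((j / 9) * 3) := by omega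
  have h3 : k = k % 3 + 3 * (k / 3) := by omega
  conv_lhs => rw [h1, h2, h3, S.E_per, t0, t1, t2, mul_smul, mul_smul, mul_smul, u3, va, a3]
  simp only [smul_zero, _root_.add_zero, S.sh_zero]

theorem E_inj_aux {a v : Z} (e0 e1 e2 : Q) (a0 : a ≠ 0) (a3 : 3 • a = 0) (va : 3 • v = a) 
    (t0 : S.t e0 = v) (i i' j k : ℕ) (hi : i < 27)
    (h9 : (9 : ℤ) ∣ i - i') (hle : i' ≤ i) (H : S.E e0 e1 e2 i j k = S.E e0 e1 e2 i' j k) : i = i' := by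
  obtain ⟨m, hm⟩ : ∃ m, i = i' + 3 * (m * 3) := ⟨(i - i') / 9, by omega⟩
  have := S.E_per e0 e1 e2 i' j k (m * 3) 0 0
  rw [← hm, Nat.mul_zero, Nat.add_zero, Nat.add_zero, H] at this
  rw [zero_smul, zero_smul, _root_.add_zero, _root_.add_zero, t0, mul_smul, va] at this
  have h := S.sh_free 0 _ _ ((S.sh_zero _).trans this)
  have h' : (m : ℤ) • a = 0 := by rw [natCast_zsmul]; exact h.symm
  have := (mod3 a3 a0 m).1 h'
  omega

theorem E_inj {a u v : Z} (e0 e1 e2 : Q) (a0 : a ≠ 0) (a3 : 3 • a = 0) (va : 3 • v = a) (nv : S.nZ v = 0)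
    (u3 : 3 • u = 0) (nu : S.nZ u = a)
    (t0 : S.t e0 = v) (n0 : S.n e0 = 0) (t1 : S.t e1 = u) (n1 : S.n e1 = v) (t2 : S.t e2 = 0) (n2 : S.n e2 = u)
    (i j k i' j' k' : ℕ) (hi : i < 27) (hi' : i' < 27) (hj : j < 9) (hj' : j' < 9) (hk : k < 3) (hk' : k' < 3)
    (H : S.E e0 e1 e2 i j k = S.E e0 e1 e2 i' j' k') : i = i' ∧ j = j' ∧ k = k' := by
  have ht := congrArg S.t H
  have hn := congrArg S.n H
  rw [S.E_t, S.E_t, t0, t1, t2] at ht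
  rw [S.E_n, S.E_n, n0, n1, n2] at hn
  have h1 := uv_indep S.nZ a0 a3 va nv u3 nu (i - i') (j - j') (by
    have e : ((i : ℤ) - i') • v + ((j : ℤ) - j') • u = (i • v + j • u + k • (0 : Z)) - (i' • v + j' • u + k' • (0 : Z)) := by module
    rw [e, ht, sub_self])
  have h2 := uv_indep S.nZ a0 a3 va nv u3 nu (j - j') (k - k') (by
    have e : ((j : ℤ) - j') • v + ((k : ℤ) - k') • u = (i • (0 : Z) + j • v + k • u) - (i' • (0 : Z) + j' • v + k' • u) := by module
    rw [e, hn, sub_self])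
  have hjj : j = j' := by omega
  have hkk : k = k' := by omega
  subst hjj hkk
  refine ⟨?_, rfl, rfl⟩
  rcases le_total i' i with h | h
  · exact S.E_inj_aux e0 e1 e2 a0 a3 va t0 i i' j k hi (by omega) h H
  · exact (S.E_inj_aux e0 e1 e2 a0 a3 va t0 i' i j k hi' (by omega) h H.symm).symm

def psi0 (e0 e1 e2 : Q) (x : C') : Q := S.E e0 e1 e2 x.1.val x.2.1.val x.2.2.val

theorem E_psi {a u v : Z} (e0 e1 e2 : Q) (a3 : 3 • a = 0) (va : 3 • v = a) (u3 : 3 • u = 0)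
    (t0 : S.t e0 = v) (t1 : S.t e1 = u) (t2 : S.t e2 = 0) (i j k : ℕ) :
    S.E e0 e1 e2 i j k = S.psi0 e0 e1 e2 ((i : ZMod 27), (j : ZMod 9), (k : ZMod 3)) := by
  unfold psi0
  rw [S.E_mod e0 e1 e2 a3 va u3 t0 t1 t2]
  simp only [ZMod.val_natCast]

theorem A_E0 (e0 e1 e2 : Q) (H : S.A e0 e1 e2 = 0) (i j k i' j' k' i'' j'' k'' : ℕ) :
    S.A (S.E e0 e1 e2 i j k) (S.E e0 e1 e2 i' j' k') (S.E e0 e1 e2 i'' j'' k'') = 0 := by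
  have h2 : S.A e0 e2 e1 = 0 := by rw [S.A_23, H, neg_zero]
  have h3 : S.A e1 e0 e2 = 0 := by rw [S.A_12, H, neg_zero]
  have h4 : S.A e1 e2 e0 = 0 := by rw [S.A_23, h3, neg_zero]
  have h5 : S.A e2 e0 e1 = 0 := by rw [S.A_12, h2, neg_zero]
  have h6 : S.A e2 e1 e0 = 0 := by rw [S.A_12, h4, neg_zero]
  simp only [E, S.A_add1, S.A_add2, S.A_add3, S.A_nm1, S.A_nm2, S.A_nm3, S.A_xyx, S.A_xxz, S.A_xyy,
    H, h2, h3, h4, h5, h6, smul_zero, _root_.add_zero]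

theorem classify (hQ : Nat.card Q = 729) (hA : ∃ x y z, S.A x y z ≠ 0) :
    (∃ φ : Q ≃ C', ∀ a b, φ (mul a b) = nabla₁ (φ a) (φ b)) ∨
    (∃ φ : Q ≃ C', ∀ a b, φ (mul a b) = nabla₂ (φ a) (φ b)) := by
  obtain ⟨a, u, v, e0, e1, e2, a0, a3, va, nv, u3, nu, t0, n0, t1, n1, t2, n2, na, hz⟩ := S.gens hQ hA
  have hinj : Function.Injective (S.psi0 e0 e1 e2) := by
    rintro ⟨x, y, z⟩ ⟨x', y', z'⟩ H
    have := S.E_inj e0 e1 e2 a0 a3 va nv u3 nu t0 n0 t1 n1 t2 n2 _ _ _ _ _ _ (ZMod.val_lt _) (ZMod.val_lt _)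
      (ZMod.val_lt _) (ZMod.val_lt _) (ZMod.val_lt _) (ZMod.val_lt _) H
    obtain ⟨h1, h2, h3⟩ := this
    dsimp only at h1 h2 h3
    rw [ZMod.val_injective _ h1, ZMod.val_injective _ h2, ZMod.val_injective _ h3]
  have : Finite Q := Nat.finite_of_card_ne_zero (by rw [hQ]; norm_num)
  have hbij : Function.Bijective (S.psi0 e0 e1 e2) := by
    rw [Nat.bijective_iff_injective_and_card]
    refine ⟨hinj, ?_⟩
    rw [hQ]; simp [Nat.card_eq_fintype_card, ZMod.card]
  have hm : ∀ (ε : ℕ), S.A e0 e1 e2 = ε • a → ∀ (nab : C' → C' → C'), 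
      (∀ x y, nab x y = 
      (((26 * x.1.val + 3 * x.2.1.val + 2 * y.1.val + 24 * y.2.1.val + 9 * ε * (2 * x.1.val * x.2.2.val * y.2.1.val + x.1.val * y.2.1.val * y.2.2.val + x.2.1.val * x.2.2.val * y.1.val + 2 * x.2.1.val * y.1.val * y.2.2.val) : ℕ) : ZMod 27),
      ((8 * x.2.1.val + 3 * x.2.2.val + 2 * y.2.1.val + 6 * y.2.2.val : ℕ) : ZMod 9), ((2 * x.2.2.val + 2 * y.2.2.val : ℕ) : ZMod 3))) →
      ∃ φ : Q ≃ C', ∀ a b, φ (mul a b) = nab (φ a) (φ b) := by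
    intro ε hε nab hnab
    refine ⟨(Equiv.ofBijective _ hbij).symm, fun x y => ?_⟩
    obtain ⟨x, rfl⟩ := (Equiv.ofBijective _ hbij).surjective x
    obtain ⟨y, rfl⟩ := (Equiv.ofBijective _ hbij).surjective y
    rw [Equiv.symm_apply_apply, Equiv.symm_apply_apply, Equiv.symm_apply_eq, hnab]
    change mul (S.psi0 e0 e1 e2 x) (S.psi0 e0 e1 e2 y) = S.psi0 e0 e1 e2 _
    rw [← S.E_psi e0 e1 e2 a3 va u3 t0 t1 t2]
    exact S.E_mul' e0 e1 e2 va a3 u3 t0 n0 t1 n1 t2 n2 ε hε _ _ _ _ _ _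
  obtain ⟨k, hk⟩ := hz e0 e1 e2
  change k • a = _ at hk
  rcases mult3 a3 k with h | h | h
  · exfalso
    obtain ⟨x, y, z, h'⟩ := hA
    obtain ⟨x, rfl⟩ := hbij.2 x
    obtain ⟨y, rfl⟩ := hbij.2 y
    obtain ⟨z, rfl⟩ := hbij.2 z
    exact h' (S.A_E0 e0 e1 e2 (by rw [← hk, h]) _ _ _ _ _ _ _ _ _)
  · left
    refine hm 1 (by rw [← hk, h, one_smul]) _ ?_
    intro x y
    simp only [nabla₁, Nat.cast_add, Nat.cast_mul, Nat.cast_ofNat, ZMod.natCast_zmod_val, Nat.cast_one]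
    refine Prod.ext ?_ rfl
    dsimp only
    ring
  · right
    refine hm 2 (by 
      rw [← hk, h, two_smul]
      have : a + a + a = 0 := by rw [← a3]; module
      exact (eq_neg_of_add_eq_zero_left this).symm) _ ?_
    intro x y
    simp only [nabla₂, Nat.cast_add, Nat.cast_mul, Nat.cast_ofNat, ZMod.natCast_zmod_val]
    refine Prod.ext ?_ rfl
    dsimp only
    have h36 : (36 : ZMod 27) = 9 := rfl
    ring_nf
    simp only [h36]
    try ring

end CL

theorem part2 {Q : Type*} (mul : Q → Q → Q) (hq : IsQuasigroup mul)
    (ld : ∀ x a b, mul x (mul a b) = mul (mul x a) (mul x b))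
    (rd : ∀ x a b, mul (mul a b) x = mul (mul a x) (mul b x))
    (ham : IsHamiltonian mul) (nmed : ¬ ∀ x y u v, mul (mul x y) (mul u v) = mul (mul x u) (mul y v))
    (hQ : Nat.card Q = 729) :
    (∃ φ : Q ≃ C', ∀ a b, φ (mul a b) = nabla₁ (φ a) (φ b)) ∨
    (∃ φ : Q ≃ C', ∀ a b, φ (mul a b) = nabla₂ (φ a) (φ b)) := by
  have : Finite Q := Nat.finite_of_card_ne_zero (by rw [hQ]; norm_num)
  obtain ⟨⟨e⟩, hb⟩ := hq
  have h : DQ mul := ⟨fun a => (hb a).1, fun a => (hb a).2, ld, rd⟩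
  refine (mkCL h e ham).classify hQ ?_
  by_contra hc
  push Not at hc
  exact nmed ((mkCL h e ham).medial_of hc)

end HQ

namespace HN

def cc (x y z : ℤ) : C' := ((x : ZMod 27), (y : ZMod 9), (z : ZMod 3))

theorem cc_eq {x y z x' y' z' : ℤ} : cc x y z = cc x' y' z' ↔ 27 ∣ x - x' ∧ 9 ∣ y - y' ∧ 3 ∣ z - z' := by
  simp only [cc, Prod.mk.injEq]
  rw [eq_comm, ZMod.intCast_eq_intCast_iff_dvd_sub, @eq_comm (ZMod 9), ZMod.intCast_eq_intCast_iff_dvd_sub,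
    @eq_comm (ZMod 3), ZMod.intCast_eq_intCast_iff_dvd_sub]
  rfl

theorem cc_of {x y z x' y' z' : ℤ} (k l m : ℤ) (h0 : x - x' = 27 * k) (h1 : y - y' = 9 * l) (h2 : z - z' = 3 * m) :
    cc x y z = cc x' y' z' := cc_eq.2 ⟨⟨k, h0⟩, ⟨l, h1⟩, ⟨m, h2⟩⟩

theorem cc_surj (p : C') : ∃ x y z, p = cc x y z := by
  obtain ⟨x, y, z⟩ := p
  obtain ⟨x, rfl⟩ := ZMod.intCast_surjective x
  obtain ⟨y, rfl⟩ := ZMod.intCast_surjective y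
  obtain ⟨z, rfl⟩ := ZMod.intCast_surjective z
  exact ⟨x, y, z, rfl⟩

theorem cc_add (x y z x' y' z' : ℤ) : cc x y z + cc x' y' z' = cc (x + x') (y + y') (z + z') := by
  simp [cc]
theorem cc_sub (x y z x' y' z' : ℤ) : cc x y z - cc x' y' z' = cc (x - x') (y - y') (z - z') := by
  simp [cc]

/-- the operation in integer coordinates -/
def Nab (nab : C' → C' → C') (E : ℤ) : Prop := ∀ a0 a1 a2 b0 b1 b2 : ℤ, nab (cc a0 a1 a2) (cc b0 b1 b2) =
  cc (-a0 + 3 * a1 + 2 * b0 - 3 * b1 + 9 * E * ((a0 * b1 - a1 * b0) * (b2 - a2))) (-a1 + 3 * a2 + 2 * b1 - 3 * b2)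
    (-a2 + 2 * b2)

theorem val9 (y : ℤ) : ∃ k, ((((y : ℤ) : ZMod 9).val : ℕ) : ZMod 27) = ((y + 9 * k : ℤ) : ZMod 27) := by
  refine ⟨-(y / 9), ?_⟩
  have h : ((((y : ZMod 9)).val : ℕ) : ℤ) = y % 9 := by
    have := ZMod.val_intCast (n := 9) y
    exact_mod_cast this
  rw [← Int.cast_natCast, h]
  congr 1
  omega
theorem val3 (n : ℕ) (y : ℤ) : ∃ k, ((((y : ℤ) : ZMod 3).val : ℕ) : ZMod n) = ((y + 3 * k : ℤ) : ZMod n) := by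
  refine ⟨-(y / 3), ?_⟩
  have h : ((((y : ZMod 3)).val : ℕ) : ℤ) = y % 3 := by
    have := ZMod.val_intCast (n := 3) y
    exact_mod_cast this
  rw [← Int.cast_natCast, h]
  congr 1
  omega

theorem nab1 : Nab nabla₁ 1 := by
  intro a0 a1 a2 b0 b1 b2
  unfold nabla₁
  obtain ⟨k1, h1⟩ := val9 a1
  obtain ⟨k2, h2⟩ := val9 b1
  obtain ⟨k3, h3⟩ := val3 27 a2
  obtain ⟨k4, h4⟩ := val3 27 b2
  obtain ⟨k5, h5⟩ := val3 9 a2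
  obtain ⟨k6, h6⟩ := val3 9 b2
  simp only [cc, h1, h2, h3, h4, h5, h6]
  have t27 : (27 : ZMod 27) = 0 := rfl
  have t9 : (9 : ZMod 9) = 0 := rfl
  have t3 : (3 : ZMod 3) = 0 := rfl
  push_cast
  refine Prod.ext ?_ (Prod.ext ?_ ?_) <;> dsimp only
  · linear_combination (a0 + k1 + b1 + (8)*k2 + a0*a2*b1 + (6)*a0*a2*k2 + (2)*a0*b1*k3 + (18)*a0*k2*k3 + a0*b1*k4 + 
      (3)*a0*b2*k2 + (9)*a0*k2*k4 + a1*b0*k3 + (3)*a2*b0*k1 + (9)*b0*k1*k3 + a1*b0*b2 + (2)*a1*b0*k4 + 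
      (6)*b0*b2*k1 + (18)*b0*k1*k4 : ZMod 27) * t27
  · linear_combination (a1 + b2 + k5 + 2 * k6 : ZMod 9) * t9
  · linear_combination (a2 : ZMod 3) * t3

theorem nab2 : Nab nabla₂ (-1) := by
  intro a0 a1 a2 b0 b1 b2
  unfold nabla₂
  obtain ⟨k1, h1⟩ := val9 a1
  obtain ⟨k2, h2⟩ := val9 b1
  obtain ⟨k3, h3⟩ := val3 27 a2
  obtain ⟨k4, h4⟩ := val3 27 b2
  obtain ⟨k5, h5⟩ := val3 9 a2
  obtain ⟨k6, h6⟩ := val3 9 b2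
  simp only [cc, h1, h2, h3, h4, h5, h6]
  have t27 : (27 : ZMod 27) = 0 := rfl
  have t9 : (9 : ZMod 9) = 0 := rfl
  have t3 : (3 : ZMod 3) = 0 := rfl
  push_cast
  refine Prod.ext ?_ (Prod.ext ?_ ?_) <;> dsimp only
  · linear_combination (a0 + k1 + b1 + (8)*k2 + (3)*a0*a2*k2 + a0*b1*k3 + (9)*a0*k2*k3 + a0*b1*b2 + (2)*a0*b1*k4 + 
      (6)*a0*b2*k2 + (18)*a0*k2*k4 + a1*a2*b0 + (2)*a1*b0*k3 + (6)*a2*b0*k1 + (18)*b0*k1*k3 + a1*b0*k4 + 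
      (3)*b0*b2*k1 + (9)*b0*k1*k4 : ZMod 27) * t27
  · linear_combination (a1 + b2 + k5 + 2 * k6 : ZMod 9) * t9
  · linear_combination (a2 : ZMod 3) * t3


theorem nab_ld {nab : C' → C' → C'} {E : ℤ} (H : Nab nab E) (p q r : C') : nab p (nab q r) = nab (nab p q) (nab p r) := by
  obtain ⟨x0, x1, x2, rfl⟩ := cc_surj p
  obtain ⟨a0, a1, a2, rfl⟩ := cc_surj q
  obtain ⟨b0, b1, b2, rfl⟩ := cc_surj r
  simp only [H _]
  refine cc_of ((-2)*E*a0*b1*b2 + (2)*E*a0*a2*b1 + (2)*E*a1*b0*b2 + (-2)*E*a1*a2*b0 + (2)*E*a1*a2*x0 + (-2)*E*a1*b2*x0 + 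
      (-3)*E*a2*a2*x0 + (7)*E*a2*b2*x0 + (-1)*E*a2*x0*x2 + (-2)*E*a2*b1*x0 + (2)*E*b1*b2*x0 + (-4)*E*b2*b2*x0 + 
      (1)*E*b2*x0*x2 + (-2)*E*a0*a2*x1 + (2)*E*a0*b2*x1 + (-1)*E*a1*a2*x1 + (1)*E*a1*x1*x2 + (2)*E*a2*b0*x1 + 
      (-2)*E*b0*b2*x1 + (1)*E*a2*b1*x1 + (-1)*E*b1*x1*x2 + (21)*E*E*a0*a2*b1*b2*x1 + (-6)*E*E*a0*b1*b2*b2*x1 + 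
      (-9)*E*E*a0*b1*b2*x1*x2 + (-15)*E*E*a0*a2*a2*b1*x1 + (9)*E*E*a0*a2*b1*x1*x2 + (3)*E*E*a1*a2*b0*b2*x1 + 
      (-6)*E*E*a1*b0*b2*b2*x1 + (9)*E*E*a1*b0*b2*x1*x2 + (3)*E*E*a1*a2*a2*b0*x1 + (-9)*E*E*a1*a2*b0*x1*x2 + 
      (6)*E*b2*b2*x1 + (-12)*E*a2*b2*x1 + (-4)*E*a0*b2*x2 + (4)*E*a0*a2*x2 + (4)*E*a0*b2*b2 + (-4)*E*a0*a2*b2 + 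
      (6)*E*a1*b2*x2 + (-6)*E*a1*a2*x2 + (-6)*E*a1*b2*b2 + (6)*E*a1*a2*b2 + (6)*E*E*a1*a2*b2*x0*x1 + 
      (-6)*E*E*a1*a2*a2*x0*x1 + (18)*E*E*a1*a2*a2*x0*x2 + (-24)*E*E*a1*a2*b1*b2*x0 + (12)*E*E*a1*a2*a2*b1*x0 + 
      (18)*E*E*a1*a2*b2*b2*x0 + (-18)*E*E*a1*a2*a2*b2*x0 + (-6)*E*E*a1*b2*x0*x1*x2 + (6)*E*E*a1*a2*x0*x1*x2 + 
      (18)*E*E*a1*b2*x0*x2*x2 + (-18)*E*E*a1*a2*x0*x2*x2 + (-18)*E*E*a1*b2*b2*x0*x2 + (-6)*E*E*a0*a2*b2*x1*x1 + 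
      (6)*E*E*a0*a2*a2*x1*x1 + (-18)*E*E*a0*a2*a2*x1*x2 + (-18)*E*E*a0*a2*b2*b2*x1 + (18)*E*E*a0*a2*a2*b2*x1 + 
      (6)*E*E*a0*b2*x1*x1*x2 + (-6)*E*E*a0*a2*x1*x1*x2 + (-18)*E*E*a0*b2*x1*x2*x2 + (18)*E*E*a0*a2*x1*x2*x2 + 
      (18)*E*E*a0*b2*b2*x1*x2 + (-6)*E*E*b1*b2*b2*x0*x1 + (6)*E*E*a2*b1*b2*x0*x1 + (6)*E*E*b1*b2*x0*x1*x2 + 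
      (-6)*E*E*a2*b1*x0*x1*x2 + (6)*E*E*b0*b2*b2*x1*x1 + (-6)*E*E*a2*b0*b2*x1*x1 + (-6)*E*E*b0*b2*x1*x1*x2 + 
      (6)*E*E*a2*b0*x1*x1*x2 + (4)*E*b0*b2*x2 + (-4)*E*a2*b0*x2 + (-6)*E*b1*b2*x2 + (6)*E*a2*b1*x2 + 
      (18)*E*E*b1*b2*b2*x0*x2 + (-18)*E*E*b1*b2*x0*x2*x2 + (18)*E*E*a2*b1*x0*x2*x2 + (-18)*E*E*b0*b2*b2*x1*x2 + 
      (18)*E*E*b0*b2*x1*x2*x2 + (-18)*E*E*a2*b0*x1*x2*x2 + (12)*E*E*a1*b1*b2*b2*x0 + (6)*E*a2*a2*x1 + 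
      (-4)*E*a2*b0*b2 + (4)*E*a2*a2*b0 + (6)*E*a2*b1*b2 + (-6)*E*a2*a2*b1 + (-18)*E*E*a2*b1*b2*b2*x0 + 
      (18)*E*E*a2*a2*b1*b2*x0 + (-18)*E*E*a2*a2*b1*x0*x2 + (18)*E*E*a2*b0*b2*b2*x1 + (-18)*E*E*a2*a2*b0*b2*x1 + 
      (18)*E*E*a2*a2*b0*x1*x2) 0 0 ?_ ?_ ?_ <;> ring

theorem nab_rd {nab : C' → C' → C'} {E : ℤ} (H : Nab nab E) (p q r : C') : nab (nab q r) p = nab (nab q p) (nab r p) := by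
  obtain ⟨x0, x1, x2, rfl⟩ := cc_surj p
  obtain ⟨a0, a1, a2, rfl⟩ := cc_surj q
  obtain ⟨b0, b1, b2, rfl⟩ := cc_surj r
  simp only [H _]
  refine cc_of ((1)*E*a1*x1*x2 + (-1)*E*a1*b2*x1 + (-1)*E*b1*x1*x2 + (1)*E*b1*b2*x1 + (12)*E*E*a0*a2*b1*b2*x1 + 
      (-6)*E*E*a0*b1*b2*b2*x1 + (-6)*E*E*a0*a2*a2*b1*x1 + (-6)*E*E*a1*a2*b0*b2*x1 + (3)*E*E*a1*b0*b2*b2*x1 + 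
      (3)*E*E*a1*a2*a2*b0*x1 + (-1)*E*a2*x0*x2 + (1)*E*a2*a2*x0 + (-1)*E*a2*b2*x0 + (1)*E*b2*x0*x2 + (-1)*E*a0*b2*b2 + 
      (1)*E*a0*a2*b2 + (1)*E*a0*b2*x2 + (-1)*E*a0*a2*x2 + (3)*E*a1*b2*b2 + (-3)*E*a1*a2*b2 + (-3)*E*a1*b2*x2 + 
      (3)*E*a1*a2*x2 + (-3)*E*b2*b2*x1 + (6)*E*a2*b2*x1 + (9)*E*E*a0*b2*b2*x1*x2 + (6)*E*E*a0*b2*x1*x1*x2 + 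
      (-6)*E*E*a0*a2*x1*x1*x2 + (-9)*E*E*a0*b2*x1*x2*x2 + (9)*E*E*a0*a2*x1*x2*x2 + (-9)*E*E*a0*a2*b2*b2*x1 + 
      (9)*E*E*a0*a2*a2*b2*x1 + (-6)*E*E*a0*a2*b2*x1*x1 + (6)*E*E*a0*a2*a2*x1*x1 + (-9)*E*E*a0*a2*a2*x1*x2 + 
      (-9)*E*E*a1*b2*b2*x0*x2 + (-6)*E*E*a1*b2*x0*x1*x2 + (6)*E*E*a1*a2*x0*x1*x2 + (9)*E*E*a1*b2*x0*x2*x2 + 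
      (-9)*E*E*a1*a2*x0*x2*x2 + (-6)*E*E*a1*a2*b1*b2*x0 + (3)*E*E*a1*a2*a2*b1*x0 + (9)*E*E*a1*a2*b2*b2*x0 + 
      (-9)*E*E*a1*a2*a2*b2*x0 + (6)*E*E*a1*a2*b2*x0*x1 + (-6)*E*E*a1*a2*a2*x0*x1 + (9)*E*E*a1*a2*a2*x0*x2 + 
      (3)*E*E*a1*b1*b2*b2*x0 + (1)*E*a2*b0*b2 + (-1)*E*a2*a2*b0 + (-3)*E*a2*b1*b2 + (3)*E*a2*a2*b1 + (-3)*E*a2*a2*x1 + 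
      (9)*E*E*a2*a2*b0*x1*x2 + (9)*E*E*a2*b0*b2*b2*x1 + (-9)*E*E*a2*a2*b0*b2*x1 + (-9)*E*E*a2*a2*b1*x0*x2 + 
      (-9)*E*E*a2*b1*b2*b2*x0 + (9)*E*E*a2*a2*b1*b2*x0 + (-6)*E*E*b0*b2*x1*x1*x2 + (6)*E*E*a2*b0*x1*x1*x2 + 
      (6)*E*E*b0*b2*b2*x1*x1 + (-6)*E*E*a2*b0*b2*x1*x1 + (6)*E*E*b1*b2*x0*x1*x2 + (-6)*E*E*a2*b1*x0*x1*x2 + 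
      (-6)*E*E*b1*b2*b2*x0*x1 + (6)*E*E*a2*b1*b2*x0*x1 + (-1)*E*b0*b2*x2 + (1)*E*a2*b0*x2 + (3)*E*b1*b2*x2 + 
      (-3)*E*a2*b1*x2 + (9)*E*E*b0*b2*x1*x2*x2 + (-9)*E*E*a2*b0*x1*x2*x2 + (-9)*E*E*b0*b2*b2*x1*x2 + 
      (-9)*E*E*b1*b2*x0*x2*x2 + (9)*E*E*a2*b1*x0*x2*x2 + (9)*E*E*b1*b2*b2*x0*x2) 0 0 ?_ ?_ ?_ <;> ring

def aphi (p : C') : C' := cc (p.1.val + 9 * (p.1.val ^ 2 * p.2.1.val - p.1.val * p.2.1.val ^ 2)) (p.1.val - p.2.1.val)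
  (p.1.val + p.2.1.val + p.2.2.val)

theorem aphi_cc (x y z : ℤ) : aphi (cc x y z) = cc (x + 9 * (x ^ 2 * y - x * y ^ 2)) (x - y) (x + y + z) := by
  unfold aphi
  have h0 : ∃ k, ((cc x y z).1.val : ℤ) = x + 27 * k := ⟨-(x / 27), by
    have := ZMod.val_intCast (n := 27) x
    simp only [cc]; omega⟩
  have h1 : ∃ k, ((cc x y z).2.1.val : ℤ) = y + 9 * k := ⟨-(y / 9), by
    have := ZMod.val_intCast (n := 9) y
    simp only [cc]; omega⟩
  have h2 : ∃ k, ((cc x y z).2.2.val : ℤ) = z + 3 * k := ⟨-(z / 3), by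
    have := ZMod.val_intCast (n := 3) z
    simp only [cc]; omega⟩
  obtain ⟨k, h0⟩ := h0
  obtain ⟨l, h1⟩ := h1
  obtain ⟨m, h2⟩ := h2
  rw [h0, h1, h2]
  rw [cc_eq]
  refine ⟨?_, ⟨3 * k - l, by ring⟩, ⟨9 * k + 3 * l + m, by ring⟩⟩
  have e : ∀ A B : ℤ, (3 : ℤ) ∣ A - B → (27 : ℤ) ∣ x + 27 * k + 9 * A - (x + 9 * B) := by
    intro A B hh; omega
  apply e
  exact ⟨(18 * x * k + 243 * k ^ 2) * (y + 9 * l) + 3 * x ^ 2 * l - 9 * k * (y + 9 * l) ^ 2 - x * (6 * y * l + 27 * l ^ 2), by ring⟩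

theorem aphi_inj : Function.Injective aphi := by
  intro p q h
  obtain ⟨a0, a1, a2, rfl⟩ := cc_surj p
  obtain ⟨b0, b1, b2, rfl⟩ := cc_surj q
  rw [aphi_cc, aphi_cc, cc_eq] at h
  obtain ⟨h0, h1, h2⟩ := h
  generalize hA : a0 ^ 2 * a1 - a0 * a1 ^ 2 = A at h0
  generalize hB : b0 ^ 2 * b1 - b0 * b1 ^ 2 = B at h0
  obtain ⟨k, hk⟩ : ∃ k, a0 = b0 + 9 * k := ⟨(a0 - b0) / 9, by omega⟩
  obtain ⟨l, hl⟩ : ∃ k, a1 = b1 + 9 * k := ⟨(a1 - b1) / 9, by omega⟩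
  have : 3 ∣ A - B := by
    rw [← hA, ← hB, hk, hl]
    exact ⟨(6 * b0 * k + 27 * k ^ 2) * (b1 + 9 * l) + 3 * b0 ^ 2 * l - 3 * k * (b1 + 9 * l) ^ 2 - b0 * (6 * b1 * l + 27 * l ^ 2), by ring⟩
  rw [cc_eq]
  omega

theorem aphi_hom {n1 n2 : C' → C' → C'} (H1 : Nab n1 1) (H2 : Nab n2 (-1)) (p q : C') :
    aphi (n1 p q) = n2 (aphi q) (aphi p) := by
  obtain ⟨a0, a1, a2, rfl⟩ := cc_surj p
  obtain ⟨b0, b1, b2, rfl⟩ := cc_surj q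
  simp only [H1 _, H2 _, aphi_cc]
  refine cc_of ((-10)*a0*b1*b2 + (10)*a0*a2*b1 + (-16)*a1*b0*b2 + (16)*a1*a2*b0 + (-1)*a0*a0*a1 + (1)*a0*a0*a2 + (1)*a0*a0*b1 + 
      (-1)*a0*a0*b2 + (3)*a0*a1*a1 + (-8)*a0*a1*a2 + (-7)*a0*a1*b1 + (8)*a0*a1*b2 + (1)*a0*a1*b0 + (-4)*a0*a2*b0 + 
      (-3)*a0*b0*b1 + (4)*a0*b0*b2 + (5)*a0*b1*b1 + (3)*a0*a0*a1*b1*b2 + (-36)*a0*a0*a2*b1*b2 + (-12)*a0*a0*b1*b1*b2 + 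
      (18)*a0*a0*b1*b2*b2 + (-3)*a0*a0*a1*a2*b1 + (18)*a0*a0*a2*a2*b1 + (12)*a0*a0*a2*b1*b1 + (-9)*a0*a1*a1*b0*b2 + 
      (36)*a0*a1*a2*b0*b2 + (-18)*a0*a1*b0*b2*b2 + (9)*a0*a1*a1*a2*b0 + (-18)*a0*a1*a2*a2*b0 + (-4)*a1*a1*a1 + 
      (15)*a1*a1*a2 + (17)*a1*a1*b1 + (-15)*a1*a1*b2 + (-5)*a1*a1*b0 + (15)*a1*b0*b1 + (-36)*a1*a2*b1 + 
      (-23)*a1*b1*b1 + (36)*a1*b1*b2 + (-18)*a0*a1*a1*b1*b2 + (144)*a0*a1*a2*b1*b2 + (66)*a0*a1*b1*b1*b2 + 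
      (-72)*a0*a1*b1*b2*b2 + (18)*a0*a1*a1*a2*b1 + (-72)*a0*a1*a2*a2*b1 + (-66)*a0*a1*a2*b1*b1 + (21)*a1*a1*a1*b0*b2 + 
      (-144)*a1*a1*a2*b0*b2 + (-66)*a1*a1*b0*b1*b2 + (72)*a1*a1*b0*b2*b2 + (-21)*a1*a1*a1*a2*b0 + 
      (72)*a1*a1*a2*a2*b0 + (66)*a1*a1*a2*b0*b1 + (-1)*a1*b0*b0 + (4)*a2*b0*b0 + (3)*b0*b0*b1 + (-4)*b0*b0*b2 + 
      (-20)*a2*b0*b1 + (-11)*b0*b1*b1 + (20)*b0*b1*b2 + (72)*a0*a2*b0*b1*b2 + (27)*a0*b0*b1*b1*b2 + 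
      (-36)*a0*b0*b1*b2*b2 + (-36)*a0*a2*a2*b0*b1 + (-27)*a0*a2*b0*b1*b1 + (12)*a1*a1*b0*b0*b2 + 
      (-72)*a1*a2*b0*b0*b2 + (-21)*a1*b0*b0*b1*b2 + (36)*a1*b0*b0*b2*b2 + (-12)*a1*a1*a2*b0*b0 + (36)*a1*a2*a2*b0*b0 + 
      (21)*a1*a2*b0*b0*b1 + (21)*a2*b1*b1 + (10)*b1*b1*b1 + (-21)*b1*b1*b2 + (-180)*a0*a2*b1*b1*b2 + 
      (-48)*a0*b1*b1*b1*b2 + (90)*a0*b1*b1*b2*b2 + (90)*a0*a2*a2*b1*b1 + (48)*a0*a2*b1*b1*b1 + (180)*a1*a2*b0*b1*b2 + 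
      (45)*a1*b0*b1*b1*b2 + (-90)*a1*b0*b1*b2*b2 + (-90)*a1*a2*a2*b0*b1 + (-45)*a1*a2*b0*b1*b1 + 
      (-27)*a0*a0*a1*b1*b1*b2*b2 + (243)*a0*a0*a2*b1*b1*b2*b2 + (54)*a0*a0*b1*b1*b1*b2*b2 + 
      (-81)*a0*a0*b1*b1*b2*b2*b2 + (54)*a0*a0*a1*a2*b1*b1*b2 + (-243)*a0*a0*a2*a2*b1*b1*b2 + 
      (-108)*a0*a0*a2*b1*b1*b1*b2 + (54)*a0*a1*a1*b0*b1*b2*b2 + (-486)*a0*a1*a2*b0*b1*b2*b2 + 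
      (-108)*a0*a1*b0*b1*b1*b2*b2 + (162)*a0*a1*b0*b1*b2*b2*b2 + (-108)*a0*a1*a1*a2*b0*b1*b2 + 
      (486)*a0*a1*a2*a2*b0*b1*b2 + (216)*a0*a1*a2*b0*b1*b1*b2 + (-27)*a0*a0*a1*a2*a2*b1*b1 + 
      (81)*a0*a0*a2*a2*a2*b1*b1 + (54)*a0*a0*a2*a2*b1*b1*b1 + (54)*a0*a1*a1*a2*a2*b0*b1 + 
      (-162)*a0*a1*a2*a2*a2*b0*b1 + (-108)*a0*a1*a2*a2*b0*b1*b1 + (-27)*a1*a1*a1*b0*b0*b2*b2 + 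
      (243)*a1*a1*a2*b0*b0*b2*b2 + (54)*a1*a1*b0*b0*b1*b2*b2 + (-81)*a1*a1*b0*b0*b2*b2*b2 + 
      (54)*a1*a1*a1*a2*b0*b0*b2 + (-243)*a1*a1*a2*a2*b0*b0*b2 + (-108)*a1*a1*a2*b0*b0*b1*b2 + 
      (-27)*a1*a1*a1*a2*a2*b0*b0 + (81)*a1*a1*a2*a2*a2*b0*b0 + (54)*a1*a1*a2*a2*b0*b0*b1 + (3)*a0*a2*a2 + 
      (-6)*a0*a2*b2 + (3)*a0*b2*b2 + (-9)*a1*a2*a2 + (18)*a1*a2*b2 + (-9)*a1*b2*b2 + (-6)*a2*a2*b0 + (12)*a2*b0*b2 + 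
      (-6)*b0*b2*b2 + (9)*a2*a2*b1 + (-18)*a2*b1*b2 + (9)*b1*b2*b2 + (-81)*a0*a2*a2*b1*b2 + (81)*a0*a2*b1*b2*b2 + 
      (-27)*a0*b1*b2*b2*b2 + (27)*a0*a2*a2*a2*b1 + (81)*a1*a2*a2*b0*b2 + (-81)*a1*a2*b0*b2*b2 + (27)*a1*b0*b2*b2*b2 + 
      (-27)*a1*a2*a2*a2*b0 + (3)*a0*a0*b0*b0*b1 + (3)*a0*a2*b0*b0*b1 + (-3)*a0*b0*b0*b0*b1 + (-3)*a0*b0*b0*b1*b2 + 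
      (-3)*a1*a1*b0*b0*b1 + (3)*a1*b0*b0*b0*b1 + (-3)*a0*a0*b0*b1*b1 + (3)*a0*b0*b1*b1*b1 + (3)*a1*a1*b0*b1*b1 + 
      (-3)*a1*b0*b1*b1*b1 + (-3)*a0*a0*a0*a1*b0 + (-3)*a0*a0*a1*a2*b0 + (3)*a0*a0*a1*b0*b0 + (3)*a0*a0*a1*b0*b2 + 
      (3)*a0*a1*a1*a1*b0 + (-3)*a0*a1*a1*b0*b0 + (3)*a0*a0*a0*a1*b1 + (-3)*a0*a0*a1*b1*b1 + (-3)*a0*a1*a1*a1*b1 + 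
      (3)*a0*a1*a1*b1*b1)
    ((1)*a1 + (-1)*b1 + (1)*a0*b1*b2 + (-1)*a0*a2*b1 + (-1)*a1*b0*b2 + (1)*a1*a2*b0) 
    ((-1)*a0 + (1)*b0 + (3)*a0*b1*b2 + (-3)*a0*a2*b1 + (-3)*a1*b0*b2 + (3)*a1*a2*b0) ?_ ?_ ?_ <;> ring

theorem anti {n1 n2 : C' → C' → C'} (H1 : Nab n1 1) (H2 : Nab n2 (-1)) :
    ∃ φ : C' ≃ C', ∀ a b : C', φ (n1 a b) = n2 (φ b) (φ a) :=
  ⟨Equiv.ofBijective aphi (Finite.injective_iff_bijective.1 aphi_inj), aphi_hom H1 H2⟩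

end HN

namespace HN

theorem cong_of_C1 {Q : Type*} [Finite Q] {mul : Q → Q → Q} (hq : IsQuasigroup mul) {r : Q → Q → Prop}
    (he : Equivalence r) (h1 : ∀ a b c d, r a b → r c d → r (mul a c) (mul b d)) : IsNormalCongruence mul r := by
  let s : Setoid Q := ⟨r, he⟩
  refine ⟨he, h1, ?_, ?_⟩
  · intro a b c d hab h
    let L : Quotient s → Quotient s := Quotient.map (fun x => mul a x) (fun c d h => h1 a a c d (he.refl a) h)
    have hs : Function.Surjective L := by
      intro y
      induction y using Quotient.inductionOn with
      | _ y =>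
        obtain ⟨x, hx⟩ := (hq.2 a).1.2 y
        exact ⟨Quotient.mk s x, congrArg (Quotient.mk s) hx⟩
    have hi := Finite.injective_iff_surjective.2 hs
    have : L (Quotient.mk s c) = L (Quotient.mk s d) :=
      Quotient.sound (he.trans h (h1 b a d d (he.symm hab) (he.refl d)))
    exact Quotient.exact (hi this)
  · intro a b c d hcd h
    let L : Quotient s → Quotient s := Quotient.map (fun x => mul x c) (fun x y h => h1 x y c c h (he.refl c))
    have hs : Function.Surjective L := by
      intro y
      induction y using Quotient.inductionOn with
      | _ y =>
        obtain ⟨x, hx⟩ := (hq.2 c).2.2 y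
        exact ⟨Quotient.mk s x, congrArg (Quotient.mk s) hx⟩
    have hi := Finite.injective_iff_surjective.2 hs
    have : L (Quotient.mk s a) = L (Quotient.mk s b) :=
      Quotient.sound (he.trans h (h1 b b d c (he.refl b) (he.symm hcd)))
    exact Quotient.exact (hi this)

theorem ham_red {Q : Type*} [Finite Q] {mul : Q → Q → Q} (hq : IsQuasigroup mul)
    (ld : ∀ x a b, mul x (mul a b) = mul (mul x a) (mul x b)) (o : Q)
    (H : ∀ P : Set Q, IsSubquasigroup mul P → o ∈ P → ∃ r : Q → Q → Prop, Equivalence r ∧ 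
      (∀ a b c d, r a b → r c d → r (mul a c) (mul b d)) ∧ P = {x | r o x}) : IsHamiltonian mul := by
  intro P hP
  refine ⟨hP, ?_⟩
  obtain ⟨⟨p, hp⟩, hc⟩ := hP
  obtain ⟨a, ha⟩ := (hq.2 p).2.2 o
  dsimp only at ha
  obtain ⟨r, he, h1, hr⟩ := H ((fun x => mul a x) '' P) ⟨⟨_, p, hp, rfl⟩, by
    rintro _ ⟨x, hx, rfl⟩ _ ⟨y, hy, rfl⟩
    refine ⟨⟨mul x y, (hc x hx y hy).1, ld a x y⟩, ?_, ?_⟩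
    · intro w hw
      obtain ⟨w, rfl⟩ := (hq.2 a).1.2 w
      dsimp only at hw
      rw [← ld] at hw
      exact ⟨w, (hc x hx y hy).2.1 w ((hq.2 a).1.1 hw), rfl⟩
    · intro w hw
      obtain ⟨w, rfl⟩ := (hq.2 a).1.2 w
      dsimp only at hw
      rw [← ld] at hw
      exact ⟨w, (hc x hx y hy).2.2 w ((hq.2 a).1.1 hw), rfl⟩⟩ ⟨p, hp, ha⟩
  refine ⟨fun x y => r (mul a x) (mul a y), cong_of_C1 hq ⟨fun x => he.refl _, fun h => he.symm h,
    fun h h' => he.trans h h'⟩ ?_, p, ?_⟩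
  · intro x y z w hxy hzw
    rw [ld a, ld a]
    exact h1 _ _ _ _ hxy hzw
  · ext x
    change x ∈ P ↔ r (mul a p) (mul a x)
    rw [ha]
    have : mul a x ∈ (fun x => mul a x) '' P ↔ r o (mul a x) := by rw [hr]; rfl
    rw [← this]
    constructor
    · intro h; exact ⟨x, h, rfl⟩
    · rintro ⟨y, hy, h⟩
      rw [← (hq.2 a).1.1 h]; exact hy

theorem nab_inj_l {nab : C' → C' → C'} {E : ℤ} (H : Nab nab E) (p : C') : Function.Injective (fun x => nab p x) := by
  intro q r h
  dsimp only at h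
  obtain ⟨a0, a1, a2, rfl⟩ := cc_surj p
  obtain ⟨x0, x1, x2, rfl⟩ := cc_surj q
  obtain ⟨y0, y1, y2, rfl⟩ := cc_surj r
  rw [H, H, cc_eq] at h
  obtain ⟨h0, h1, h2⟩ := h
  simp only [mul_assoc (9 : ℤ) E] at h0
  generalize hX : E * ((a0 * x1 - a1 * x0) * (x2 - a2)) = X at h0
  generalize hY : E * ((a0 * y1 - a1 * y0) * (y2 - a2)) = Y at h0
  obtain ⟨k, hk⟩ : ∃ k, x2 = y2 + 3 * k := ⟨(x2 - y2) / 3, by omega⟩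
  obtain ⟨l, hl⟩ : ∃ k, x1 = y1 + 9 * k := ⟨(x1 - y1) / 9, by omega⟩
  obtain ⟨m, hm⟩ : ∃ k, x0 = y0 + 9 * k := ⟨(x0 - y0) / 9, by omega⟩
  have : 3 ∣ X - Y := by
    rw [← hX, ← hY, hk, hl, hm]
    exact ⟨E * (3 * (a0 * l - a1 * m) * (y2 - a2) + k * (a0 * y1 - a1 * y0 + 9 * (a0 * l - a1 * m))), by ring⟩
  rw [cc_eq]
  omega

theorem nab_inj_r {nab : C' → C' → C'} {E : ℤ} (H : Nab nab E) (p : C') : Function.Injective (fun x => nab x p) := by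
  intro q r h
  dsimp only at h
  obtain ⟨a0, a1, a2, rfl⟩ := cc_surj p
  obtain ⟨x0, x1, x2, rfl⟩ := cc_surj q
  obtain ⟨y0, y1, y2, rfl⟩ := cc_surj r
  rw [H, H, cc_eq] at h
  obtain ⟨h0, h1, h2⟩ := h
  simp only [mul_assoc (9 : ℤ) E] at h0
  generalize hX : E * ((x0 * a1 - x1 * a0) * (a2 - x2)) = X at h0
  generalize hY : E * ((y0 * a1 - y1 * a0) * (a2 - y2)) = Y at h0
  obtain ⟨k, hk⟩ : ∃ k, x2 = y2 + 3 * k := ⟨(x2 - y2) / 3, by omega⟩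
  obtain ⟨l, hl⟩ : ∃ k, x1 = y1 + 9 * k := ⟨(x1 - y1) / 9, by omega⟩
  obtain ⟨m, hm⟩ : ∃ k, x0 = y0 + 9 * k := ⟨(x0 - y0) / 9, by omega⟩
  have : 3 ∣ X - Y := by
    rw [← hX, ← hY, hk, hl, hm]
    exact ⟨E * (3 * (m * a1 - l * a0) * (a2 - y2) - k * (y0 * a1 - y1 * a0 + 9 * (m * a1 - l * a0))), by ring⟩
  rw [cc_eq]
  omega

theorem nab_quasi {nab : C' → C' → C'} {E : ℤ} (H : Nab nab E) : IsQuasigroup nab :=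
  ⟨⟨0⟩, fun a => ⟨Finite.injective_iff_bijective.1 (nab_inj_l H a), Finite.injective_iff_bijective.1 (nab_inj_r H a)⟩⟩

theorem nab_finv {nab : C' → C' → C'} {E : ℤ} (H : Nab nab E) (x0 x1 x2 : ℤ) :
    nab (cc (-x0 - 3 * x1 - 9 * x2) (-x1 - 3 * x2) (-x2)) (cc 0 0 0) = cc x0 x1 x2 := by
  rw [H]
  refine cc_of 0 0 0 ?_ ?_ ?_ <;> ring

theorem nab_ginv {nab : C' → C' → C'} {E : ℤ} (H : Nab nab E) (b0 b1 b2 : ℤ) :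
    nab (cc 0 0 0) (cc (14 * b0 + 21 * b1 + 18 * b2) (14 * b1 + 21 * b2) (14 * b2)) = cc b0 b1 b2 := by
  rw [H]
  refine cc_of (b0 - b2) (3 * b1) (9 * b2) ?_ ?_ ?_ <;> ring

theorem nab_pl {nab : C' → C' → C'} {E : ℤ} (H : Nab nab E) (a0 a1 a2 b0 b1 b2 : ℤ) :
    nab (cc (-a0 - 3 * a1 - 9 * a2) (-a1 - 3 * a2) (-a2)) (cc (14 * b0 + 21 * b1 + 18 * b2) (14 * b1 + 21 * b2) (14 * b2)) =
    cc (a0 + b0 + 9 * (E * ((a0 * b1 - a1 * b0) * (a2 - b2)))) (a1 + b1) (a2 + b2) := by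
  rw [H]
  refine cc_of ((1)*b0 + (-1)*b2 + (-65)*E*a0*b1*b2 + (-5)*E*a0*a2*b1 + (-98)*E*a0*b2*b2 + (-7)*E*a0*a2*b2 + (-98)*E*a1*b1*b2 + 
      (-7)*E*a1*a2*b1 + (-210)*E*a1*b2*b2 + (-15)*E*a1*a2*b2 + (-294)*E*a2*b1*b2 + (-21)*E*a2*a2*b1 + 
      (-630)*E*a2*b2*b2 + (-45)*E*a2*a2*b2 + (65)*E*a1*b0*b2 + (5)*E*a1*a2*b0 + (196)*E*a2*b0*b2 + (14)*E*a2*a2*b0) ((3)*b1) ((9)*b2) ?_ ?_ ?_ <;> ring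

theorem nab_nonmed {nab : C' → C' → C'} {E : ℤ} (H : Nab nab E) (hE : E = 1 ∨ E = -1) :
    ¬ (∀ x y u v : C', nab (nab x y) (nab u v) = nab (nab x u) (nab y v)) := by
  intro h
  have h := h (cc 0 0 0) (cc 1 0 0) (cc 0 1 0) (cc 0 0 1)
  simp only [H _, cc_eq] at h
  rcases hE with rfl | rfl
  · norm_num at h
  · norm_num at h

section
variable {nab : C' → C' → C'} {E : ℤ} (H : Nab nab E) {P : Set C'} (hP : IsSubquasigroup nab P) (h0 : cc 0 0 0 ∈ P)

theorem P_f (H : Nab nab E) (hP : IsSubquasigroup nab P) (h0 : cc 0 0 0 ∈ P) {x y z : ℤ} (h : cc x y z ∈ P) :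
    cc (-x + 3 * y) (-y + 3 * z) (-z) ∈ P := by
  have := (hP.2 _ h _ h0).1
  rw [H] at this
  convert this using 1
  congr 1 <;> ring

theorem P_g (H : Nab nab E) (hP : IsSubquasigroup nab P) (h0 : cc 0 0 0 ∈ P) {x y z : ℤ} (h : cc x y z ∈ P) :
    cc (2 * x - 3 * y) (2 * y - 3 * z) (2 * z) ∈ P := by
  have := (hP.2 _ h0 _ h).1
  rw [H] at this
  convert this using 1
  congr 1 <;> ring

theorem P_pl (H : Nab nab E) (hP : IsSubquasigroup nab P) (h0 : cc 0 0 0 ∈ P) {a0 a1 a2 b0 b1 b2 : ℤ}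
    (ha : cc a0 a1 a2 ∈ P) (hb : cc b0 b1 b2 ∈ P) :
    cc (a0 + b0 + 9 * (E * ((a0 * b1 - a1 * b0) * (a2 - b2)))) (a1 + b1) (a2 + b2) ∈ P := by
  rw [← nab_pl H]
  exact (hP.2 _ ((hP.2 _ h0 _ ha).2.2 _ (nab_finv H _ _ _)) _ ((hP.2 _ h0 _ hb).2.1 _ (nab_ginv H _ _ _))).1

theorem P_K (H : Nab nab E) (hP : IsSubquasigroup nab P) (h0 : cc 0 0 0 ∈ P) {a0 a1 a2 b0 b1 b2 : ℤ}
    (ha : cc a0 a1 a2 ∈ P) (hb : cc b0 b1 b2 ∈ P) (k : ℤ) (h : (a0 * b1 - a1 * b0) * (a2 - b2) = 3 * k) :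
    cc (a0 + b0) (a1 + b1) (a2 + b2) ∈ P := by
  have := P_pl H hP h0 ha hb
  rw [h] at this
  convert this using 1
  refine cc_of (-(E * k)) 0 0 ?_ ?_ ?_ <;> ring

theorem P_nm (H : Nab nab E) (hP : IsSubquasigroup nab P) (h0 : cc 0 0 0 ∈ P) {x y z : ℤ}
    (h : cc x y z ∈ P) (k : ℕ) : cc (k * x) (k * y) (k * z) ∈ P := by
  induction k with
  | zero => simpa using h0
  | succ k ih =>
    have := P_K H hP h0 ih h 0 (by ring)
    convert this using 1
    push_cast
    congr 1 <;> ring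

theorem P_N (H : Nab nab E) (hP : IsSubquasigroup nab P) (h0 : cc 0 0 0 ∈ P) {x y z : ℤ}
    (h : cc x y z ∈ P) : cc (3 * y) (3 * z) 0 ∈ P := by
  have := P_K H hP h0 (P_f H hP h0 h) h (-2 * z * (y ^ 2 - z * x)) (by ring)
  convert this using 1
  congr 1 <;> ring

theorem P_w (H : Nab nab E) (hP : IsSubquasigroup nab P) (h0 : cc 0 0 0 ∈ P) {s : ℤ}
    (h : cc (9 * s) 0 0 ∈ P) (hs : ¬ 3 ∣ s) : cc 9 0 0 ∈ P := by
  have : s % 3 = 1 ∨ s % 3 = 2 := by omega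
  rcases this with h' | h'
  · convert h using 1
    rw [cc_eq]; omega
  · have := P_nm H hP h0 h 2
    convert this using 1
    rw [cc_eq]; simp only [Nat.cast_ofNat]; omega

theorem P_all3 (H : Nab nab E) (hP : IsSubquasigroup nab P) (h0 : cc 0 0 0 ∈ P) (hw : cc 9 0 0 ∉ P) {x y z : ℤ}
    (h : cc x y z ∈ P) : 3 ∣ x ∧ 3 ∣ y ∧ 3 ∣ z := by
  refine ⟨?_, ?_, ?_⟩ <;> by_contra hc <;> refine hw (P_w H hP h0 ?_ hc)
  · convert P_nm H hP h0 h 9 using 1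
    rw [cc_eq]; simp only [Nat.cast_ofNat]; omega
  · convert P_nm H hP h0 (P_N H hP h0 h) 3 using 1
    rw [cc_eq]; simp only [Nat.cast_ofNat]; omega
  · convert P_N H hP h0 (P_N H hP h0 h) using 1
    rw [cc_eq]; omega

theorem P_addw (H : Nab nab E) (hP : IsSubquasigroup nab P) (h0 : cc 0 0 0 ∈ P) (hw : cc 9 0 0 ∈ P) {x y z : ℤ}
    (h : cc x y z ∈ P) (T : ℤ) : cc (x + 9 * T) y z ∈ P := by
  have h1 := P_nm H hP h0 hw (T % 3).toNat
  have e : (((T % 3).toNat : ℕ) : ℤ) = T % 3 := Int.toNat_of_nonneg (by omega)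
  rw [e] at h1
  have h2 := P_K H hP h0 h h1 (-(y * (T % 3 * 3)) * z) (by ring)
  convert h2 using 1
  rw [cc_eq]; omega

theorem P_add (H : Nab nab E) (hP : IsSubquasigroup nab P) (h0 : cc 0 0 0 ∈ P) {a0 a1 a2 b0 b1 b2 : ℤ}
    (ha : cc a0 a1 a2 ∈ P) (hb : cc b0 b1 b2 ∈ P) : cc (a0 + b0) (a1 + b1) (a2 + b2) ∈ P := by
  by_cases hw : cc 9 0 0 ∈ P
  · convert P_addw H hP h0 hw (P_pl H hP h0 ha hb) (-(E * ((a0 * b1 - a1 * b0) * (a2 - b2)))) using 1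
    congr 1
    ring
  · obtain ⟨⟨k, rfl⟩, ⟨l, rfl⟩, -⟩ := P_all3 H hP h0 hw ha
    exact P_K H hP h0 ha hb ((k * b1 - l * b0) * (a2 - b2)) (by ring)

theorem P_neg (H : Nab nab E) (hP : IsSubquasigroup nab P) (h0 : cc 0 0 0 ∈ P) {x y z : ℤ}
    (h : cc x y z ∈ P) : cc (-x) (-y) (-z) ∈ P := by
  convert P_nm H hP h0 h 26 using 1
  rw [cc_eq]; simp only [Nat.cast_ofNat]; omega

end

theorem nab_ham {nab : C' → C' → C'} {E : ℤ} (H : Nab nab E) : IsHamiltonian nab := by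
  refine ham_red (nab_quasi H) (nab_ld H) (cc 0 0 0) ?_
  intro P hP h0
  refine ⟨fun p q => q - p ∈ P, ⟨?_, ?_, ?_⟩, ?_, ?_⟩
  · intro p
    obtain ⟨a0, a1, a2, rfl⟩ := cc_surj p
    rw [cc_sub, sub_self, sub_self, sub_self]
    exact h0
  · intro p q h
    obtain ⟨a0, a1, a2, rfl⟩ := cc_surj p
    obtain ⟨b0, b1, b2, rfl⟩ := cc_surj q
    rw [cc_sub] at h ⊢
    have := P_neg H hP h0 h
    simpa using this
  · intro p q r h h'
    obtain ⟨a0, a1, a2, rfl⟩ := cc_surj p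
    obtain ⟨b0, b1, b2, rfl⟩ := cc_surj q
    obtain ⟨c0, c1, c2, rfl⟩ := cc_surj r
    rw [cc_sub] at h h' ⊢
    have := P_add H hP h0 h h'
    simpa using this
  · intro p q r s h h'
    obtain ⟨a0, a1, a2, rfl⟩ := cc_surj p
    obtain ⟨b0, b1, b2, rfl⟩ := cc_surj q
    obtain ⟨c0, c1, c2, rfl⟩ := cc_surj r
    obtain ⟨d0, d1, d2, rfl⟩ := cc_surj s
    rw [cc_sub] at h h'
    rw [H, H, cc_sub]
    have h1 := P_add H hP h0 (P_f H hP h0 h) (P_g H hP h0 h')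
    by_cases hw : cc 9 0 0 ∈ P
    · convert P_addw H hP h0 hw h1 (E * ((b0 * d1 - b1 * d0) * (d2 - b2)) - E * ((a0 * c1 - a1 * c0) * (c2 - a2))) using 1
      congr 1 <;> ring
    · obtain ⟨⟨k0, hk0⟩, ⟨k1, hk1⟩, ⟨k2, hk2⟩⟩ := P_all3 H hP h0 hw h
      obtain ⟨⟨l0, hl0⟩, ⟨l1, hl1⟩, ⟨l2, hl2⟩⟩ := P_all3 H hP h0 hw h'
      obtain rfl : b0 = a0 + 3 * k0 := by omega
      obtain rfl : b1 = a1 + 3 * k1 := by omega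
      obtain rfl : b2 = a2 + 3 * k2 := by omega
      obtain rfl : d0 = c0 + 3 * l0 := by omega
      obtain rfl : d1 = c1 + 3 * l1 := by omega
      obtain rfl : d2 = c2 + 3 * l2 := by omega
      convert h1 using 1
      refine cc_of (E * ((a0 * l1 + k0 * c1 + 3 * k0 * l1 - a1 * l0 - k1 * c0 - 3 * k1 * l0) * (c2 - a2 + 3 * l2 - 3 * k2)
        + (a0 * c1 - a1 * c0) * (l2 - k2))) 0 0 ?_ ?_ ?_ <;> ring
  · ext p
    obtain ⟨a0, a1, a2, rfl⟩ := cc_surj p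
    simp [cc_sub]

end HN

namespace HN

section
variable {n1 n2 : C' → C' → C'} {E1 E2 : ℤ} {ψ : C' → C'}

theorem hom_pl (H1 : Nab n1 E1) (H2 : Nab n2 E2) (hψ : ∀ a b, ψ (n1 a b) = n2 (ψ a) (ψ b))
    (h0 : ψ (cc 0 0 0) = cc 0 0 0) {a0 a1 a2 b0 b1 b2 a0' a1' a2' b0' b1' b2' : ℤ}
    (ha : ψ (cc a0 a1 a2) = cc a0' a1' a2') (hb : ψ (cc b0 b1 b2) = cc b0' b1' b2') :
    ψ (cc (a0 + b0 + 9 * (E1 * ((a0 * b1 - a1 * b0) * (a2 - b2)))) (a1 + b1) (a2 + b2)) =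
      cc (a0' + b0' + 9 * (E2 * ((a0' * b1' - a1' * b0') * (a2' - b2')))) (a1' + b1') (a2' + b2') := by
  rw [← nab_pl H1, hψ, ← nab_pl H2]
  congr 1
  · apply nab_inj_r H2 (cc 0 0 0)
    dsimp only
    rw [nab_finv H2, ← ha, ← nab_finv H1 a0 a1 a2, hψ, h0]
  · apply nab_inj_l H2 (cc 0 0 0)
    dsimp only
    rw [nab_ginv H2, ← hb, ← nab_ginv H1 b0 b1 b2, hψ, h0]

theorem hom_nm (H1 : Nab n1 E1) (H2 : Nab n2 E2) (hψ : ∀ a b, ψ (n1 a b) = n2 (ψ a) (ψ b))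
    (h0 : ψ (cc 0 0 0) = cc 0 0 0) {a0 a1 a2 a0' a1' a2' : ℤ}
    (ha : ψ (cc a0 a1 a2) = cc a0' a1' a2') (k : ℕ) : ψ (cc (k * a0) (k * a1) (k * a2)) = cc (k * a0') (k * a1') (k * a2') := by
  induction k with
  | zero => simpa using h0
  | succ k ih =>
    have e1 : ∀ E x y z : ℤ, cc ((k + 1 : ℕ) * x) ((k + 1 : ℕ) * y) ((k + 1 : ℕ) * z) =
        cc (k * x + x + 9 * (E * ((k * x * y - k * y * x) * (k * z - z)))) (k * y + y) (k * z + z) := by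
      intro E x y z
      push_cast
      refine cc_of 0 0 0 ?_ ?_ ?_ <;> ring
    rw [e1 E1, hom_pl H1 H2 hψ h0 ih ha, ← e1]

theorem hom_N (H1 : Nab n1 E1) (H2 : Nab n2 E2) (hψ : ∀ a b, ψ (n1 a b) = n2 (ψ a) (ψ b))
    (h0 : ψ (cc 0 0 0) = cc 0 0 0) {x y z x' y' z' : ℤ}
    (ha : ψ (cc x y z) = cc x' y' z') : ψ (cc (3 * y) (3 * z) 0) = cc (3 * y') (3 * z') 0 := by
  have h1 : ψ (cc (-x + 3 * y) (-y + 3 * z) (-z)) = cc (-x' + 3 * y') (-y' + 3 * z') (-z') := by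
    have := hψ (cc x y z) (cc 0 0 0)
    rw [ha, h0, H1, H2] at this
    have e1 : ∀ E x y z : ℤ, cc (-x + 3 * y) (-y + 3 * z) (-z) =
        cc (-x + 3 * y + 2 * 0 - 3 * 0 + 9 * E * ((x * 0 - y * 0) * (0 - z))) (-y + 3 * z + 2 * 0 - 3 * 0) (-z + 2 * 0) := by
      intro E x y z
      refine cc_of 0 0 0 ?_ ?_ ?_ <;> ring
    rw [e1 E1, this, ← e1]
  have := hom_pl H1 H2 hψ h0 h1 ha
  have e1 : ∀ E x y z : ℤ, cc (3 * y) (3 * z) 0 = cc (-x + 3 * y + x + 9 * (E * (((-x + 3 * y) * y - (-y + 3 * z) * x) * (-z - z))))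
      (-y + 3 * z + y) (-z + z) := by
    intro E x y z
    refine cc_of (E * (y ^ 2 - z * x) * (2 * z)) 0 0 ?_ ?_ ?_ <;> ring
  rw [e1 E1 x, this, ← e1]

theorem hom_no (H1 : Nab n1 1) (H2 : Nab n2 (-1)) (hψ : ∀ a b, ψ (n1 a b) = n2 (ψ a) (ψ b))
    (h0 : ψ (cc 0 0 0) = cc 0 0 0) (hi : Function.Injective ψ) : False := by
  obtain ⟨p0, p1, p2, hp⟩ := cc_surj (ψ (cc 1 0 0))
  obtain ⟨q0, q1, q2, hq⟩ := cc_surj (ψ (cc 0 1 0))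
  obtain ⟨r0, r1, r2, hr⟩ := cc_surj (ψ (cc 0 0 1))
  have hp3 := hom_nm H1 H2 hψ h0 hp 3
  have hq3 := hom_nm H1 H2 hψ h0 hq 3
  have hp9 := hom_nm H1 H2 hψ h0 hp 9
  have hpN := hom_N H1 H2 hψ h0 hp
  have hqN := hom_N H1 H2 hψ h0 hq
  have hrN := hom_N H1 H2 hψ h0 hr
  simp only [Nat.cast_ofNat, mul_zero, mul_one] at hp3 hq3 hp9 hpN hqN hrN
  have c1 := cc_eq.1 (h0.symm.trans hpN)
  have c2 := cc_eq.1 (hp3.symm.trans hqN)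
  have c3 := cc_eq.1 (hq3.symm.trans hrN)
  -- normal forms of the images
  have hp' : ψ (cc 1 0 0) = cc p0 0 0 := by rw [hp, cc_eq]; omega
  have hq' : ψ (cc 0 1 0) = cc q0 p0 0 := by rw [hq, cc_eq]; omega
  have hr' : ψ (cc 0 0 1) = cc r0 r1 p0 := by rw [hr, cc_eq]; omega
  have hw : ψ (cc 9 0 0) = cc (9 * p0) 0 0 := by rw [hp9, cc_eq]; omega
  have k1 := hom_pl H1 H2 hψ h0 (hom_pl H1 H2 hψ h0 hp' hq') hr'
  have k2 := hom_pl H1 H2 hψ h0 hp' (hom_pl H1 H2 hψ h0 hq' hr')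
  have k3 := hom_pl H1 H2 hψ h0 k2 hw
  norm_num at k1 k3
  have e : cc (-80) 1 1 = cc 1 1 1 := by rw [cc_eq]; norm_num
  rw [e] at k3
  obtain ⟨m, hm⟩ := (cc_eq.1 (k1.symm.trans k3)).1
  have h3 : p0 ^ 3 + p0 = 3 * (-m - 3 * ((p0 + r1) * p0 * p0)) := by
    have : 9 * (p0 ^ 3 + p0) = 9 * (3 * (-m - 3 * ((p0 + r1) * p0 * p0))) := by linear_combination -hm
    omega
  have h4 : 3 ∣ p0 := by
    obtain ⟨t, ht⟩ : ∃ t, p0 = 3 * t ∨ p0 = 3 * t + 1 ∨ p0 = 3 * t + 2 := ⟨p0 / 3, by omega⟩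
    generalize -m - 3 * ((p0 + r1) * p0 * p0) = w at h3
    rcases ht with rfl | rfl | rfl
    · exact ⟨t, rfl⟩
    · exfalso
      have : 3 * (w - 9 * t ^ 3 - 9 * t ^ 2 - 4 * t) = 2 := by linear_combination -h3
      omega
    · exfalso
      have : 3 * (w - 9 * t ^ 3 - 18 * t ^ 2 - 13 * t) = 10 := by linear_combination -h3
      omega
  have h5 : ψ (cc 9 0 0) = ψ (cc 0 0 0) := by
    rw [hw, h0, cc_eq]; omega
  have := (cc_eq.1 (hi h5)).1
  norm_num at this

end

theorem no_iso {n1 n2 : C' → C' → C'} (H1 : Nab n1 1) (H2 : Nab n2 (-1)) :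
    ¬ ∃ φ : C' ≃ C', ∀ a b : C', φ (n1 a b) = n2 (φ a) (φ b) := by
  rintro ⟨φ, hφ⟩
  obtain ⟨a, ha⟩ := ((nab_quasi H2).2 (φ (cc 0 0 0))).2.2 (cc 0 0 0)
  refine hom_no (ψ := fun x => n2 a (φ x)) H1 H2 ?_ ha ?_
  · intro x y
    rw [hφ, nab_ld H2 a]
  · exact fun x y h => φ.injective (nab_inj_l H2 a h)

end HN

/-- `C(∇₁)` and `C(∇₂)` are, up to isomorphism, the only non-medial hamiltonian
distributive quasigroups of order 729; they are not isomorphic, but they are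
anti-isomorphic. -/
theorem classification_order_729 :
    (IsQuasigroup nabla₁ ∧
      (∀ x a b : C', nabla₁ x (nabla₁ a b) = nabla₁ (nabla₁ x a) (nabla₁ x b)) ∧
      (∀ x a b : C', nabla₁ (nabla₁ a b) x = nabla₁ (nabla₁ a x) (nabla₁ b x)) ∧
      IsHamiltonian nabla₁ ∧
      ¬ (∀ x y u v : C', nabla₁ (nabla₁ x y) (nabla₁ u v)
          = nabla₁ (nabla₁ x u) (nabla₁ y v)) ∧
      Nat.card C' = 729) ∧
    (IsQuasigroup nabla₂ ∧
      (∀ x a b : C', nabla₂ x (nabla₂ a b) = nabla₂ (nabla₂ x a) (nabla₂ x b)) ∧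
      (∀ x a b : C', nabla₂ (nabla₂ a b) x = nabla₂ (nabla₂ a x) (nabla₂ b x)) ∧
      IsHamiltonian nabla₂ ∧
      ¬ (∀ x y u v : C', nabla₂ (nabla₂ x y) (nabla₂ u v)
          = nabla₂ (nabla₂ x u) (nabla₂ y v))) ∧
    (∀ (Q : Type u) (mul : Q → Q → Q),
      IsQuasigroup mul →
      (∀ x a b : Q, mul x (mul a b) = mul (mul x a) (mul x b)) →
      (∀ x a b : Q, mul (mul a b) x = mul (mul a x) (mul b x)) →
      IsHamiltonian mul →
      ¬ (∀ x y u v : Q, mul (mul x y) (mul u v) = mul (mul x u) (mul y v)) →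
      Nat.card Q = 729 →
        (∃ φ : Q ≃ C', ∀ a b : Q, φ (mul a b) = nabla₁ (φ a) (φ b)) ∨
        (∃ φ : Q ≃ C', ∀ a b : Q, φ (mul a b) = nabla₂ (φ a) (φ b))) ∧
    (¬ ∃ φ : C' ≃ C', ∀ a b : C', φ (nabla₁ a b) = nabla₂ (φ a) (φ b)) ∧
    (∃ φ : C' ≃ C', ∀ a b : C', φ (nabla₁ a b) = nabla₂ (φ b) (φ a)) := by
  refine ⟨⟨HN.nab_quasi HN.nab1, HN.nab_ld HN.nab1, HN.nab_rd HN.nab1, HN.nab_ham HN.nab1,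
    HN.nab_nonmed HN.nab1 (Or.inl rfl), by simp [Nat.card_eq_fintype_card, ZMod.card]⟩,
    ⟨HN.nab_quasi HN.nab2, HN.nab_ld HN.nab2, HN.nab_rd HN.nab2, HN.nab_ham HN.nab2,
    HN.nab_nonmed HN.nab2 (Or.inr rfl)⟩, ?_, HN.no_iso HN.nab1 HN.nab2, HN.anti HN.nab1 HN.nab2⟩
  intro Q mul hq ld rd ham nmed hQ
  exact HQ.part2 mul hq ld rd ham nmed hQ
end

section
/- On C = ℤ/27ℤ × ℤ/9ℤ × ℤ/3ℤ define the operations ∇₁ and ∇₂ by a∇₁b = (26a₀+3a₁+2b₀+24b₁+18a₀a₂b₁+9a₀b₁b₂+9a₁a₂b₀+18a₁b₀b₂, 8a₁+3a₂+2b₁+6b₂, 2a₂+2b₂) and a∇₂b = (26a₀+3a₁+2b₀+24b₁+9a₀a₂b₁+18a₀b₁b₂+18a₁a₂b₀+9a₁b₀b₂, 8a₁+3a₂+2b₁+6b₂, 2a₂+2b₂). Then the map ξ : C → C given by ξ(a) = (18a₀³+9a₀²a₁+18a₀a₁²+10a₀, a₀+8a₁, a₀+a₁+a₂) (components computed by lifting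 to integers and reducing) is a bijection satisfying ξ(a∇₁b) = ξ(b)∇₂ξ(a) for all a, b ∈ C; i.e., ξ is an anti-isomorphism of C(∇₁) onto C(∇₂). -/
/-- The map `ξ(a) = (18a₀³+9a₀²a₁+18a₀a₁²+10a₀, a₀+8a₁, a₀+a₁+a₂)`, components
computed by lifting to integers (via `ZMod.val`) and reducing. -/
def xi (a : C') : C' :=
  (18 * a.1 ^ 3 + 9 * a.1 ^ 2 * (a.2.1.val : ZMod 27)
      + 18 * a.1 * (a.2.1.val : ZMod 27) ^ 2 + 10 * a.1,
   (a.1.val : ZMod 9) + 8 * a.2.1,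
   (a.1.val : ZMod 3) + (a.2.1.val : ZMod 3) + a.2.2)

theorem aux_v9 (x : ZMod 9) (y : ZMod 9) :
    3 * ((x + y).val : ZMod 27) = 3 * (x.val : ZMod 27) + 3 * (y.val : ZMod 27) := by
  revert x y; decide +kernel

theorem aux_m9 (x : ZMod 9) (y : ZMod 9) :
    3 * ((x * y).val : ZMod 27) = 3 * (x.val : ZMod 27) * (y.val : ZMod 27) := by
  revert x y; decide +kernel

theorem aux_v3 (x : ZMod 3) (y : ZMod 3) :
    9 * ((x + y).val : ZMod 27) = 9 * (x.val : ZMod 27) + 9 * (y.val : ZMod 27) := by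
  revert x y; decide +kernel

theorem aux_m3 (x : ZMod 3) (y : ZMod 3) :
    9 * ((x * y).val : ZMod 27) = 9 * (x.val : ZMod 27) * (y.val : ZMod 27) := by
  revert x y; decide +kernel

theorem aux_c9 (x : ZMod 27) : 3 * ((x.val : ZMod 9).val : ZMod 27) = 3 * x := by
  revert x; decide +kernel

theorem aux_c3 (x : ZMod 27) : 9 * ((x.val : ZMod 3).val : ZMod 27) = 9 * x := by
  revert x; decide +kernel

theorem aux_c93 (x : ZMod 9) :
    9 * ((x.val : ZMod 3).val : ZMod 27) = 9 * (x.val : ZMod 27) := by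
  revert x; decide +kernel

theorem aux_c39 (x : ZMod 3) :
    9 * ((x.val : ZMod 9).val : ZMod 27) = 9 * (x.val : ZMod 27) := by
  revert x; decide +kernel

theorem aux_cube (x : ZMod 27) : 9 * x ^ 3 = 9 * x := by
  revert x; decide +kernel

theorem aux_Y (p q : ZMod 9) (r s : ZMod 3) :
    3 * ((8 * p + 3 * (r.val : ZMod 9) + 2 * q + 6 * (s.val : ZMod 9)).val : ZMod 27)
      = 24 * (p.val : ZMod 27) + 9 * (r.val : ZMod 27) + 6 * (q.val : ZMod 27)
        + 18 * (s.val : ZMod 27) := by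
  have e8 : ((8 : ZMod 9).val : ZMod 27) = 8 := by decide
  have e3 : ((3 : ZMod 9).val : ZMod 27) = 3 := by decide
  have e2 : ((2 : ZMod 9).val : ZMod 27) = 2 := by decide
  have e6 : ((6 : ZMod 9).val : ZMod 27) = 6 := by decide
  rw [aux_v9, aux_v9, aux_v9, aux_m9, aux_m9, aux_m9, aux_m9, e8, e3, e2, e6]
  linear_combination aux_c39 r + 2 * aux_c39 s

theorem aux_xi1 (x : ZMod 27) (p : ZMod 9) :
    3 * (((x.val : ZMod 9) + 8 * p).val : ZMod 27) = 3 * x + 24 * (p.val : ZMod 27) := by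
  have e8 : ((8 : ZMod 9).val : ZMod 27) = 8 := by decide
  rw [aux_v9, aux_m9, e8, aux_c9]; ring

theorem aux_xi2 (x : ZMod 27) (p : ZMod 9) (r : ZMod 3) :
    9 * (((x.val : ZMod 3) + (p.val : ZMod 3) + r).val : ZMod 27)
      = 9 * x + 9 * (p.val : ZMod 27) + 9 * (r.val : ZMod 27) := by
  rw [aux_v3, aux_v3, aux_c3, aux_c93]

theorem aux_h9 (x y : ZMod 27) (h : 3 * x = 3 * y) : (x.val : ZMod 9) = (y.val : ZMod 9) := by
  revert x y; decide +kernel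

theorem aux_poly (a0 a1 a2 b0 b1 b2 X Y P1 P2 Q1 Q2 : ZMod 27)
    (hX : X = 26 * a0 + 3 * a1 + 2 * b0 + 24 * b1 + 18 * a0 * a2 * b1
      + 9 * a0 * b1 * b2 + 9 * a1 * a2 * b0 + 18 * a1 * b0 * b2)
    (hY : 3 * Y = 24 * a1 + 9 * a2 + 6 * b1 + 18 * b2)
    (hP1 : 3 * P1 = 3 * a0 + 24 * a1) (hP2 : 9 * P2 = 9 * a0 + 9 * a1 + 9 * a2)
    (hQ1 : 3 * Q1 = 3 * b0 + 24 * b1) (hQ2 : 9 * Q2 = 9 * b0 + 9 * b1 + 9 * b2) :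
    18 * X ^ 3 + 9 * X ^ 2 * Y + 18 * X * Y ^ 2 + 10 * X =
      26 * (18 * b0 ^ 3 + 9 * b0 ^ 2 * b1 + 18 * b0 * b1 ^ 2 + 10 * b0) + 3 * Q1
      + 2 * (18 * a0 ^ 3 + 9 * a0 ^ 2 * a1 + 18 * a0 * a1 ^ 2 + 10 * a0) + 24 * P1
      + 9 * (18 * b0 ^ 3 + 9 * b0 ^ 2 * b1 + 18 * b0 * b1 ^ 2 + 10 * b0) * Q2 * P1
      + 18 * (18 * b0 ^ 3 + 9 * b0 ^ 2 * b1 + 18 * b0 * b1 ^ 2 + 10 * b0) * P1 * P2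
      + 18 * Q1 * Q2 * (18 * a0 ^ 3 + 9 * a0 ^ 2 * a1 + 18 * a0 * a1 ^ 2 + 10 * a0)
      + 9 * Q1 * (18 * a0 ^ 3 + 9 * a0 ^ 2 * a1 + 18 * a0 * a1 ^ 2 + 10 * a0) * P2 := by
  have ca0 := aux_cube a0
  have ca1 := aux_cube a1
  have cb0 := aux_cube b0
  have cb1 := aux_cube b1
  have hX9 : 9 * X = 18 * a0 * 4 + 18 * b0 := by linear_combination (norm := (clear * -; grind)) 9 * hX
  have hY9 : 9 * Y = 18 * a1 * 4 + 18 * b1 := by linear_combination (norm := (clear * -; grind)) 3 * hY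
  have t1 : 9 * X ^ 3 = 9 * X := aux_cube X
  have t2 : 9 * X ^ 2 * Y = 9 * (8 * a0 + 2 * b0) ^ 2 * (8 * a1 + 2 * b1) := by linear_combination (X * Y + (8 * a0 + 2 * b0) * Y) * hX9 + (8 * a0 + 2 * b0) ^ 2 * hY9
  have t3 : 9 * X * Y ^ 2 = 9 * (8 * a0 + 2 * b0) * (8 * a1 + 2 * b1) ^ 2 := by linear_combination Y ^ 2 * hX9 + ((8 * a0 + 2 * b0) * Y + (8 * a0 + 2 * b0) * (8 * a1 + 2 * b1)) * hY9
  have p1 : 9 * P1 = 9 * a0 + 72 * a1 := by linear_combination 3 * hP1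
  have q1 : 9 * Q1 = 9 * b0 + 72 * b1 := by linear_combination 3 * hQ1
  have s1 : 9 * Q2 * P1 = 9 * (b0 + b1 + b2) * (a0 + 8 * a1) := by linear_combination P1 * hQ2 + (b0 + b1 + b2) * p1
  have s2 : 9 * P1 * P2 = 9 * (a0 + 8 * a1) * (a0 + a1 + a2) := by linear_combination P2 * p1 + (a0 + 8 * a1) * hP2
  have s3 : 9 * Q1 * Q2 = 9 * (b0 + 8 * b1) * (b0 + b1 + b2) := by linear_combination Q2 * q1 + (b0 + 8 * b1) * hQ2
  have s4 : 9 * Q1 * P2 = 9 * (b0 + 8 * b1) * (a0 + a1 + a2) := by linear_combination P2 * q1 + (b0 + 8 * b1) * hP2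
  generalize hu : 18 * b0 ^ 3 + 9 * b0 ^ 2 * b1 + 18 * b0 * b1 ^ 2 + 10 * b0 = u
  generalize hv : 18 * a0 ^ 3 + 9 * a0 ^ 2 * a1 + 18 * a0 * a1 ^ 2 + 10 * a0 = v
  have hu9 : 9 * u = 9 * b0 := by linear_combination (norm := (clear * -; grind)) -9 * hu
  have hv9 : 9 * v = 9 * a0 := by linear_combination (norm := (clear * -; grind)) -9 * hv
  have w1 : 9 * u * Q2 * P1 = 9 * b0 * (b0 + b1 + b2) * (a0 + 8 * a1) := by
    linear_combination u * s1 + (b0 + b1 + b2) * (a0 + 8 * a1) * hu9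
  have w2 : 9 * u * P1 * P2 = 9 * b0 * (a0 + 8 * a1) * (a0 + a1 + a2) := by
    linear_combination u * s2 + (a0 + 8 * a1) * (a0 + a1 + a2) * hu9
  have w3 : 9 * Q1 * Q2 * v = 9 * (b0 + 8 * b1) * (b0 + b1 + b2) * a0 := by
    linear_combination v * s3 + (b0 + 8 * b1) * (b0 + b1 + b2) * hv9
  have w4 : 9 * Q1 * v * P2 = 9 * (b0 + 8 * b1) * a0 * (a0 + a1 + a2) := by
    linear_combination v * s4 + (b0 + 8 * b1) * (a0 + a1 + a2) * hv9
  have L : 18 * X ^ 3 + 9 * X ^ 2 * Y + 18 * X * Y ^ 2 + 10 * X = 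
     2 * (9 * X) + 9 * (8 * a0 + 2 * b0) ^ 2 * (8 * a1 + 2 * b1) +
       18 * (8 * a0 + 2 * b0) * (8 * a1 + 2 * b1) ^ 2 + 10 * X := by
    linear_combination 2 * t1 + t2 + 2 * t3
  have R : 26 * u + 3 * Q1 + 2 * v + 24 * P1 + 9 * u * Q2 * P1 + 18 * u * P1 * P2
      + 18 * Q1 * Q2 * v + 9 * Q1 * v * P2 = 
      26 * u + (3 * b0 + 24 * b1) + 2 * v + 8 * (3 * a0 + 24 * a1)
      + 9 * b0 * (b0 + b1 + b2) * (a0 + 8 * a1)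
      + 18 * b0 * (a0 + 8 * a1) * (a0 + a1 + a2)
      + 18 * (b0 + 8 * b1) * (b0 + b1 + b2) * a0
      + 9 * (b0 + 8 * b1) * a0 * (a0 + a1 + a2) := by
    linear_combination hQ1 + 8 * hP1 + w1 + 2 * w2 + 2 * w3 + w4
  rw [L, R, hX, ← hu, ← hv]
  clear * - ca0 ca1 cb0 cb1
  grind

theorem aux_inv (c0 : ZMod 27) (c1 : ZMod 9) :
    ∃ (a0 : ZMod 27) (a1 : ZMod 9), 18 * a0 ^ 3 + 9 * a0 ^ 2 * (a1.val : ZMod 27)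
      + 18 * a0 * (a1.val : ZMod 27) ^ 2 + 10 * a0 = c0 ∧ (a0.val : ZMod 9) + 8 * a1 = c1 := by
  have key : ∀ (c0 : ZMod 27) (c1 : ZMod 9),
      (fun (a0 : ZMod 27) => (fun (a1 : ZMod 9) => 18 * a0 ^ 3 + 9 * a0 ^ 2 * (a1.val : ZMod 27)
      + 18 * a0 * (a1.val : ZMod 27) ^ 2 + 10 * a0 = c0 ∧ (a0.val : ZMod 9) + 8 * a1 = c1)
        ((a0.val : ZMod 9) - c1))
        (c0 - 18 * c0 ^ 3 - 9 * c0 ^ 2 * (c0 - (c1.val : ZMod 27))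
          - 18 * c0 * (c0 - (c1.val : ZMod 27)) ^ 2 - 9 * c0) := by
    decide +kernel
  exact ⟨_, _, key c0 c1⟩

theorem aux_d (p q : ZMod 9) (r s : ZMod 3) :
    (((8 * p + 3 * (r.val : ZMod 9) + 2 * q + 6 * (s.val : ZMod 9)).val : ℕ) : ZMod 3)
      = 8 * (p.val : ZMod 3) + 2 * (q.val : ZMod 3) := by
  revert p q r s; decide +kernel

/-- `ξ` is an anti-isomorphism of `C(∇₁)` onto `C(∇₂)`. -/
theorem xi_anti_isomorphism :
    Function.Bijective xi ∧ ∀ a b : C', xi (nabla₁ a b) = nabla₂ (xi b) (xi a) := by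
  constructor
  · rw [← Finite.surjective_iff_bijective]
    rintro ⟨c0, c1, c2⟩
    obtain ⟨a0, a1, h0, h1⟩ := aux_inv c0 c1
    refine ⟨(a0, a1, c2 - ((a0.val : ZMod 3) + (a1.val : ZMod 3))), ?_⟩
    simp only [xi, h0, h1]
    simp
  · rintro ⟨a0, a1, a2⟩ ⟨b0, b1, b2⟩
    have n9 : ∀ x : ZMod 27, (x.val : ZMod 9) = ZMod.castHom (show 9 ∣ 27 by norm_num) (ZMod 9) x := by
      intro x; rw [ZMod.castHom_apply, ZMod.cast_eq_val]
    have n3 : ∀ x : ZMod 27, (x.val : ZMod 3) = ZMod.castHom (show 3 ∣ 27 by norm_num) (ZMod 3) x := by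
      intro x; rw [ZMod.castHom_apply, ZMod.cast_eq_val]
    have m3 : ∀ x : ZMod 9, (x.val : ZMod 3) = ZMod.castHom (show 3 ∣ 9 by norm_num) (ZMod 3) x := by
      intro x; rw [ZMod.castHom_apply, ZMod.cast_eq_val]
    have k9 : ∀ x : ZMod 9, ZMod.castHom (show 9 ∣ 27 by norm_num) (ZMod 9) (x.val : ZMod 27) = x := by
      intro x; simp
    have k3 : ∀ x : ZMod 9, ZMod.castHom (show 3 ∣ 27 by norm_num) (ZMod 3) (x.val : ZMod 27) = ZMod.castHom (show 3 ∣ 9 by norm_num) (ZMod 3) x := by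
      intro x; rw [map_natCast, m3]
    have l3 : ∀ x : ZMod 3, 3 * (x.val : ZMod 9) = 3 * (x.val : ZMod 9) := fun _ => rfl
    have z3 : ∀ (x : ZMod 27) (y : ZMod 9) (z : ZMod 3),
        3 * (((x.val : ZMod 3) + (y.val : ZMod 3) + z).val : ZMod 9)
          = 3 * (x.val : ZMod 9) + 3 * y + 3 * (z.val : ZMod 9) := by
      decide +kernel
    refine Prod.ext ?_ (Prod.ext ?_ ?_)
    · exact aux_poly a0 a1.val a2.val b0 b1.val b2.val _ _ _ _ _ _ rfl (aux_Y _ _ _ _)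
        (aux_xi1 _ _) (aux_xi2 _ _ _) (aux_xi1 _ _) (aux_xi2 _ _ _)
    · have e6 : ∀ t : ZMod 9, 6 * t = 2 * (3 * t) := by intro t; ring
      simp only [xi, nabla₁, nabla₂]
      rw [e6 (((((a0.val : ZMod 3)) + _ + _).val : ℕ) : ZMod 9), z3, z3]
      simp only [n9, map_add, map_mul, map_ofNat, k9]
      clear * -
      generalize ZMod.castHom _ (ZMod 9) a0 = x
      generalize ZMod.castHom _ (ZMod 9) b0 = y
      grind
    · simp only [xi, nabla₁, nabla₂]
      rw [aux_d]
      simp only [n3, m3, map_add, map_mul, map_ofNat, k3]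
      clear * -
      generalize ZMod.castHom _ (ZMod 3) a0 = x
      generalize ZMod.castHom _ (ZMod 3) b0 = y
      grind
end

section
/- Let Q be a distributive quasigroup and P a finite minimal subquasigroup of Q; for a ∈ Q write Pa = {p·a : p ∈ P} and Pa·Pb = {(p·a)·(q·b) : p, q ∈ P}. Then: (i) the family {Pa : a ∈ Q} is a partition of Q (any two sets Pa and Pb are either disjoint or equal, and their union is Q); (ii) for all a, b ∈ Q, the cardinality |Pa·Pb| equals either |P| or |P|². -/
theorem dq_identities {Q : Type*} (m l r : Q → Q → Q)
    (ll : ∀ a b, l a (m a b) = b) (ml : ∀ a b, m a (l a b) = b)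
    (rr : ∀ a b, r (m a b) b = a) (mr : ∀ a b, m (r a b) b = a)
    (hld : ∀ x a b : Q, m x (m a b) = m (m x a) (m x b))
    (hrd : ∀ x a b : Q, m (m a b) x = m (m a x) (m b x)) :
    (∀ u v x : Q, m (m u v) (m x (l v (m u x))) = m u x) ∧
    (∀ r1 k a : Q, m (r (m r1 (l k r1)) r1) a = m r1 (l k (m r1 a))) := by
  have e4 : ∀ v0 v1 v2 : Q, (m v0 (m v1 v2)) = (m (m v0 v1) (m v0 v2)) := hld
  have e10 : ∀ v0 v1 v2 : Q, (m (m v0 v1) (m v0 v2)) = (m v0 (m v1 v2)) := fun v0 v1 v2 =>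
    calc (m (m v0 v1) (m v0 v2))
      _ = (m v0 (m v1 v2)) := congrArg (fun h => h) (e4 v0 v1 v2).symm
  have e1 : ∀ v0 v1 : Q, (m v0 (l v0 v1)) = v1 := ml
  have e7 : ∀ v0 v1 : Q, (m v0 (l v0 v1)) = v1 := fun v0 v1 =>
    calc (m v0 (l v0 v1))
      _ = v1 := congrArg (fun h => h) (e1 v0 v1)
  have e25 : ∀ v0 v1 v2 : Q, (m v0 (m v1 (l v0 v2))) = (m (m v0 v1) v2) := fun v0 v1 v2 =>
    calc (m v0 (m v1 (l v0 v2)))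
      _ = (m (m v0 v1) (m v0 (l v0 v2))) := congrArg (fun h => h) (e10 v0 v1 (l v0 v2)).symm
      _ = (m (m v0 v1) v2) := congrArg (fun h => (m (m v0 v1) h)) (e7 v0 v2)
  have e0 : ∀ v0 v1 : Q, (l v0 (m v0 v1)) = v1 := ll
  have e6 : ∀ v0 v1 : Q, (l v0 (m v0 v1)) = v1 := fun v0 v1 =>
    calc (l v0 (m v0 v1))
      _ = v1 := congrArg (fun h => h) (e0 v0 v1)
  have e65 : ∀ v0 v1 v2 : Q, (l v0 (m (m v0 v1) v2)) = (m v1 (l v0 v2)) := fun v0 v1 v2 =>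
    calc (l v0 (m (m v0 v1) v2))
      _ = (l v0 (m v0 (m v1 (l v0 v2)))) := congrArg (fun h => (l v0 h)) (e25 v0 v1 v2).symm
      _ = (m v1 (l v0 v2)) := congrArg (fun h => h) (e6 v0 (m v1 (l v0 v2)))
  have e5 : ∀ v0 v1 v2 : Q, (m (m v1 v2) v0) = (m (m v1 v0) (m v2 v0)) := hrd
  have e12 : ∀ v0 v1 v2 : Q, (m (m v0 v1) (m v2 v1)) = (m (m v0 v2) v1) := fun v0 v1 v2 =>
    calc (m (m v0 v1) (m v2 v1))
      _ = (m (m v0 v2) v1) := congrArg (fun h => h) (e5 v1 v0 v2).symm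
  have e111 : ∀ v0 v1 v2 : Q, (m v0 (l v1 (m v2 v0))) = (m v2 (l v1 v0)) := fun v0 v1 v2 =>
    calc (m v0 (l v1 (m v2 v0)))
      _ = (l v1 (m (m v1 v0) (m v2 v0))) := congrArg (fun h => h) (e65 v1 v0 (m v2 v0)).symm
      _ = (l v1 (m (m v1 v2) v0)) := congrArg (fun h => (l v1 h)) (e12 v1 v0 v2)
      _ = (m v2 (l v1 v0)) := congrArg (fun h => h) (e65 v1 v2 v0)
  have i2 : ∀ u v0 x : Q, (m (m u v0) (m x (l v0 (m u x)))) = (m u x) := fun u v0 x =>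
    calc (m (m u v0) (m x (l v0 (m u x))))
      _ = (m (m u v0) (m u (l v0 x))) := congrArg (fun h => (m (m u v0) h)) (e111 x v0 u)
      _ = (m u (m v0 (l v0 x))) := congrArg (fun h => h) (e10 u v0 (l v0 x))
      _ = (m u x) := congrArg (fun h => (m u h)) (e7 v0 x)
  have e3 : ∀ v0 v1 : Q, (m (r v0 v1) v1) = v0 := mr
  have e9 : ∀ v0 v1 : Q, (m (r v0 v1) v1) = v0 := fun v0 v1 =>
    calc (m (r v0 v1) v1)
      _ = v0 := congrArg (fun h => h) (e3 v0 v1)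
  have e2 : ∀ v0 v1 : Q, (r (m v0 v1) v1) = v0 := rr
  have e8 : ∀ v0 v1 : Q, (r (m v0 v1) v1) = v0 := fun v0 v1 =>
    calc (r (m v0 v1) v1)
      _ = v0 := congrArg (fun h => h) (e2 v0 v1)
  have e14 : ∀ v0 v1 : Q, (m (m v0 v0) v1) = (m v0 (m v1 v1)) := fun v0 v1 =>
    calc (m (m v0 v0) v1)
      _ = (m (m v0 v1) (m v0 v1)) := congrArg (fun h => h) (e12 v0 v1 v0).symm
      _ = (m v0 (m v1 v1)) := congrArg (fun h => h) (e10 v0 v1 v1)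
  have e16 : ∀ v0 v1 : Q, (m v0 v0) = (r (m v0 (m v1 v1)) v1) := fun v0 v1 =>
    calc (m v0 v0)
      _ = (r (m (m v0 v0) v1) v1) := congrArg (fun h => h) (e8 (m v0 v0) v1).symm
      _ = (r (m v0 (m v1 v1)) v1) := congrArg (fun h => (r h v1)) (e14 v0 v1)
  have e17 : ∀ v0 v1 : Q, (m v0 (m v1 v1)) = (m v0 v1) := fun v0 v1 =>
    calc (m v0 (m v1 v1))
      _ = (m (m v0 v1) (m v0 v1)) := congrArg (fun h => h) (e10 v0 v1 v1).symm
      _ = (r (m (m v0 v1) (m v1 v1)) v1) := congrArg (fun h => h) (e16 (m v0 v1) v1)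
      _ = (r (m (m v0 v1) v1) v1) := congrArg (fun h => (r h v1)) (e12 v0 v1 v1)
      _ = (m v0 v1) := congrArg (fun h => h) (e8 (m v0 v1) v1)
  have e26 : ∀ v0 v1 : Q, (m (m v0 v1) v0) = (m v0 (m v1 v0)) := fun v0 v1 =>
    calc (m (m v0 v1) v0)
      _ = (m (m v0 v1) (m v0 v0)) := congrArg (fun h => h) (e17 (m v0 v1) v0).symm
      _ = (m v0 (m v1 v0)) := congrArg (fun h => h) (e10 v0 v1 v0)
  have e28 : ∀ v0 v1 : Q, (r (m v0 (m v1 v0)) v0) = (m v0 v1) := fun v0 v1 =>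
    calc (r (m v0 (m v1 v0)) v0)
      _ = (r (m (m v0 v1) v0) v0) := congrArg (fun h => (r h v0)) (e26 v0 v1).symm
      _ = (m v0 v1) := congrArg (fun h => h) (e8 (m v0 v1) v0)
  have e29 : ∀ v0 v1 : Q, (r (m v0 v1) v0) = (m v0 (r v1 v0)) := fun v0 v1 =>
    calc (r (m v0 v1) v0)
      _ = (r (m v0 (m (r v1 v0) v0)) v0) := congrArg (fun h => (r (m v0 h) v0)) (e9 v1 v0).symm
      _ = (m v0 (r v1 v0)) := congrArg (fun h => h) (e28 v0 (r v1 v0))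
  have e42 : ∀ v0 v1 v2 : Q, (m (m (r v0 v1) v2) v1) = (m v0 (m v2 v1)) := fun v0 v1 v2 =>
    calc (m (m (r v0 v1) v2) v1)
      _ = (m (m (r v0 v1) v1) (m v2 v1)) := congrArg (fun h => h) (e12 (r v0 v1) v1 v2).symm
      _ = (m v0 (m v2 v1)) := congrArg (fun h => (m h (m v2 v1))) (e9 v0 v1)
  have e89 : ∀ v0 v1 v2 : Q, (r (m v0 (m v1 v2)) v2) = (m (r v0 v2) v1) := fun v0 v1 v2 =>
    calc (r (m v0 (m v1 v2)) v2)
      _ = (r (m (m (r v0 v2) v1) v2) v2) := congrArg (fun h => (r h v2)) (e42 v0 v2 v1).symm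
      _ = (m (r v0 v2) v1) := congrArg (fun h => h) (e8 (m (r v0 v2) v1) v2)
  have e24 : ∀ v0 v1 v2 : Q, (m v0 (m (l v0 v1) v2)) = (m v1 (m v0 v2)) := fun v0 v1 v2 =>
    calc (m v0 (m (l v0 v1) v2))
      _ = (m (m v0 (l v0 v1)) (m v0 v2)) := congrArg (fun h => h) (e10 v0 (l v0 v1) v2).symm
      _ = (m v1 (m v0 v2)) := congrArg (fun h => (m h (m v0 v2))) (e7 v0 v1)
  have e127 : ∀ v0 v1 v2 : Q, (m (r v0 v1) (l v0 v2)) = (m (r v2 v1) v0) := fun v0 v1 v2 =>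
    calc (m (r v0 v1) (l v0 v2))
      _ = (r (m v0 (m (l v0 v2) v1)) v1) := congrArg (fun h => h) (e89 v0 (l v0 v2) v1).symm
      _ = (r (m v2 (m v0 v1)) v1) := congrArg (fun h => (r h v1)) (e24 v0 v2 v1)
      _ = (m (r v2 v1) v0) := congrArg (fun h => h) (e89 v2 v0 v1)
  have e21 : ∀ v0 v1 v2 : Q, (l (m v0 v1) (m v0 (m v1 v2))) = (m v0 v2) := fun v0 v1 v2 =>
    calc (l (m v0 v1) (m v0 (m v1 v2)))
      _ = (l (m v0 v1) (m (m v0 v1) (m v0 v2))) := congrArg (fun h => (l (m v0 v1) h)) (e10 v0 v1 v2).symm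
      _ = (m v0 v2) := congrArg (fun h => h) (e6 (m v0 v1) (m v0 v2))
  have e235 : ∀ v0 v1 v2 : Q, (l v0 (m (r v0 v1) (m v1 v2))) = (m (r v0 v1) v2) := fun v0 v1 v2 =>
    calc (l v0 (m (r v0 v1) (m v1 v2)))
      _ = (l (m (r v0 v1) v1) (m (r v0 v1) (m v1 v2))) := congrArg (fun h => (l h (m (r v0 v1) (m v1 v2)))) (e9 v0 v1).symm
      _ = (m (r v0 v1) v2) := congrArg (fun h => h) (e21 (r v0 v1) v1 v2)
  have e807 : ∀ v0 v1 v2 : Q, (m (m v0 (r v1 v0)) v2) = (m (m v0 (r v2 v0)) v1) := fun v0 v1 v2 =>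
    calc (m (m v0 (r v1 v0)) v2)
      _ = (m (r (m v0 v1) v0) v2) := congrArg (fun h => (m h v2)) (e29 v0 v1).symm
      _ = (m (r v2 v0) (l v2 (m v0 v1))) := congrArg (fun h => h) (e127 v2 v0 (m v0 v1)).symm
      _ = (m (m v0 v1) (l v2 (m (r v2 v0) (m v0 v1)))) := congrArg (fun h => h) (e111 (m v0 v1) v2 (r v2 v0)).symm
      _ = (m (m v0 v1) (m (r v2 v0) v1)) := congrArg (fun h => (m (m v0 v1) h)) (e235 v2 v0 v1)
      _ = (m (m v0 (r v2 v0)) v1) := congrArg (fun h => h) (e12 v0 v1 (r v2 v0))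
  have e44 : ∀ v0 v1 v2 : Q, (m (m v0 (r v1 v2)) v2) = (m (m v0 v2) v1) := fun v0 v1 v2 =>
    calc (m (m v0 (r v1 v2)) v2)
      _ = (m (m v0 v2) (m (r v1 v2) v2)) := congrArg (fun h => h) (e12 v0 v2 (r v1 v2)).symm
      _ = (m (m v0 v2) v1) := congrArg (fun h => (m (m v0 v2) h)) (e9 v1 v2)
  have e112 : ∀ v0 v1 v2 : Q, (m (r v0 v1) (l v2 v1)) = (m v1 (l v2 v0)) := fun v0 v1 v2 =>
    calc (m (r v0 v1) (l v2 v1))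
      _ = (l v2 (m (m v2 (r v0 v1)) v1)) := congrArg (fun h => h) (e65 v2 (r v0 v1) v1).symm
      _ = (l v2 (m (m v2 v1) v0)) := congrArg (fun h => (l v2 h)) (e44 v2 v0 v1)
      _ = (m v1 (l v2 v0)) := congrArg (fun h => h) (e65 v2 v1 v0)
  have e1982 : ∀ v0 v1 v2 : Q, (m (m v0 (r v1 v0)) (l v2 v0)) = (m v0 (l v2 (m v0 v1))) := fun v0 v1 v2 =>
    calc (m (m v0 (r v1 v0)) (l v2 v0))
      _ = (m (r (m v0 v1) v0) (l v2 v0)) := congrArg (fun h => (m h (l v2 v0))) (e29 v0 v1).symm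
      _ = (m v0 (l v2 (m v0 v1))) := congrArg (fun h => h) (e112 (m v0 v1) v0 v2)
  have i1 : ∀ r1 k a : Q, (m (r (m r1 (l k r1)) r1) a) = (m r1 (l k (m r1 a))) := fun r1 k a =>
    calc (m (r (m r1 (l k r1)) r1) a)
      _ = (m (m r1 (r (l k r1) r1)) a) := congrArg (fun h => (m h a)) (e29 r1 (l k r1))
      _ = (m (m r1 (r a r1)) (l k r1)) := congrArg (fun h => h) (e807 r1 (l k r1) a)
      _ = (m r1 (l k (m r1 a))) := congrArg (fun h => h) (e1982 r1 a k)
  exact ⟨i2, i1⟩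

theorem dq_facts {Q : Type*} (m : Q → Q → Q) (hQ : IsQuasigroup m)
    (hld : ∀ x a b : Q, m x (m a b) = m (m x a) (m x b))
    (hrd : ∀ x a b : Q, m (m a b) x = m (m a x) (m b x)) :
    (∀ u v x y : Q, m u x = m v y → m (m u v) (m x y) = m u x) ∧
    (∀ r1 k x s a b : Q, m r1 a = m k b → m k x = r1 → m s r1 = m r1 x → m s a = m r1 b) := by
  obtain ⟨_, hb⟩ := hQ
  choose l hl using fun a b => (hb a).1.2 b
  choose r' hr using fun a b => (hb a).2.2 b
  simp only at hl hr
  have li : ∀ a x y, m a x = m a y → x = y := fun a x y h => (hb a).1.1 h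
  have ri : ∀ a x y, m x a = m y a → x = y := fun a x y h => (hb a).2.1 h
  obtain ⟨i2, i1⟩ := dq_identities m l (fun b a => r' a b)
    (fun a b => li a _ _ (hl a _)) hl (fun a b => ri b _ _ (hr b _)) (fun a b => hr b a) hld hrd
  constructor
  · intro u v x y h
    have : l v (m u x) = y := li v _ _ (by rw [hl, h])
    have h2 := i2 u v x
    rwa [this] at h2
  · intro r1 k x s a b h hx hs
    have e1 : l k r1 = x := li k _ _ (by rw [hl, hx])
    have e2 : l k (m r1 a) = b := li k _ _ (by rw [hl, h])
    have e3 : r' r1 (m r1 x) = s := ri r1 _ _ (by rw [hr, hs])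
    have h1 := i1 r1 k a
    simp only [e1, e2, e3] at h1
    exact h1

theorem sub_of_closed {Q : Type*} (m : Q → Q → Q) (hQ : IsQuasigroup m) (S : Set Q)
    (hne : S.Nonempty) (hf : S.Finite) (hc : ∀ a ∈ S, ∀ b ∈ S, m a b ∈ S) :
    IsSubquasigroup m S := by
  refine ⟨hne, fun a ha b hb => ⟨hc a ha b hb, fun x hx => ?_, fun y hy => ?_⟩⟩
  · have : Set.SurjOn (fun x => m a x) S S :=
      (Set.eq_of_subset_of_ncard_le (Set.image_subset_iff.2 fun x hx => hc a ha x hx)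
        (Set.ncard_image_of_injective S (hQ.2 a).1.1).ge hf).ge
    obtain ⟨z, hz, h⟩ := this hb
    have : z = x := (hQ.2 a).1.1 (h.trans hx.symm)
    exact this ▸ hz
  · have : Set.SurjOn (fun x => m x a) S S :=
      (Set.eq_of_subset_of_ncard_le (Set.image_subset_iff.2 fun x hx => hc x hx a ha)
        (Set.ncard_image_of_injective S (hQ.2 a).2.1).ge hf).ge
    obtain ⟨z, hz, h⟩ := this hb
    have : z = y := (hQ.2 a).2.1 (h.trans hy.symm)
    exact this ▸ hz

/-- Let `P` be a finite minimal subquasigroup (with more than one element, and every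
subquasigroup properly contained in `P` is a singleton) of a distributive quasigroup `Q`.
Then the left cosets `Pa` form a partition of `Q`, and `|Pa·Pb|` equals `|P|` or `|P|²`. -/
theorem minimal_subquasigroup_cosets {Q : Type*} (mul : Q → Q → Q)
    (hQ : IsQuasigroup mul)
    (hld : ∀ x a b : Q, mul x (mul a b) = mul (mul x a) (mul x b))
    (hrd : ∀ x a b : Q, mul (mul a b) x = mul (mul a x) (mul b x))
    (P : Set Q) (hP : IsSubquasigroup mul P) (hPfin : P.Finite)
    (hPcard : 1 < P.ncard)
    (hmin : ∀ S : Set Q, IsSubquasigroup mul S → S ⊆ P → S ≠ P → ∃ x : Q, S = {x}) :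
    ((∀ a b : Q,
        (fun p => mul p a) '' P = (fun p => mul p b) '' P ∨
        Disjoint ((fun p => mul p a) '' P) ((fun p => mul p b) '' P)) ∧
      (⋃ a : Q, (fun p => mul p a) '' P) = Set.univ) ∧
    (∀ a b : Q,
      (Set.image2 (fun p q => mul (mul p a) (mul q b)) P P).ncard = P.ncard ∨
      (Set.image2 (fun p q => mul (mul p a) (mul q b)) P P).ncard = P.ncard ^ 2) := by
  obtain ⟨i2, i1⟩ := dq_facts mul hQ hld hrd
  have li : ∀ a x y, mul a x = mul a y → x = y := fun a x y h => (hQ.2 a).1.1 h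
  have ri : ∀ a x y, mul x a = mul y a → x = y := fun a x y h => (hQ.2 a).2.1 h
  have idem : ∀ a, mul a a = a := fun a => (ri (mul a a) _ _ (hld a a a)).symm
  have full : ∀ S : Set Q, S ⊆ P → (∀ a ∈ S, ∀ b ∈ S, mul a b ∈ S) →
      ∀ a ∈ S, ∀ b ∈ S, a ≠ b → S = P := by
    intro S hS hc a ha b hb hab
    by_contra hne
    obtain ⟨x, rfl⟩ := hmin S (sub_of_closed mul hQ S ⟨a, ha⟩ (hPfin.subset hS) hc) hS hne
    exact hab (ha.trans hb.symm)
  have refl : ∀ r ∈ P, ∀ k ∈ P, k ≠ r → ∃ s ∈ P, s ≠ r ∧ ∃ x, mul k x = r ∧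
      mul s r = mul r x := by
    intro r hr k hk hkr
    obtain ⟨x, hx⟩ := (hQ.2 k).1.2 r
    obtain ⟨s, hs⟩ := (hQ.2 r).2.2 (mul r x)
    simp only at hx hs
    have hxP : x ∈ P := (hP.2 k hk r hr).2.1 x hx
    have hsP : s ∈ P := (hP.2 r hr _ (hP.2 r hr x hxP).1).2.2 s hs
    refine ⟨s, hsP, ?_, x, hx, hs⟩
    rintro rfl
    have := li _ _ _ hs
    subst this
    exact hkr (ri s _ _ (hx.trans (idem s).symm))
  have hcard : ∀ a, ((fun p => mul p a) '' P).ncard = P.ncard := fun a =>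
    Set.ncard_image_of_injective P (hQ.2 a).2.1
  refine ⟨⟨fun a b => ?_, ?_⟩, fun a b => ?_⟩
  · rw [or_iff_not_imp_right, Set.not_disjoint_iff]
    rintro ⟨c, ⟨p, hp, hpc⟩, ⟨q, hq, hqc⟩⟩
    simp only at hpc hqc
    by_cases hpq : q = p
    · subst hpq
      rw [li q a b (hpc.trans hqc.symm)]
    obtain ⟨s, hs, hsp, x, hx, hsx⟩ := refl p hp q hq hpq
    have h1 := i1 p q x s a b (hpc.trans hqc.symm) hx hsx
    have hS := full {t | t ∈ P ∧ ∃ t' ∈ P, mul t' b = mul t a} (fun t ht => ht.1) (by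
      rintro t ⟨ht, t', ht', h⟩ w ⟨hw, w', hw', h'⟩
      exact ⟨(hP.2 t ht w hw).1, mul t' w', (hP.2 t' ht' w' hw').1, by rw [hrd b t' w', hrd a t w, h, h']⟩)
      s ⟨hs, p, hp, h1.symm⟩ p ⟨hp, q, hq, hqc.trans hpc.symm⟩ hsp
    refine Set.eq_of_subset_of_ncard_le ?_ (by rw [hcard, hcard]) (hPfin.image _)
    rintro _ ⟨t, ht, rfl⟩
    rw [← hS] at ht
    obtain ⟨_, t', ht', h⟩ := ht
    exact ⟨t', ht', h⟩
  · refine Set.eq_univ_of_forall fun c => ?_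
    obtain ⟨p, hp⟩ := hP.1
    obtain ⟨a, ha⟩ := (hQ.2 p).1.2 c
    exact Set.mem_iUnion.2 ⟨a, p, hp, ha⟩
  · have key : ∀ p ∈ P, ∀ q ∈ P, ∀ p' ∈ P, ∀ q' ∈ P, p ≠ p' →
        mul (mul p a) (mul q b) = mul (mul p' a) (mul q' b) →
        ∀ s ∈ P, ∃ t ∈ P, mul (mul s a) (mul t b) = mul (mul p a) (mul q b) := by
      intro p hp q hq p' hp' q' hq' hne h s hs
      have hS := full {s | s ∈ P ∧ ∃ t ∈ P, mul (mul s a) (mul t b) = mul (mul p a) (mul q b)}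
        (fun t ht => ht.1) (by
        rintro t ⟨ht, t', ht', h⟩ w ⟨hw, w', hw', h'⟩
        refine ⟨(hP.2 t ht w hw).1, mul t' w', (hP.2 t' ht' w' hw').1, ?_⟩
        rw [hrd a t w, hrd b t' w', i2 _ _ _ _ (h.trans h'.symm), h])
        p ⟨hp, q, hq, rfl⟩ p' ⟨hp', q', hq', h.symm⟩ hne
      rw [← hS] at hs
      exact hs.2
    by_cases hinj : ∀ p ∈ P, ∀ q ∈ P, ∀ p' ∈ P, ∀ q' ∈ P,
        mul (mul p a) (mul q b) = mul (mul p' a) (mul q' b) → p = p'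
    · right
      rw [← Set.image_prod, Set.InjOn.ncard_image, Set.ncard_prod, sq]
      rintro ⟨p, q⟩ ⟨hp, hq⟩ ⟨p', q'⟩ ⟨hp', hq'⟩ h
      simp only at h hp hq hp' hq'
      obtain rfl := hinj p hp q hq p' hp' q' hq' h
      rw [ri b _ _ (li _ _ _ h)]
    · left
      push Not at hinj
      obtain ⟨p, hp, q, hq, p', hp', q', hq', h, hne⟩ := hinj
      have hfull := key p hp q hq p' hp' q' hq' hne h
      have hfull2 : ∀ s ∈ P, ∀ u ∈ P, ∃ t ∈ P,
          mul (mul u a) (mul t b) = mul (mul s a) (mul q b) := by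
        intro s hs
        by_cases hps : p = s
        · subst hps
          exact hfull
        obtain ⟨t, ht, h2⟩ := hfull s hs
        obtain ⟨w, hw, hws, x, hx, hwx⟩ := refl s hs p hp hps
        have h3 := i1 (mul s a) (mul p a) (mul x a) (mul w a) (mul t b) (mul q b) h2
          (by rw [← hrd, hx]) (by rw [← hrd, ← hrd, hwx])
        exact key s hs q hq w hw t ht (Ne.symm hws) h3.symm
      have inj1 : Function.Injective (fun s => mul (mul s a) (mul q b)) :=
        fun s t h => ri a _ _ (ri _ _ _ h)
      have inj2 : ∀ u, Function.Injective (fun t => mul (mul u a) (mul t b)) :=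
        fun u s t h => ri b _ _ (li _ _ _ h)
      have heq : Set.image2 (fun p q => mul (mul p a) (mul q b)) P P =
          (fun s => mul (mul s a) (mul q b)) '' P := by
        apply Set.Subset.antisymm
        · rintro _ ⟨u, hu, t, ht, rfl⟩
          have : (fun s => mul (mul s a) (mul q b)) '' P =
              (fun t => mul (mul u a) (mul t b)) '' P := by
            refine Set.eq_of_subset_of_ncard_le ?_ ?_ (hPfin.image _)
            · rintro _ ⟨s, hs, rfl⟩
              exact hfull2 s hs u hu
            · rw [Set.ncard_image_of_injective P inj1, Set.ncard_image_of_injective P (inj2 u)]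
          rw [this]
          exact ⟨t, ht, rfl⟩
        · rintro _ ⟨s, hs, rfl⟩
          exact ⟨s, hs, q, hq, rfl⟩
      rw [heq, Set.ncard_image_of_injective P inj1]
end
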